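/- arXiv:1401.2073 — 2 statements merged into one kernel-verified Lean document; each statement's English description precedes it below -/
import Mathlib

section
/- Let D_n(k²) := D_n[w(·,k²)] and let D_n(0) := D_n[(1−x²)^α] be the Hankel determinant for the symmetric Jacobi weight (1−x²)^α on [−1,1]. Define Λ_n := (D_n(k²)/D_n(0)) · (2/(1+√(1−k²)))^{2βn} · 2^{2β(α+β)} · (1−k²)^{β(α+β/2)} · (1+√(1−k²))^{−2β(α+β)}. Then Λ_n → 1 as n → ∞, and moreover lim_{n→∞} n·log Λ_n = ((4α²−1)·β/4)·(1 − 1/√(1−k²)). -/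
open MeasureTheory

/-- The Hankel determinant `det(μ_{i+j})_{i,j=0}^{n-1}` of the moments of the
weight `v` on `[-1,1]`; for `n = 0` it equals `1`. -/
noncomputable def hankelDet (v : ℝ → ℝ) (n : ℕ) : ℝ :=
  Matrix.det (Matrix.of fun i j : Fin n =>
    ∫ x in (-1:ℝ)..1, x ^ ((i:ℕ) + (j:ℕ)) * v x)

open Polynomial Filter Topology

/-- Finite atomless symmetric measures carried by `[-1,1]` for which every nonzero polynomial has
positive `L²` norm. -/
class IsSymmetricWeight (μ : Measure ℝ) : Prop extends IsFiniteMeasure μ, NullSingletonClass μ where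
  ae_mem_Icc : ∀ᵐ x ∂μ, x ∈ Set.Icc (-1 : ℝ) 1
  integral_eval_neg : ∀ p : ℝ[X], ∫ x, p.eval (-x) ∂μ = ∫ x, p.eval x ∂μ
  integral_sq_pos : ∀ p : ℝ[X], p ≠ 0 → 0 < ∫ x, (p.eval x) ^ 2 ∂μ

namespace SymmetricWeight

variable (μ : Measure ℝ) [IsSymmetricWeight μ]

lemma integrable_of_continuousOn {f : ℝ → ℝ} (hf : ContinuousOn f (Set.Icc (-1 : ℝ) 1)) :
    Integrable f μ := by
  have h : μ.restrict (Set.Icc (-1 : ℝ) 1) = μ :=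
    Measure.restrict_eq_self_of_ae_mem IsSymmetricWeight.ae_mem_Icc
  rw [← h]
  exact hf.integrableOn_compact isCompact_Icc

lemma integrable_eval (p : ℝ[X]) : Integrable (fun x => p.eval x) μ :=
  integrable_of_continuousOn μ p.continuous.continuousOn

/-- Integration of polynomials against `μ`, as a linear functional. -/
noncomputable def polyIntegral : ℝ[X] →ₗ[ℝ] ℝ where
  toFun p := ∫ x, p.eval x ∂μ
  map_add' p q := by
    simp only [eval_add]
    exact integral_add (integrable_eval μ p) (integrable_eval μ q)
  map_smul' c p := by
    simp only [eval_smul, smul_eq_mul, RingHom.id_apply]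
    exact integral_const_mul _ _

lemma polyIntegral_apply (p : ℝ[X]) : polyIntegral μ p = ∫ x, p.eval x ∂μ := rfl

lemma polyIntegral_C_mul (c : ℝ) (p : ℝ[X]) : polyIntegral μ (C c * p) = c * polyIntegral μ p := by
  rw [← smul_eq_C_mul, map_smul, smul_eq_mul]

lemma polyIntegral_sq_pos {p : ℝ[X]} (hp : p ≠ 0) : 0 < polyIntegral μ (p * p) := by
  simpa [polyIntegral_apply, pow_two] using IsSymmetricWeight.integral_sq_pos (μ := μ) p hp

lemma polyIntegral_comp_neg (p : ℝ[X]) : polyIntegral μ (p.comp (-X)) = polyIntegral μ p := by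
  simpa [polyIntegral_apply] using IsSymmetricWeight.integral_eval_neg (μ := μ) p

lemma polyIntegral_eq_zero_of_odd {p : ℝ[X]} (hp : p.comp (-X) = -p) : polyIntegral μ p = 0 := by
  have := polyIntegral_comp_neg μ p
  rw [hp, map_neg] at this
  linarith

/-- The monic orthogonal polynomials of `μ`. -/
noncomputable def monicOP : ℕ → ℝ[X]
  | 0 => 1
  | 1 => X
  | n + 2 => X * monicOP (n + 1) -
      C (polyIntegral μ (monicOP (n + 1) * monicOP (n + 1)) /
        polyIntegral μ (monicOP n * monicOP n)) * monicOP n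

lemma monicOP_monic_natDegree (n : ℕ) : (monicOP μ n).Monic ∧ (monicOP μ n).natDegree = n := by
  induction n using Nat.twoStepInduction with
  | zero => simp [monicOP]
  | one => simp [monicOP]
  | more n h0 h1 =>
    have hd : (X * monicOP μ (n + 1)).natDegree = n + 2 := by
      rw [natDegree_X_mul h1.1.ne_zero, h1.2]
    have hm : (X * monicOP μ (n + 1)).Monic := monic_X.mul h1.1
    have hlt : (C (polyIntegral μ (monicOP μ (n + 1) * monicOP μ (n + 1)) /
        polyIntegral μ (monicOP μ n * monicOP μ n)) * monicOP μ n).natDegree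
          < (X * monicOP μ (n + 1)).natDegree := by
      refine (natDegree_C_mul_le _ _).trans_lt ?_
      rw [hd, h0.2]
      lia
    rw [monicOP]
    exact ⟨hm.sub_of_left (degree_lt_degree hlt), by
      rw [natDegree_sub_eq_left_of_natDegree_lt hlt, hd]⟩

lemma monicOP_ne_zero (n : ℕ) : monicOP μ n ≠ 0 := (monicOP_monic_natDegree μ n).1.ne_zero

lemma monicOP_comp_neg (n : ℕ) : (monicOP μ n).comp (-X) = (-1) ^ n * monicOP μ n := by
  induction n using Nat.twoStepInduction with
  | zero => simp [monicOP]
  | one => simp [monicOP]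
  | more n h0 h1 =>
    rw [monicOP, sub_comp, mul_comp, mul_comp, h0, h1, X_comp, C_comp]
    ring

/-- The squared norm of the `n`-th monic orthogonal polynomial. -/
noncomputable def sqNorm (n : ℕ) : ℝ := polyIntegral μ (monicOP μ n * monicOP μ n)

lemma sqNorm_pos (n : ℕ) : 0 < sqNorm μ n := polyIntegral_sq_pos μ (monicOP_ne_zero μ n)

lemma X_mul_monicOP_succ (n : ℕ) : X * monicOP μ (n + 1) =
    monicOP μ (n + 2) + C (sqNorm μ (n + 1) / sqNorm μ n) * monicOP μ n := by
  rw [monicOP, sqNorm, sqNorm]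
  ring

lemma monicOP_orthogonal_of_lt (n : ℕ) :
    ∀ m < n, polyIntegral μ (monicOP μ n * monicOP μ m) = 0 := by
  induction n using Nat.strong_induction_on with
  | _ n ih =>
  match n with
  | 0 => simp
  | 1 =>
    intro m hm
    obtain rfl : m = 0 := by lia
    exact polyIntegral_eq_zero_of_odd μ (by simp [monicOP])
  | n + 2 =>
    intro m hm
    have hsplit : monicOP μ (n + 2) * monicOP μ m = monicOP μ (n + 1) * (X * monicOP μ m)
        - C (sqNorm μ (n + 1) / sqNorm μ n) * (monicOP μ n * monicOP μ m) := by
      rw [eq_sub_of_add_eq (X_mul_monicOP_succ μ n).symm]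
      ring
    rw [hsplit, map_sub, polyIntegral_C_mul]
    rcases (by lia : m = n + 1 ∨ m = n ∨ m < n) with rfl | rfl | hlt
    · rw [mul_comm (monicOP μ n), ih (n + 1) (by lia) n (by lia), mul_zero, sub_zero]
      refine polyIntegral_eq_zero_of_odd μ ?_
      rw [mul_comp, mul_comp, monicOP_comp_neg, X_comp]
      have : ((-1 : ℝ[X]) ^ (n + 1)) * (-1) ^ (n + 1) = 1 := by
        rw [← mul_pow]; simp
      linear_combination (-(monicOP μ (n + 1) * (X * monicOP μ (n + 1)))) * this
    · have key : polyIntegral μ (monicOP μ (m + 1) * (X * monicOP μ m)) = sqNorm μ (m + 1) := by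
        rcases m with _ | m
        · simp [monicOP, sqNorm]
        · rw [X_mul_monicOP_succ, mul_add, map_add, ← sqNorm,
            show monicOP μ (m + 1 + 1) * (C (sqNorm μ (m + 1) / sqNorm μ m) * monicOP μ m) =
              C (sqNorm μ (m + 1) / sqNorm μ m) * (monicOP μ (m + 1 + 1) * monicOP μ m) by ring,
            polyIntegral_C_mul, ih (m + 2) (by lia) m (by lia), mul_zero, add_zero]
      rw [key, ← sqNorm, div_mul_cancel₀ _ (sqNorm_pos μ m).ne', sub_self]
    · rw [ih n (by lia) m hlt, mul_zero, sub_zero]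
      rcases m with _ | m
      · have := ih (n + 1) (by lia) 1 (by lia)
        simpa [monicOP] using this
      · rw [X_mul_monicOP_succ, mul_add, map_add, ih (n + 1) (by lia) _ (by lia),
            show monicOP μ (n + 1) * (C (sqNorm μ (m + 1) / sqNorm μ m) * monicOP μ m) =
              C (sqNorm μ (m + 1) / sqNorm μ m) * (monicOP μ (n + 1) * monicOP μ m) by ring,
            polyIntegral_C_mul, ih (n + 1) (by lia) m (by lia), mul_zero, add_zero]

/-- The orthonormal polynomials of `μ`. -/
noncomputable def onp (n : ℕ) : ℝ[X] := C (√(sqNorm μ n))⁻¹ * monicOP μ n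

/-- The off-diagonal entries of the Jacobi matrix of `μ`. -/
noncomputable def jacobiCoeff (n : ℕ) : ℝ := √(sqNorm μ (n + 1)) / √(sqNorm μ n)

lemma sqrt_sqNorm_pos (n : ℕ) : 0 < √(sqNorm μ n) := Real.sqrt_pos.2 (sqNorm_pos μ n)

lemma jacobiCoeff_pos (n : ℕ) : 0 < jacobiCoeff μ n :=
  div_pos (sqrt_sqNorm_pos μ _) (sqrt_sqNorm_pos μ _)

lemma natDegree_onp (n : ℕ) : (onp μ n).natDegree = n := by
  rw [onp, natDegree_C_mul (inv_ne_zero (sqrt_sqNorm_pos μ n).ne'), (monicOP_monic_natDegree μ n).2]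

lemma polyIntegral_onp_mul_onp (i j : ℕ) :
    polyIntegral μ (onp μ i * onp μ j) = if i = j then 1 else 0 := by
  have h : onp μ i * onp μ j =
      C ((√(sqNorm μ i))⁻¹ * (√(sqNorm μ j))⁻¹) * (monicOP μ i * monicOP μ j) := by
    rw [onp, onp, C_mul]; ring
  rw [h, polyIntegral_C_mul]
  rcases lt_trichotomy i j with hij | rfl | hij
  · rw [if_neg hij.ne, mul_comm (monicOP μ i), monicOP_orthogonal_of_lt μ j i hij, mul_zero]
  · rw [if_pos rfl, ← sqNorm, ← mul_inv, Real.mul_self_sqrt (sqNorm_pos μ i).le,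
      inv_mul_cancel₀ (sqNorm_pos μ i).ne']
  · rw [if_neg hij.ne', monicOP_orthogonal_of_lt μ i j hij, mul_zero]

lemma X_mul_onp_succ (n : ℕ) : X * onp μ (n + 1) =
    C (jacobiCoeff μ (n + 1)) * onp μ (n + 2) + C (jacobiCoeff μ n) * onp μ n := by
  have h0 := (sqrt_sqNorm_pos μ n).ne'
  have h1 := (sqrt_sqNorm_pos μ (n + 1)).ne'
  have h2 := (sqrt_sqNorm_pos μ (n + 2)).ne'
  have e1 : jacobiCoeff μ (n + 1) * (√(sqNorm μ (n + 2)))⁻¹ = (√(sqNorm μ (n + 1)))⁻¹ := by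
    rw [jacobiCoeff]; field_simp
  have e2 : jacobiCoeff μ n * (√(sqNorm μ n))⁻¹ =
      (√(sqNorm μ (n + 1)))⁻¹ * (sqNorm μ (n + 1) / sqNorm μ n) := by
    rw [jacobiCoeff]
    nth_rewrite 3 [← Real.mul_self_sqrt (sqNorm_pos μ (n + 1)).le]
    nth_rewrite 3 [← Real.mul_self_sqrt (sqNorm_pos μ n).le]
    field_simp
  have hX := X_mul_monicOP_succ μ n
  calc X * onp μ (n + 1) = C (√(sqNorm μ (n + 1)))⁻¹ * (X * monicOP μ (n + 1)) := by
        rw [onp]; ring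
    _ = C (√(sqNorm μ (n + 1)))⁻¹ * monicOP μ (n + 2) +
        C ((√(sqNorm μ (n + 1)))⁻¹ * (sqNorm μ (n + 1) / sqNorm μ n)) * monicOP μ n := by
        rw [hX, C_mul]; ring
    _ = _ := by rw [← e2, ← e1, onp, onp, C_mul, C_mul]; ring

/-- Polynomials of degree less than `n` are reproduced by the first `n` orthonormal polynomials. -/
lemma eq_sum_onp {q : ℝ[X]} {n : ℕ} (hq : q.degree < n) :
    q = ∑ j ∈ Finset.range n, C (polyIntegral μ (q * onp μ j)) * onp μ j := by
  induction n generalizing q with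
  | zero =>
    have : q = 0 := by simpa [Nat.WithBot.lt_zero_iff] using hq
    simp [this]
  | succ n ih =>
    set r : ℝ[X] := q - C (q.coeff n * √(sqNorm μ n)) * onp μ n with hr
    have hs := (sqrt_sqNorm_pos μ n).ne'
    have hrP : r = q - C (q.coeff n) * monicOP μ n := by
      rw [hr, onp, ← mul_assoc, ← C_mul, mul_assoc, mul_inv_cancel₀ hs, mul_one]
    obtain ⟨hmon, hdeg⟩ := monicOP_monic_natDegree μ n
    have hrdeg : r.degree < n := by
      rw [degree_lt_iff_coeff_zero]
      intro k hk
      rcases hk.eq_or_lt with rfl | hk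
      · have : (monicOP μ n).coeff n = 1 := by
          have := hmon.coeff_natDegree
          rwa [hdeg] at this
        simp [hrP, this]
      · have h1 : q.coeff k = 0 := coeff_eq_zero_of_degree_lt (hq.trans_le (by exact_mod_cast hk))
        have h2 : (monicOP μ n).coeff k = 0 := coeff_eq_zero_of_natDegree_lt (by lia)
        simp [hrP, h1, h2]
    have hrn : polyIntegral μ (r * onp μ n) = 0 := by
      rw [ih hrdeg, Finset.sum_mul, map_sum]
      refine Finset.sum_eq_zero fun j hj => ?_
      rw [mul_assoc, polyIntegral_C_mul, polyIntegral_onp_mul_onp,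
        if_neg (Finset.mem_range.1 hj).ne, mul_zero]
    have hq' : q = r + C (q.coeff n * √(sqNorm μ n)) * onp μ n := by rw [hr]; ring
    have hcoef : ∀ j, polyIntegral μ (q * onp μ j) = polyIntegral μ (r * onp μ j) +
        q.coeff n * √(sqNorm μ n) * if n = j then 1 else 0 := by
      intro j
      conv_lhs => rw [hq']
      rw [add_mul, map_add, mul_assoc, polyIntegral_C_mul, polyIntegral_onp_mul_onp]
    rw [Finset.sum_range_succ, hcoef n, hrn, if_pos rfl, mul_one, zero_add]
    conv_lhs => rw [hq', ih hrdeg]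
    congr 1
    refine Finset.sum_congr rfl fun j hj => ?_
    rw [hcoef j, if_neg (Finset.mem_range.1 hj).ne', mul_zero, add_zero]

lemma polyIntegral_mul_onp_eq_zero {q : ℝ[X]} {n : ℕ} (hq : q.degree < n) :
    polyIntegral μ (q * onp μ n) = 0 := by
  rw [eq_sum_onp μ hq, Finset.sum_mul, map_sum]
  refine Finset.sum_eq_zero fun j hj => ?_
  rw [mul_assoc, polyIntegral_C_mul, polyIntegral_onp_mul_onp,
    if_neg (Finset.mem_range.1 hj).ne, mul_zero]

/-- The matrix entries of the operator of multiplication by the Chebyshev polynomial `T a` in the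
basis of orthonormal polynomials. -/
noncomputable def chebEntry (a : ℤ) (i j : ℕ) : ℝ :=
  polyIntegral μ (Chebyshev.T ℝ a * (onp μ i * onp μ j))

lemma abs_chebEntry_le_one (a : ℤ) (i j : ℕ) : |chebEntry μ a i j| ≤ 1 := by
  have hInt : ∀ k, ∫ x, (onp μ k).eval x * (onp μ k).eval x ∂μ = 1 := fun k => by
    simpa [polyIntegral_apply] using polyIntegral_onp_mul_onp μ k k
  have hi : ∀ k, Integrable (fun x => (onp μ k).eval x * (onp μ k).eval x) μ := fun k => by
    simpa using integrable_eval μ (onp μ k * onp μ k)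
  calc |chebEntry μ a i j|
      ≤ ∫ x, |(Chebyshev.T ℝ a * (onp μ i * onp μ j)).eval x| ∂μ := by
        rw [chebEntry, polyIntegral_apply]
        exact abs_integral_le_integral_abs
    _ ≤ ∫ x, ((onp μ i).eval x * (onp μ i).eval x +
          (onp μ j).eval x * (onp μ j).eval x) / 2 ∂μ := by
        refine integral_mono_ae (integrable_eval μ _).abs (((hi i).add (hi j)).div_const 2) ?_
        filter_upwards [IsSymmetricWeight.ae_mem_Icc (μ := μ)] with x hx
        have h1 := Chebyshev.abs_eval_T_real_le_one a (abs_le.2 hx)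
        simp only [eval_mul, abs_mul]
        have h2 : |(onp μ i).eval x| * |(onp μ j).eval x| ≤
            ((onp μ i).eval x * (onp μ i).eval x + (onp μ j).eval x * (onp μ j).eval x) / 2 := by
          nlinarith [sq_nonneg (|(onp μ i).eval x| - |(onp μ j).eval x|),
            abs_mul_abs_self ((onp μ i).eval x), abs_mul_abs_self ((onp μ j).eval x)]
        calc _ ≤ 1 * (|(onp μ i).eval x| * |(onp μ j).eval x|) := by gcongr
          _ ≤ _ := by rw [one_mul]; exact h2
    _ = 1 := by
        rw [integral_div, integral_add (hi i) (hi j), hInt, hInt]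
        norm_num

lemma degree_cheb_mul_onp_lt {a i N : ℕ} (h : i + a < N) :
    (Chebyshev.T ℝ (a : ℤ) * onp μ i).degree < N := by
  refine (degree_le_natDegree).trans_lt ?_
  have h1 : (Chebyshev.T ℝ (a : ℤ) * onp μ i).natDegree ≤ a + i := by
    refine natDegree_mul_le.trans ?_
    rw [natDegree_onp, Chebyshev.natDegree_T, Int.natAbs_natCast]
  exact_mod_cast (by lia : (Chebyshev.T ℝ (a : ℤ) * onp μ i).natDegree < N)

lemma chebEntry_eq_zero {a i j : ℕ} (h : i + a < j) : chebEntry μ a i j = 0 := by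
  rw [chebEntry, ← mul_assoc]
  exact polyIntegral_mul_onp_eq_zero μ (degree_cheb_mul_onp_lt μ h)

lemma polyIntegral_cheb_mul_cheb {a i N : ℕ} (c : ℤ) (h : i + a < N) :
    polyIntegral μ (Chebyshev.T ℝ (a : ℤ) * Chebyshev.T ℝ c * (onp μ i * onp μ i)) =
      ∑ j ∈ Finset.range N, chebEntry μ a i j * chebEntry μ c i j := by
  have e := eq_sum_onp μ (degree_cheb_mul_onp_lt μ h)
  have e' : Chebyshev.T ℝ (a : ℤ) * Chebyshev.T ℝ c * (onp μ i * onp μ i) =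
      ∑ j ∈ Finset.range N, C (polyIntegral μ (Chebyshev.T ℝ (a : ℤ) * onp μ i * onp μ j)) *
        (Chebyshev.T ℝ c * (onp μ i * onp μ j)) := by
    calc _ = (Chebyshev.T ℝ (a : ℤ) * onp μ i) * (Chebyshev.T ℝ c * onp μ i) := by ring
      _ = (∑ j ∈ Finset.range N, C (polyIntegral μ (Chebyshev.T ℝ (a : ℤ) * onp μ i * onp μ j)) *
        onp μ j) * (Chebyshev.T ℝ c * onp μ i) := congrArg (· * _) e
      _ = _ := by
        rw [Finset.sum_mul]
        exact Finset.sum_congr rfl fun j _ => by ring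
  rw [e', map_sum]
  refine Finset.sum_congr rfl fun j _ => ?_
  rw [polyIntegral_C_mul, chebEntry, chebEntry, mul_assoc]

/-- The expectation of the linear statistic of `T a` in the `n`-point ensemble of `μ`. -/
noncomputable def chebMean (n : ℕ) (a : ℤ) : ℝ := ∑ i ∈ Finset.range n, chebEntry μ a i i

/-- The covariance of the linear statistics of `T a` and `T c` in the `n`-point ensemble of `μ`. -/
noncomputable def chebCov (n : ℕ) (a c : ℤ) : ℝ :=
  ∑ i ∈ Finset.range n,
      polyIntegral μ (Chebyshev.T ℝ a * Chebyshev.T ℝ c * (onp μ i * onp μ i)) -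
    ∑ i ∈ Finset.range n, ∑ j ∈ Finset.range n, chebEntry μ a i j * chebEntry μ c i j

lemma chebMean_zero (n : ℕ) : chebMean μ n 0 = n := by
  simp [chebMean, chebEntry, polyIntegral_onp_mul_onp]

lemma chebMean_neg (n : ℕ) (a : ℤ) : chebMean μ n (-a) = chebMean μ n a := by
  simp [chebMean, chebEntry]

lemma abs_chebMean_le (n : ℕ) (a : ℤ) : |chebMean μ n a| ≤ n := by
  refine (Finset.abs_sum_le_sum_abs _ _).trans ?_
  refine (Finset.sum_le_sum fun i _ => abs_chebEntry_le_one μ a i i).trans ?_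
  simp

lemma T_comp_neg_X (a : ℤ) :
    (Chebyshev.T ℝ a).comp (-X) = C (((a.negOnePow : ℤˣ) : ℤ) : ℝ) * Chebyshev.T ℝ a := by
  refine Polynomial.funext fun x => ?_
  simp [Chebyshev.T_eval_neg]

lemma chebMean_odd (n : ℕ) {a : ℤ} (ha : Odd a) : chebMean μ n a = 0 := by
  refine Finset.sum_eq_zero fun i _ => polyIntegral_eq_zero_of_odd μ ?_
  have h1 : (onp μ i).comp (-X) = (-1) ^ i * onp μ i := by
    rw [onp, mul_comp, C_comp, monicOP_comp_neg]; ring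
  rw [mul_comp, mul_comp, h1, T_comp_neg_X, Int.negOnePow_odd a ha]
  have : ((-1 : ℝ[X]) ^ i) * (-1) ^ i = 1 := by rw [← mul_pow]; simp
  simp only [Units.val_neg, Units.val_one, Int.cast_neg, Int.cast_one, map_neg, map_one]
  linear_combination (-(Chebyshev.T ℝ a * onp μ i * onp μ i)) * this

lemma chebCov_eq (n a : ℕ) (c : ℤ) : chebCov μ n a c =
    ∑ i ∈ Finset.Ico (n - a) n, ∑ j ∈ Finset.Ico n (n + a),
      chebEntry μ a i j * chebEntry μ c i j := by
  have h1 : chebCov μ n a c = ∑ i ∈ Finset.range n, ∑ j ∈ Finset.Ico n (n + a),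
      chebEntry μ a i j * chebEntry μ c i j := by
    rw [chebCov, ← Finset.sum_sub_distrib]
    refine Finset.sum_congr rfl fun i hi => ?_
    rw [polyIntegral_cheb_mul_cheb μ c (N := n + a) (by have := Finset.mem_range.1 hi; lia),
      Finset.sum_Ico_eq_sub _ (by lia)]
  rw [h1]
  refine (Finset.sum_subset (fun i hi => ?_) fun i hi hi' => ?_).symm
  · simp at hi ⊢; lia
  · refine Finset.sum_eq_zero fun j hj => ?_
    simp at hi hi' hj
    rw [chebEntry_eq_zero μ (by lia), zero_mul]

lemma abs_chebCov_le (n a : ℕ) (c : ℤ) : |chebCov μ n a c| ≤ (a : ℝ) ^ 2 := by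
  rw [chebCov_eq]
  have hb : ∀ i j, |chebEntry μ a i j * chebEntry μ c i j| ≤ 1 := fun i j => by
    rw [abs_mul]
    exact mul_le_one₀ (abs_chebEntry_le_one μ _ _ _) (abs_nonneg _) (abs_chebEntry_le_one μ _ _ _)
  calc _ ≤ ∑ i ∈ Finset.Ico (n - a) n, ∑ j ∈ Finset.Ico n (n + a), (1 : ℝ) := by
        refine (Finset.abs_sum_le_sum_abs _ _).trans (Finset.sum_le_sum fun i _ => ?_)
        exact (Finset.abs_sum_le_sum_abs _ _).trans (Finset.sum_le_sum fun j _ => hb i j)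
    _ = ((n - (n - a) : ℕ) : ℝ) * a := by simp
    _ ≤ a * a := by gcongr; lia
    _ = _ := by ring

/-- The divided difference `(p x - p y) / (x - y)` of a polynomial, as an explicit polynomial
expression in `x` and `y`. -/
noncomputable def divDiff (p : ℝ[X]) (x y : ℝ) : ℝ :=
  ∑ k ∈ Finset.range (p.natDegree + 1),
    p.coeff k * ∑ i ∈ Finset.range k, x ^ i * y ^ (k - 1 - i)

lemma divDiff_mul_sub (p : ℝ[X]) (x y : ℝ) :
    divDiff p x y * (x - y) = p.eval x - p.eval y := by
  rw [divDiff, eval_eq_sum_range, eval_eq_sum_range, Finset.sum_mul, ← Finset.sum_sub_distrib]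
  refine Finset.sum_congr rfl fun k _ => ?_
  rw [mul_assoc, geom_sum₂_mul]
  ring

@[fun_prop]
lemma continuous_divDiff (p : ℝ[X]) {f g : ℝ × ℝ → ℝ} (hf : Continuous f) (hg : Continuous g) :
    Continuous fun z => divDiff p (f z) (g z) := by
  unfold divDiff
  fun_prop

lemma divDiff_eq_eval_divByMonic (p : ℝ[X]) {x y : ℝ} (h : y ≠ x) :
    divDiff p x y = (p /ₘ (X - C x)).eval y := by
  have h1 := congrArg (eval y) (modByMonic_add_div p (X - C x))
  simp only [modByMonic_X_sub_C_eq_C_eval, eval_add, eval_mul, eval_sub, eval_X, eval_C] at h1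
  have h2 := divDiff_mul_sub p x y
  have h3 : x - y ≠ 0 := sub_ne_zero.2 h.symm
  refine mul_right_cancel₀ h3 ?_
  rw [h2]
  linarith

lemma eval_self_divByMonic (p : ℝ[X]) (x : ℝ) :
    (p /ₘ (X - C x)).eval x = p.derivative.eval x := by
  have h1 := congrArg (fun q => q.derivative.eval x) (modByMonic_add_div p (X - C x))
  simp only [modByMonic_X_sub_C_eq_C_eval] at h1
  simpa using h1

lemma degree_divByMonic_lt_of_natDegree (p : ℝ[X]) (x : ℝ) {n : ℕ} (hn : p.natDegree ≤ n)
    (hp : p ≠ 0) : (p /ₘ (X - C x)).degree < n := by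
  have h1 : p.degree ≤ n := degree_le_natDegree.trans (by exact_mod_cast hn)
  exact (degree_divByMonic_lt p (X - C x) hp (by rw [degree_X_sub_C]; norm_num)).trans_le h1

lemma onp_ne_zero (n : ℕ) : onp μ n ≠ 0 := by
  intro h
  have := polyIntegral_onp_mul_onp μ n n
  simp [h] at this

/-- The Christoffel–Darboux kernel. -/
noncomputable def cdKernel (n : ℕ) (x y : ℝ) : ℝ :=
  ∑ j ∈ Finset.range n, (onp μ j).eval x * (onp μ j).eval y

/-- The Christoffel–Darboux kernel on the diagonal, as a polynomial. -/
noncomputable def cdDiag (n : ℕ) : ℝ[X] := ∑ j ∈ Finset.range n, onp μ j * onp μ j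

lemma cdKernel_self (n : ℕ) (x : ℝ) : cdKernel μ n x x = (cdDiag μ n).eval x := by
  simp [cdKernel, cdDiag, eval_finsetSum]

lemma integral_cdKernel_mul {n : ℕ} {q : ℝ[X]} (hq : q.degree < n) (x : ℝ) :
    ∫ y, cdKernel μ n x y * q.eval y ∂μ = q.eval x := by
  have h1 : ∀ y, cdKernel μ n x y * q.eval y =
      (∑ j ∈ Finset.range n, C ((onp μ j).eval x) * (q * onp μ j)).eval y := by
    intro y
    simp only [cdKernel, eval_finsetSum, Finset.sum_mul, eval_mul, eval_C]
    exact Finset.sum_congr rfl fun j _ => by ring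
  simp_rw [h1]
  rw [← polyIntegral_apply, map_sum]
  conv_rhs => rw [eq_sum_onp μ hq, eval_finsetSum]
  refine Finset.sum_congr rfl fun j _ => ?_
  rw [polyIntegral_C_mul, eval_mul, eval_C, mul_comm]

/-- The two-point function divided by `x - y`. -/
noncomputable def cdQuot (n : ℕ) (x y : ℝ) : ℝ :=
  cdKernel μ n x x * (-∑ j ∈ Finset.range n, (onp μ j).eval y * divDiff (onp μ j) x y) +
    cdKernel μ n x y * ∑ j ∈ Finset.range n, (onp μ j).eval x * divDiff (onp μ j) x y

lemma sub_mul_cdQuot (n : ℕ) (x y : ℝ) : (x - y) * cdQuot μ n x y =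
    cdKernel μ n x x * cdKernel μ n y y - cdKernel μ n x y ^ 2 := by
  have h1 : (∑ j ∈ Finset.range n, (onp μ j).eval y * divDiff (onp μ j) x y) * (x - y) =
      cdKernel μ n x y - cdKernel μ n y y := by
    rw [Finset.sum_mul, cdKernel, cdKernel, ← Finset.sum_sub_distrib]
    refine Finset.sum_congr rfl fun j _ => ?_
    rw [mul_assoc, divDiff_mul_sub]; ring
  have h2 : (∑ j ∈ Finset.range n, (onp μ j).eval x * divDiff (onp μ j) x y) * (x - y) =
      cdKernel μ n x x - cdKernel μ n x y := by
    rw [Finset.sum_mul, cdKernel, cdKernel, ← Finset.sum_sub_distrib]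
    refine Finset.sum_congr rfl fun j _ => ?_
    rw [mul_assoc, divDiff_mul_sub]; ring
  rw [cdQuot]
  linear_combination (-cdKernel μ n x x) * h1 + cdKernel μ n x y * h2

lemma cdKernel_comm (n : ℕ) (x y : ℝ) : cdKernel μ n x y = cdKernel μ n y x :=
  Finset.sum_congr rfl fun _ _ => mul_comm _ _

lemma cdQuot_swap (n : ℕ) (x y : ℝ) : cdQuot μ n y x = -cdQuot μ n x y := by
  rcases eq_or_ne x y with rfl | h
  · rw [cdQuot]; ring
  · refine mul_left_cancel₀ (sub_ne_zero.2 h) ?_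
    have h1 := sub_mul_cdQuot μ n x y
    have h2 := sub_mul_cdQuot μ n y x
    rw [cdKernel_comm μ n y x] at h2
    linear_combination -h2 + h1

@[fun_prop]
lemma continuous_cdKernel (n : ℕ) {f g : ℝ × ℝ → ℝ} (hf : Continuous f) (hg : Continuous g) :
    Continuous fun z => cdKernel μ n (f z) (g z) := by
  unfold cdKernel
  fun_prop

@[fun_prop]
lemma continuous_cdQuot (n : ℕ) {f g : ℝ × ℝ → ℝ} (hf : Continuous f) (hg : Continuous g) :
    Continuous fun z => cdQuot μ n (f z) (g z) := by
  unfold cdQuot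
  fun_prop

lemma integrable_prod_of_continuous {F : ℝ × ℝ → ℝ} (hF : Continuous F) :
    Integrable F (μ.prod μ) := by
  have h : μ.restrict (Set.Icc (-1 : ℝ) 1) = μ :=
    Measure.restrict_eq_self_of_ae_mem IsSymmetricWeight.ae_mem_Icc
  rw [← h, Measure.prod_restrict]
  exact hF.continuousOn.integrableOn_compact (isCompact_Icc.prod isCompact_Icc)

lemma integral_cdQuot (n : ℕ) (x : ℝ) :
    ∫ y, cdQuot μ n x y ∂μ = ((cdDiag μ n).derivative.eval x) / 2 := by
  have hne : ∀ᵐ y ∂μ, y ≠ x := by simp [ae_iff]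
  set q : ℝ[X] := ∑ j ∈ Finset.range n, C ((onp μ j).eval x) * (onp μ j /ₘ (X - C x)) with hq
  set r : ℝ[X] := ∑ j ∈ Finset.range n, (onp μ j /ₘ (X - C x)) * onp μ j with hr
  have hlt : ∀ j, (onp μ j /ₘ (X - C x)).degree < j := fun j =>
    degree_divByMonic_lt_of_natDegree _ x (natDegree_onp μ j).le (onp_ne_zero μ j)
  have hqdeg : q.degree < n := by
    refine (degree_sum_le _ _).trans_lt ?_
    refine (Finset.sup_lt_iff (WithBot.bot_lt_coe n)).2 fun j hj => ?_
    rw [← smul_eq_C_mul]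
    refine (degree_smul_le _ _).trans_lt ((hlt j).trans ?_)
    exact Nat.cast_lt.2 (Finset.mem_range.1 hj)
  have hae : (fun y => cdQuot μ n x y) =ᵐ[μ] fun y =>
      cdKernel μ n x x * (-r.eval y) + cdKernel μ n x y * q.eval y := by
    filter_upwards [hne] with y hy
    have h1 : ∑ j ∈ Finset.range n, (onp μ j).eval y * divDiff (onp μ j) x y = r.eval y := by
      rw [hr, eval_finsetSum]
      refine Finset.sum_congr rfl fun j _ => ?_
      rw [divDiff_eq_eval_divByMonic _ hy, eval_mul, mul_comm]
    have h2 : ∑ j ∈ Finset.range n, (onp μ j).eval x * divDiff (onp μ j) x y = q.eval y := by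
      rw [hq, eval_finsetSum]
      refine Finset.sum_congr rfl fun j _ => ?_
      rw [divDiff_eq_eval_divByMonic _ hy, eval_mul, eval_C]
    rw [cdQuot, h1, h2]
  have hr0 : ∫ y, r.eval y ∂μ = 0 := by
    rw [← polyIntegral_apply, hr, map_sum]
    exact Finset.sum_eq_zero fun j _ => polyIntegral_mul_onp_eq_zero μ (hlt j)
  have hKcont : Continuous fun y => cdKernel μ n x y := by
    unfold cdKernel; fun_prop
  have hi1 : Integrable (fun y => cdKernel μ n x x * (-r.eval y)) μ :=
    (integrable_eval μ r).neg.const_mul _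
  have hi2 : Integrable (fun y => cdKernel μ n x y * q.eval y) μ :=
    integrable_of_continuousOn μ (hKcont.mul q.continuous).continuousOn
  rw [integral_congr_ae hae, integral_add hi1 hi2,
    integral_const_mul, integral_neg, hr0, integral_cdKernel_mul μ hqdeg, hq, cdDiag,
    eval_finsetSum, derivative_sum, eval_finsetSum, Finset.sum_div, neg_zero, mul_zero, zero_add]
  refine Finset.sum_congr rfl fun j _ => ?_
  rw [eval_mul, eval_C, eval_self_divByMonic, derivative_mul, eval_add, eval_mul, eval_mul]
  ring

/-- For a polynomial `h`, its divided difference integrates against the two-point function to the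
integral of `h` against the derivative of the diagonal kernel. -/
lemma integral_divDiff_mul_twoPoint (n : ℕ) (h : ℝ[X]) {D : ℝ → ℝ → ℝ}
    (hD : ∀ x y, (x - y) * D x y = h.eval x - h.eval y) :
    ∫ z : ℝ × ℝ, D z.1 z.2 * (cdKernel μ n z.1 z.1 * cdKernel μ n z.2 z.2
        - cdKernel μ n z.1 z.2 ^ 2) ∂(μ.prod μ) =
      polyIntegral μ (h * (cdDiag μ n).derivative) := by
  have hc1 : Continuous fun z : ℝ × ℝ => h.eval z.1 * cdQuot μ n z.1 z.2 := by fun_prop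
  have hc2 : Continuous fun z : ℝ × ℝ => h.eval z.2 * cdQuot μ n z.1 z.2 := by fun_prop
  have hsw : ∫ z : ℝ × ℝ, h.eval z.2 * cdQuot μ n z.1 z.2 ∂(μ.prod μ) =
      -∫ z : ℝ × ℝ, h.eval z.1 * cdQuot μ n z.1 z.2 ∂(μ.prod μ) := by
    rw [← integral_prod_swap (μ := μ) (ν := μ)
      (fun z : ℝ × ℝ => h.eval z.2 * cdQuot μ n z.1 z.2), ← integral_neg]
    refine integral_congr_ae (Eventually.of_forall fun z => ?_)
    simp only [Prod.fst_swap, Prod.snd_swap]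
    rw [cdQuot_swap]; ring
  calc _ = ∫ z : ℝ × ℝ, (h.eval z.1 * cdQuot μ n z.1 z.2 -
        h.eval z.2 * cdQuot μ n z.1 z.2) ∂(μ.prod μ) := by
        refine integral_congr_ae (Eventually.of_forall fun z => ?_)
        simp only
        rw [← sub_mul_cdQuot]
        linear_combination cdQuot μ n z.1 z.2 * hD z.1 z.2
    _ = 2 * ∫ z : ℝ × ℝ, h.eval z.1 * cdQuot μ n z.1 z.2 ∂(μ.prod μ) := by
        rw [integral_sub (integrable_prod_of_continuous μ hc1)
          (integrable_prod_of_continuous μ hc2), hsw]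
        ring
    _ = _ := by
        rw [integral_prod _ (integrable_prod_of_continuous μ hc1), ← integral_const_mul,
          polyIntegral_apply]
        refine integral_congr_ae (Eventually.of_forall fun x => ?_)
        simp only
        rw [integral_const_mul, integral_cdQuot, eval_mul]
        ring

lemma integral_cheb_mul_twoPoint (n : ℕ) (a c : ℤ) :
    ∫ z : ℝ × ℝ, (Chebyshev.T ℝ a).eval z.1 * (Chebyshev.T ℝ c).eval z.2 *
      (cdKernel μ n z.1 z.1 * cdKernel μ n z.2 z.2 - cdKernel μ n z.1 z.2 ^ 2) ∂(μ.prod μ) =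
      chebMean μ n a * chebMean μ n c -
        ∑ i ∈ Finset.range n, ∑ j ∈ Finset.range n, chebEntry μ a i j * chebEntry μ c i j := by
  have hexp : ∀ z : ℝ × ℝ, (Chebyshev.T ℝ a).eval z.1 * (Chebyshev.T ℝ c).eval z.2 *
      (cdKernel μ n z.1 z.1 * cdKernel μ n z.2 z.2 - cdKernel μ n z.1 z.2 ^ 2) =
      (Chebyshev.T ℝ a * cdDiag μ n).eval z.1 * (Chebyshev.T ℝ c * cdDiag μ n).eval z.2 -
        ∑ i ∈ Finset.range n, ∑ j ∈ Finset.range n,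
          (Chebyshev.T ℝ a * (onp μ i * onp μ j)).eval z.1 *
            (Chebyshev.T ℝ c * (onp μ i * onp μ j)).eval z.2 := by
    intro z
    rw [cdKernel_self, cdKernel_self, pow_two, cdKernel, Finset.sum_mul_sum, mul_sub,
      Finset.mul_sum]
    congr 1
    · simp only [eval_mul]; ring
    · refine Finset.sum_congr rfl fun i _ => ?_
      rw [Finset.mul_sum]
      refine Finset.sum_congr rfl fun j _ => ?_
      simp only [eval_mul]; ring
  have hmean : ∀ b : ℤ, polyIntegral μ (Chebyshev.T ℝ b * cdDiag μ n) = chebMean μ n b := by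
    intro b
    rw [cdDiag, Finset.mul_sum, map_sum]
    rfl
  simp_rw [hexp]
  rw [integral_sub (integrable_prod_of_continuous μ (by fun_prop))
    (integrable_prod_of_continuous μ (by fun_prop)),
    integral_prod_mul (fun x => (Chebyshev.T ℝ a * cdDiag μ n).eval x)
      (fun x => (Chebyshev.T ℝ c * cdDiag μ n).eval x), ← polyIntegral_apply,
    ← polyIntegral_apply, hmean, hmean,
    integral_finsetSum _ fun i _ => integrable_prod_of_continuous μ (by fun_prop)]
  congr 1
  refine Finset.sum_congr rfl fun i _ => ?_
  rw [integral_finsetSum _ fun j _ => integrable_prod_of_continuous μ (by fun_prop)]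
  refine Finset.sum_congr rfl fun j _ => ?_
  exact integral_prod_mul (fun x => (Chebyshev.T ℝ a * (onp μ i * onp μ j)).eval x)
    (fun x => (Chebyshev.T ℝ c * (onp μ i * onp μ j)).eval x)

/-- The divided difference of `(1 - X ^ 2) * U M` expanded in Chebyshev polynomials. -/
noncomputable def chebDivDiff (M : ℕ) (x y : ℝ) : ℝ :=
  -((Chebyshev.T ℝ (M + 1)).eval x + (Chebyshev.T ℝ (M + 1)).eval y +
    2 * ∑ l ∈ Finset.range M,
      (Chebyshev.T ℝ (M - l)).eval x * (Chebyshev.T ℝ (l + 1)).eval y)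

lemma eval_T_add_one (a : ℤ) (x : ℝ) : (Chebyshev.T ℝ (a + 1)).eval x =
    2 * x * (Chebyshev.T ℝ a).eval x - (Chebyshev.T ℝ (a - 1)).eval x := by
  simp [Chebyshev.T_add_one]

lemma two_mul_sub_mul_sum_T (M N : ℕ) (x y : ℝ) :
    2 * (x - y) * ∑ l ∈ Finset.range N,
      (Chebyshev.T ℝ (M - l)).eval x * (Chebyshev.T ℝ (l + 1)).eval y =
    (Chebyshev.T ℝ (M + 1)).eval x * y
      - (Chebyshev.T ℝ (M + 1 - N)).eval x * (Chebyshev.T ℝ (N + 1)).eval y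
      + (Chebyshev.T ℝ (M - N)).eval x * (Chebyshev.T ℝ N).eval y
      - (Chebyshev.T ℝ M).eval x := by
  induction N with
  | zero => simp
  | succ N ih =>
    rw [Finset.sum_range_succ, mul_add, ih]
    have h1 := eval_T_add_one (M - N) x
    have h2 := eval_T_add_one (N + 1) y
    push_cast
    rw [show (M : ℤ) + 1 - (N + 1) = M - N by ring, show (M : ℤ) - (N + 1) = M - N - 1 by ring]
    rw [show (M : ℤ) - N + 1 = M + 1 - N by ring] at h1
    rw [show (N : ℤ) + 1 - 1 = N by ring] at h2
    linear_combination (-(Chebyshev.T ℝ (N + 1)).eval y) * h1 +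
      (Chebyshev.T ℝ (M - N)).eval x * h2

lemma eval_one_sub_sq_mul_U (M : ℕ) (x : ℝ) :
    ((1 - X ^ 2) * Chebyshev.U ℝ M).eval x =
      (Chebyshev.T ℝ M).eval x - x * (Chebyshev.T ℝ (M + 1)).eval x := by
  rw [Chebyshev.one_sub_X_sq_mul_U_eq_pol_in_T, show (M : ℤ) + 2 = M + 1 + 1 by ring, eval_sub,
    eval_T_add_one]
  simp
  ring

lemma sub_mul_chebDivDiff (M : ℕ) (x y : ℝ) : (x - y) * chebDivDiff M x y =
    ((1 - X ^ 2) * Chebyshev.U ℝ M).eval x - ((1 - X ^ 2) * Chebyshev.U ℝ M).eval y := by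
  have h := two_mul_sub_mul_sum_T M M x y
  simp only [add_sub_cancel_left, sub_self, Chebyshev.T_one, Chebyshev.T_zero, eval_X,
    eval_one] at h
  rw [eval_one_sub_sq_mul_U, eval_one_sub_sq_mul_U, chebDivDiff]
  linear_combination -h

lemma chebDivDiff_self (M : ℕ) (x : ℝ) :
    chebDivDiff M x x = ((1 - X ^ 2) * Chebyshev.U ℝ M).derivative.eval x := by
  set h : ℝ[X] := (1 - X ^ 2) * Chebyshev.U ℝ M with hh
  have h1 : HasDerivAt (fun y => h.eval x - h.eval y) (-h.derivative.eval x) x :=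
    (h.hasDerivAt x).const_sub _
  have hd : DifferentiableAt ℝ (fun y => chebDivDiff M x y) x := by
    unfold chebDivDiff
    fun_prop
  have h2 : HasDerivAt (fun y => (x - y) * chebDivDiff M x y) _ x :=
    ((hasDerivAt_id x).const_sub x).mul hd.hasDerivAt
  have h3 : (fun y => (x - y) * chebDivDiff M x y) = fun y => h.eval x - h.eval y :=
    funext fun y => sub_mul_chebDivDiff M x y
  rw [h3] at h2
  have := h1.unique h2
  simp at this
  linarith

lemma polyIntegral_T_mul_cdDiag (n : ℕ) (a : ℤ) :
    polyIntegral μ (Chebyshev.T ℝ a * cdDiag μ n) = chebMean μ n a := by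
  rw [cdDiag, Finset.mul_sum, map_sum]
  rfl

lemma sum_chebEntry_mul_chebEntry_zero (n : ℕ) (a : ℤ) :
    ∑ i ∈ Finset.range n, ∑ j ∈ Finset.range n, chebEntry μ a i j * chebEntry μ 0 i j =
      chebMean μ n a := by
  refine Finset.sum_congr rfl fun i hi => ?_
  rw [Finset.sum_eq_single_of_mem i hi]
  · simp [chebEntry, polyIntegral_onp_mul_onp]
  · intro j _ hj
    simp [chebEntry, polyIntegral_onp_mul_onp, hj.symm]

/-- The loop (Schwinger–Dyson) identity for the vector field `(1 - X ^ 2) * U M`. -/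
lemma polyIntegral_derivative_mul_cdDiag (n M : ℕ) :
    polyIntegral μ (((1 - X ^ 2) * Chebyshev.U ℝ M * cdDiag μ n).derivative) =
      -(2 * n * chebMean μ n (M + 1) + 2 * ∑ l ∈ Finset.range M,
        (chebMean μ n (M - l) * chebMean μ n (l + 1) + chebCov μ n (M - l) (l + 1))) := by
  set h : ℝ[X] := (1 - X ^ 2) * Chebyshev.U ℝ M with hh
  have hrw : h.derivative = -(Chebyshev.T ℝ (M + 1) + Chebyshev.T ℝ (M + 1) +
      C 2 * ∑ l ∈ Finset.range M, Chebyshev.T ℝ (M - l) * Chebyshev.T ℝ (l + 1)) := by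
    refine Polynomial.funext fun x => ?_
    rw [← chebDivDiff_self]
    simp [chebDivDiff, eval_finsetSum]
  have hdiag : polyIntegral μ (h.derivative * cdDiag μ n) =
      -(2 * chebMean μ n (M + 1) + 2 * ∑ l ∈ Finset.range M, ∑ i ∈ Finset.range n,
        polyIntegral μ (Chebyshev.T ℝ (M - l) * Chebyshev.T ℝ (l + 1) *
          (onp μ i * onp μ i))) := by
    rw [hrw, neg_mul, add_mul, add_mul, map_neg, map_add, map_add, polyIntegral_T_mul_cdDiag,
      mul_assoc, polyIntegral_C_mul, Finset.sum_mul, map_sum]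
    simp_rw [cdDiag, Finset.mul_sum, map_sum]
    simp only [Finset.mul_sum]
    ring
  have hoff : polyIntegral μ (h * (cdDiag μ n).derivative) =
      -(2 * (n * chebMean μ n (M + 1) - chebMean μ n (M + 1)) + 2 * ∑ l ∈ Finset.range M,
        (chebMean μ n (M - l) * chebMean μ n (l + 1) - ∑ i ∈ Finset.range n,
          ∑ j ∈ Finset.range n, chebEntry μ (M - l) i j * chebEntry μ (l + 1) i j)) := by
    rw [← integral_divDiff_mul_twoPoint μ n h (sub_mul_chebDivDiff M)]
    have hexp : ∀ z : ℝ × ℝ, chebDivDiff M z.1 z.2 * (cdKernel μ n z.1 z.1 * cdKernel μ n z.2 z.2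
        - cdKernel μ n z.1 z.2 ^ 2) =
        -((Chebyshev.T ℝ (M + 1)).eval z.1 * (Chebyshev.T ℝ 0).eval z.2 *
          (cdKernel μ n z.1 z.1 * cdKernel μ n z.2 z.2 - cdKernel μ n z.1 z.2 ^ 2) +
          (Chebyshev.T ℝ 0).eval z.1 * (Chebyshev.T ℝ (M + 1)).eval z.2 *
          (cdKernel μ n z.1 z.1 * cdKernel μ n z.2 z.2 - cdKernel μ n z.1 z.2 ^ 2) +
          2 * ∑ l ∈ Finset.range M, (Chebyshev.T ℝ (M - l)).eval z.1 *
            (Chebyshev.T ℝ (l + 1)).eval z.2 *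
          (cdKernel μ n z.1 z.1 * cdKernel μ n z.2 z.2 - cdKernel μ n z.1 z.2 ^ 2)) := by
      intro z
      rw [chebDivDiff, ← Finset.sum_mul]
      simp
      ring
    simp_rw [hexp]
    rw [integral_neg, integral_add (integrable_prod_of_continuous μ (by fun_prop))
      (integrable_prod_of_continuous μ (by fun_prop)),
      integral_add (integrable_prod_of_continuous μ (by fun_prop))
      (integrable_prod_of_continuous μ (by fun_prop)), integral_const_mul,
      integral_finsetSum _ fun i _ => integrable_prod_of_continuous μ (by fun_prop)]
    simp_rw [integral_cheb_mul_twoPoint]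
    have := sum_chebEntry_mul_chebEntry_zero μ n (M + 1)
    have h' : ∑ i ∈ Finset.range n, ∑ j ∈ Finset.range n,
        chebEntry μ 0 i j * chebEntry μ (M + 1) i j = chebMean μ n (M + 1) := by
      rw [← this]
      exact Finset.sum_congr rfl fun i _ => Finset.sum_congr rfl fun j _ => mul_comm _ _
    rw [this, h', chebMean_zero]
    ring
  rw [derivative_mul, map_add, hdiag, hoff]
  simp only [chebCov, Finset.sum_add_distrib, Finset.sum_sub_distrib]
  ring

lemma chebEntry_zero (i j : ℕ) : chebEntry μ 0 i j = if i = j then 1 else 0 := by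
  simp [chebEntry, polyIntegral_onp_mul_onp]

lemma chebEntry_one_succ (i j : ℕ) : chebEntry μ 1 (i + 1) j =
    jacobiCoeff μ (i + 1) * chebEntry μ 0 (i + 2) j + jacobiCoeff μ i * chebEntry μ 0 i j := by
  simp only [chebEntry, Chebyshev.T_one, Chebyshev.T_zero]
  rw [← mul_assoc X, X_mul_onp_succ, ← polyIntegral_C_mul, ← polyIntegral_C_mul, ← map_add]
  congr 1
  ring

lemma chebEntry_add_two_succ (a : ℤ) (i j : ℕ) : chebEntry μ (a + 2) (i + 1) j =
    2 * (jacobiCoeff μ (i + 1) * chebEntry μ (a + 1) (i + 2) j +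
      jacobiCoeff μ i * chebEntry μ (a + 1) i j) - chebEntry μ a (i + 1) j := by
  simp only [chebEntry]
  rw [← polyIntegral_C_mul, ← polyIntegral_C_mul, ← map_add, ← polyIntegral_C_mul, ← map_sub]
  congr 1
  have h := X_mul_onp_succ μ i
  rw [Chebyshev.T_add_two, show (C (2 : ℝ) : ℝ[X]) = 2 from rfl]
  linear_combination (2 * Chebyshev.T ℝ (a + 1) * onp μ j) * h

lemma jacobiCoeff_eq_chebEntry (n : ℕ) : jacobiCoeff μ (n + 1) = chebEntry μ 1 (n + 1) (n + 2) := by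
  rw [chebEntry_one_succ, chebEntry_zero, chebEntry_zero]
  simp

lemma jacobiCoeff_succ_le_one (n : ℕ) : jacobiCoeff μ (n + 1) ≤ 1 := by
  rw [jacobiCoeff_eq_chebEntry]
  exact (le_abs_self _).trans (abs_chebEntry_le_one μ _ _ _)

lemma polyIntegral_X_sq (n : ℕ) : polyIntegral μ (X ^ 2 * (onp μ (n + 1) * onp μ (n + 1))) =
    jacobiCoeff μ (n + 1) ^ 2 + jacobiCoeff μ n ^ 2 := by
  have h := X_mul_onp_succ μ n
  have h1 : X ^ 2 * (onp μ (n + 1) * onp μ (n + 1)) =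
      C (jacobiCoeff μ (n + 1) ^ 2) * (onp μ (n + 2) * onp μ (n + 2)) +
      C (2 * jacobiCoeff μ (n + 1) * jacobiCoeff μ n) * (onp μ (n + 2) * onp μ n) +
      C (jacobiCoeff μ n ^ 2) * (onp μ n * onp μ n) := by
    simp only [map_mul, map_pow, show (C (2 : ℝ) : ℝ[X]) = 2 from rfl]
    linear_combination (X * onp μ (n + 1) + C (jacobiCoeff μ (n + 1)) * onp μ (n + 2) +
      C (jacobiCoeff μ n) * onp μ n) * h
  rw [h1, map_add, map_add, polyIntegral_C_mul, polyIntegral_C_mul, polyIntegral_C_mul]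
  simp [polyIntegral_onp_mul_onp]

lemma polyIntegral_X_pow_four (n : ℕ) :
    polyIntegral μ (X ^ 4 * (onp μ (n + 2) * onp μ (n + 2))) =
      jacobiCoeff μ (n + 2) ^ 2 * jacobiCoeff μ (n + 3) ^ 2 +
        (jacobiCoeff μ (n + 2) ^ 2 + jacobiCoeff μ (n + 1) ^ 2) ^ 2 +
        jacobiCoeff μ (n + 1) ^ 2 * jacobiCoeff μ n ^ 2 := by
  have h := X_mul_onp_succ μ n
  have h' := X_mul_onp_succ μ (n + 1)
  have h'' := X_mul_onp_succ μ (n + 2)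
  simp only [add_assoc, Nat.reduceAdd] at h' h''
  generalize jacobiCoeff μ n = a at *
  generalize jacobiCoeff μ (n + 1) = b at *
  generalize jacobiCoeff μ (n + 2) = c at *
  generalize jacobiCoeff μ (n + 3) = d at *
  have h2 : X ^ 2 * onp μ (n + 2) = C (c * d) * onp μ (n + 4) +
      C (c ^ 2 + b ^ 2) * onp μ (n + 2) + C (b * a) * onp μ n := by
    simp only [map_mul, map_pow, map_add]
    linear_combination X * h' + C c * h'' + C b * h
  have h3 : X ^ 4 * (onp μ (n + 2) * onp μ (n + 2)) =
      C ((c * d) ^ 2) * (onp μ (n + 4) * onp μ (n + 4)) +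
      C ((c ^ 2 + b ^ 2) ^ 2) * (onp μ (n + 2) * onp μ (n + 2)) +
      C ((b * a) ^ 2) * (onp μ n * onp μ n) +
      C (2 * (c * d) * (c ^ 2 + b ^ 2)) * (onp μ (n + 4) * onp μ (n + 2)) +
      C (2 * (c * d) * (b * a)) * (onp μ (n + 4) * onp μ n) +
      C (2 * (c ^ 2 + b ^ 2) * (b * a)) * (onp μ (n + 2) * onp μ n) := by
    simp only [map_mul, map_pow, map_add, show (C (2 : ℝ) : ℝ[X]) = 2 from rfl] at h2 ⊢
    linear_combination (X ^ 2 * onp μ (n + 2) + (C c * C d) * onp μ (n + 4) +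
      (C c ^ 2 + C b ^ 2) * onp μ (n + 2) + (C b * C a) * onp μ n) * h2
  rw [h3]
  simp only [map_add (polyIntegral μ), polyIntegral_C_mul]
  simp [polyIntegral_onp_mul_onp]
  ring

lemma chebEntry_two_self (n : ℕ) : chebEntry μ 2 n n =
    2 * polyIntegral μ (X ^ 2 * (onp μ n * onp μ n)) - 1 := by
  have h1 : Chebyshev.T ℝ 2 * (onp μ n * onp μ n) =
      C 2 * (X ^ 2 * (onp μ n * onp μ n)) - onp μ n * onp μ n := by
    rw [Chebyshev.T_two, show (C (2 : ℝ) : ℝ[X]) = 2 from rfl]; ring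
  rw [chebEntry, h1, map_sub, polyIntegral_C_mul]
  simp [polyIntegral_onp_mul_onp]

lemma chebEntry_four_self (n : ℕ) : chebEntry μ 4 n n =
    8 * polyIntegral μ (X ^ 4 * (onp μ n * onp μ n)) -
      8 * polyIntegral μ (X ^ 2 * (onp μ n * onp μ n)) + 1 := by
  have hT : Chebyshev.T ℝ 4 = 8 * X ^ 4 - 8 * X ^ 2 + 1 := by
    have h3 := Chebyshev.T_add_two ℝ 1
    have h4 := Chebyshev.T_add_two ℝ 2
    norm_num at h3 h4
    rw [h4, h3, Chebyshev.T_two]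
    ring
  have h1 : Chebyshev.T ℝ 4 * (onp μ n * onp μ n) =
      C 8 * (X ^ 4 * (onp μ n * onp μ n)) - C 8 * (X ^ 2 * (onp μ n * onp μ n)) +
        onp μ n * onp μ n := by
    rw [hT, show (C (8 : ℝ) : ℝ[X]) = 8 from rfl]; ring
  rw [chebEntry, h1, map_add, map_sub, polyIntegral_C_mul, polyIntegral_C_mul]
  simp [polyIntegral_onp_mul_onp]

variable {μ}

/-- If the diagonal entries of `T 2` and `T 4` tend to zero then the recurrence coefficients tend
to `1 / 2`. -/
lemma tendsto_jacobiCoeff (h2 : Tendsto (fun n => chebEntry μ 2 n n) atTop (𝓝 0))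
    (h4 : Tendsto (fun n => chebEntry μ 4 n n) atTop (𝓝 0)) :
    Tendsto (jacobiCoeff μ) atTop (𝓝 (1 / 2)) := by
  set b : ℕ → ℝ := fun n => jacobiCoeff μ n ^ 2 with hb
  have hs : Tendsto (fun n => b n + b (n + 1)) atTop (𝓝 (1 / 2)) := by
    have h := (((tendsto_add_atTop_iff_nat 1).2 h2).add_const 1).div_const 2
    norm_num only at h
    refine h.congr fun n => ?_
    rw [chebEntry_two_self, polyIntegral_X_sq]
    simp only [hb]; ring
  have hs1 := (tendsto_add_atTop_iff_nat 1).2 hs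
  have hs2 := (tendsto_add_atTop_iff_nat 2).2 hs
  have hQ : Tendsto (fun n => b (n + 2) * b (n + 3) + b (n + 1) * b n) atTop (𝓝 (1 / 8)) := by
    have h := ((((tendsto_add_atTop_iff_nat 2).2 h4).sub_const 1).div_const 8).add
      (hs1.sub (hs1.pow 2))
    norm_num only at h
    refine h.congr fun n => ?_
    have h' := chebEntry_four_self μ (n + 2)
    rw [polyIntegral_X_pow_four, polyIntegral_X_sq μ (n + 1)] at h'
    rw [h']
    simp only [hb, add_assoc, Nat.reduceAdd]
    ring
  have hbdd : ∀ n, |b (n + 2)| ≤ 1 := fun n => by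
    rw [abs_of_nonneg (sq_nonneg _)]
    exact pow_le_one₀ (jacobiCoeff_pos μ _).le (jacobiCoeff_succ_le_one μ (n + 1))
  have hsq : Tendsto (fun n => (b (n + 2) - 1 / 4) ^ 2) atTop (𝓝 0) := by
    have hz : Tendsto (fun n => (b (n + 2) + b (n + 3)) + 2 * (b (n + 1) + b (n + 2)) -
        (b n + b (n + 1)) - 1) atTop (𝓝 0) := by
      have := ((hs2.add (hs1.const_mul 2)).sub hs).sub_const 1
      norm_num only at this
      exact this
    have hz' : Tendsto (fun n => ((b (n + 2) + b (n + 3)) + 2 * (b (n + 1) + b (n + 2)) -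
        (b n + b (n + 1)) - 1) * b (n + 2)) atTop (𝓝 0) := by
      refine squeeze_zero_norm (fun n => ?_) (tendsto_zero_iff_norm_tendsto_zero.1 hz)
      rw [norm_mul]
      exact mul_le_of_le_one_right (norm_nonneg _) (hbdd n)
    have h := (((hz'.add (hs1.mul (hs.sub hs1))).sub hQ).add_const (1 / 8)).div_const 2
    norm_num only at h
    refine h.congr fun n => ?_
    simp only [add_assoc, Nat.reduceAdd]
    ring
  have hb2 : Tendsto b atTop (𝓝 (1 / 4)) := by
    refine (tendsto_add_atTop_iff_nat 2).1 (tendsto_sub_nhds_zero_iff.1 ?_)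
    have h := hsq.sqrt
    simp only [Real.sqrt_sq_eq_abs, Real.sqrt_zero] at h
    exact (tendsto_zero_iff_abs_tendsto_zero _).2 h
  have h := hb2.sqrt
  have h14 : √(1 / 4 : ℝ) = 1 / 2 := by
    rw [show (1 / 4 : ℝ) = (1 / 2) ^ 2 by norm_num]
    exact Real.sqrt_sq (by norm_num)
  rw [h14] at h
  exact h.congr fun n => Real.sqrt_sq (jacobiCoeff_pos μ n).le

/-- The entries of `T a` for the free Jacobi matrix. -/
noncomputable def freeEntry (a p q : ℕ) : ℝ :=
  ((if p = q + a then 1 else 0) + (if q = p + a then 1 else 0)) / 2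

lemma tendsto_chebEntry (hJ : Tendsto (jacobiCoeff μ) atTop (𝓝 (1 / 2))) (a : ℕ) :
    ∀ p q : ℕ, Tendsto (fun n => chebEntry μ a (n + p) (n + q)) atTop (𝓝 (freeEntry a p q)) := by
  have hJ' : ∀ k, Tendsto (fun n => jacobiCoeff μ (n + k)) atTop (𝓝 (1 / 2)) := fun k =>
    (tendsto_add_atTop_iff_nat k).2 hJ
  have h0 : ∀ p q : ℕ, Tendsto (fun n => chebEntry μ 0 (n + p) (n + q)) atTop
      (𝓝 (freeEntry 0 p q)) := by
    intro p q
    refine tendsto_const_nhds.congr fun n => ?_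
    rw [chebEntry_zero, freeEntry]
    split_ifs <;> first | lia | norm_num
  have h1 : ∀ p q : ℕ, Tendsto (fun n => chebEntry μ 1 (n + p) (n + q)) atTop
      (𝓝 (freeEntry 1 p q)) := by
    intro p q
    refine (tendsto_add_atTop_iff_nat 1).1 ?_
    have h := ((hJ' (p + 1)).mul (h0 (p + 2) (q + 1))).add ((hJ' p).mul (h0 p (q + 1)))
    have hc : 1 / 2 * freeEntry 0 (p + 2) (q + 1) + 1 / 2 * freeEntry 0 p (q + 1) =
        freeEntry 1 p q := by
      unfold freeEntry
      split_ifs <;> first | lia | norm_num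
    rw [hc] at h
    refine h.congr fun n => ?_
    rw [show n + 1 + p = n + p + 1 by ring, chebEntry_one_succ]
    congr 3 <;> ring_nf
  induction a using Nat.twoStepInduction with
  | zero => exact h0
  | one => exact h1
  | more a iha ihb =>
    intro p q
    refine (tendsto_add_atTop_iff_nat 1).1 ?_
    have h := ((((hJ' (p + 1)).mul (ihb (p + 2) (q + 1))).add
      ((hJ' p).mul (ihb p (q + 1)))).const_mul 2).sub (iha (p + 1) (q + 1))
    have hc : 2 * (1 / 2 * freeEntry (a + 1) (p + 2) (q + 1) +
        1 / 2 * freeEntry (a + 1) p (q + 1)) - freeEntry a (p + 1) (q + 1) =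
        freeEntry (a + 2) p q := by
      simp only [freeEntry, show p + 2 = q + 1 + (a + 1) ↔ p = q + a by lia,
        show q + 1 = p + 2 + (a + 1) ↔ q = p + (a + 2) by lia,
        show p = q + 1 + (a + 1) ↔ p = q + (a + 2) by lia,
        show q + 1 = p + (a + 1) ↔ q = p + a by lia,
        show p + 1 = q + 1 + a ↔ p = q + a by lia,
        show q + 1 = p + 1 + a ↔ q = p + a by lia]
      ring
    rw [hc] at h
    refine h.congr fun n => ?_
    rw [show n + 1 + p = n + p + 1 by ring, show n + 1 + q = n + (q + 1) by ring]
    push_cast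
    rw [chebEntry_add_two_succ]
    rfl

lemma tendsto_chebCov (hJ : Tendsto (jacobiCoeff μ) atTop (𝓝 (1 / 2))) (a : ℕ) {c : ℕ}
    (hc : 0 < c) : Tendsto (fun n => chebCov μ n a c) atTop
      (𝓝 (if a = c then (a : ℝ) / 4 else 0)) := by
  refine (tendsto_add_atTop_iff_nat a).1 ?_
  have h : Tendsto (fun n => ∑ p ∈ Finset.range a, ∑ q ∈ Finset.range a,
      chebEntry μ a (n + p) (n + (a + q)) * chebEntry μ c (n + p) (n + (a + q))) atTop
      (𝓝 (∑ p ∈ Finset.range a, ∑ q ∈ Finset.range a,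
        freeEntry a p (a + q) * freeEntry c p (a + q))) :=
    tendsto_finsetSum _ fun p _ => tendsto_finsetSum _ fun q _ =>
      (tendsto_chebEntry hJ a p (a + q)).mul (tendsto_chebEntry hJ c p (a + q))
  have hlim : ∑ p ∈ Finset.range a, ∑ q ∈ Finset.range a,
      freeEntry a p (a + q) * freeEntry c p (a + q) = if a = c then (a : ℝ) / 4 else 0 := by
    have h1 : ∀ p ∈ Finset.range a, ∑ q ∈ Finset.range a,
        freeEntry a p (a + q) * freeEntry c p (a + q) = if a = c then (1 : ℝ) / 4 else 0 := by
      intro p hp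
      have hp' := Finset.mem_range.1 hp
      rw [Finset.sum_eq_single_of_mem p hp]
      · unfold freeEntry
        split_ifs <;> first | lia | norm_num
      · intro q _ hq
        unfold freeEntry
        split_ifs <;> first | lia | norm_num
    rw [Finset.sum_congr rfl h1]
    split_ifs <;> simp [div_eq_mul_inv]
  rw [hlim] at h
  refine h.congr fun n => ?_
  rw [chebCov_eq, Nat.add_sub_cancel, Finset.sum_Ico_eq_sum_range]
  simp only [Finset.sum_Ico_eq_sum_range, add_tsub_cancel_left]
  simp only [add_assoc]

end SymmetricWeight

open SymmetricWeight

/-- The weight `(1 - x²)^α (1 - k² x²)^b`. -/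
noncomputable def jacobiWeight (α k2 b x : ℝ) : ℝ := (1 - x ^ 2) ^ α * (1 - k2 * x ^ 2) ^ b

/-- The measure on `[-1,1]` with density `jacobiWeight α k2 b`. -/
noncomputable def jacobiMeasure (α k2 b : ℝ) : Measure ℝ :=
  (volume.restrict (Set.Ioc (-1 : ℝ) 1)).withDensity fun x => ENNReal.ofReal (jacobiWeight α k2 b x)

lemma measurable_jacobiWeight (α k2 b : ℝ) : Measurable (jacobiWeight α k2 b) := by
  unfold jacobiWeight
  fun_prop

lemma one_sub_mul_sq_pos {k2 x : ℝ} (hk : k2 ∈ Set.Ioo (0 : ℝ) 1) (hx : x ∈ Set.Icc (-1 : ℝ) 1) :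
    0 < 1 - k2 * x ^ 2 := by
  have h1 : x ^ 2 ≤ 1 := by nlinarith [hx.1, hx.2]
  nlinarith [hk.1, hk.2]

lemma one_sub_sq_pos {x : ℝ} (hx : x ∈ Set.Ioo (-1 : ℝ) 1) : 0 < 1 - x ^ 2 := by
  nlinarith [hx.1, hx.2]

lemma jacobiWeight_nonneg {α k2 b x : ℝ} (hk : k2 ∈ Set.Ioo (0 : ℝ) 1)
    (hx : x ∈ Set.Icc (-1 : ℝ) 1) : 0 ≤ jacobiWeight α k2 b x := by
  have h1 : 0 ≤ 1 - x ^ 2 := by nlinarith [hx.1, hx.2]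
  exact mul_nonneg (Real.rpow_nonneg h1 _) (Real.rpow_nonneg (one_sub_mul_sq_pos hk hx).le _)

lemma jacobiWeight_pos {α k2 b x : ℝ} (hk : k2 ∈ Set.Ioo (0 : ℝ) 1)
    (hx : x ∈ Set.Ioo (-1 : ℝ) 1) : 0 < jacobiWeight α k2 b x :=
  mul_pos (Real.rpow_pos_of_pos (one_sub_sq_pos hx) _)
    (Real.rpow_pos_of_pos (one_sub_mul_sq_pos hk (Set.Ioo_subset_Icc_self hx)) _)

lemma intervalIntegrable_one_sub_sq_rpow {α : ℝ} (hα : -1 < α) :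
    IntervalIntegrable (fun x : ℝ => (1 - x ^ 2) ^ α) volume (-1) 1 := by
  have hr : IntervalIntegrable (fun x : ℝ => (1 - x ^ 2) ^ α) volume 0 1 := by
    have h1 : IntervalIntegrable (fun x : ℝ => (1 - x) ^ α) volume 0 1 := by
      simpa using ((intervalIntegral.intervalIntegrable_rpow' (a := 0) (b := 1) hα).comp_sub_left
        1).symm
    have h2 : ContinuousOn (fun x : ℝ => (1 + x) ^ α) (Set.uIcc 0 1) := by
      refine ContinuousOn.rpow_const (by fun_prop) fun x hx => Or.inl ?_
      rw [Set.uIcc_of_le zero_le_one] at hx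
      linarith [hx.1]
    refine (h1.mul_continuousOn h2).congr fun x hx => ?_
    rw [Set.uIoc_of_le zero_le_one] at hx
    rw [← Real.mul_rpow (by linarith [hx.2]) (by linarith [hx.1])]
    congr 1
    ring
  have hl : IntervalIntegrable (fun x : ℝ => (1 - x ^ 2) ^ α) volume (-1) 0 := by
    have h := (hr.comp_sub_left 0).symm
    simpa using h
  exact hl.trans hr

lemma intervalIntegrable_jacobiWeight {α k2 : ℝ} (hα : -1 < α) (hk : k2 ∈ Set.Ioo (0 : ℝ) 1)
    (b : ℝ) : IntervalIntegrable (jacobiWeight α k2 b) volume (-1) 1 := by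
  refine (intervalIntegrable_one_sub_sq_rpow hα).mul_continuousOn ?_
  refine ContinuousOn.rpow_const (by fun_prop) fun x hx => Or.inl ?_
  rw [Set.uIcc_of_le (by norm_num)] at hx
  exact (one_sub_mul_sq_pos hk hx).ne'

lemma integral_jacobiMeasure {k2 : ℝ} (hk : k2 ∈ Set.Ioo (0 : ℝ) 1) (α b : ℝ)
    (f : ℝ → ℝ) :
    ∫ x, f x ∂(jacobiMeasure α k2 b) = ∫ x in (-1 : ℝ)..1, f x * jacobiWeight α k2 b x := by
  rw [jacobiMeasure, integral_withDensity_eq_integral_toReal_smul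
    (measurable_jacobiWeight α k2 b).ennreal_ofReal (by simp),
    intervalIntegral.integral_of_le (by norm_num)]
  refine setIntegral_congr_fun measurableSet_Ioc fun x hx => ?_
  simp only [smul_eq_mul]
  rw [ENNReal.toReal_ofReal (jacobiWeight_nonneg hk (Set.Ioc_subset_Icc_self hx)), mul_comm]

lemma isSymmetricWeight_jacobiMeasure {α k2 : ℝ} (hα : -1 < α) (hk : k2 ∈ Set.Ioo (0 : ℝ) 1)
    (b : ℝ) : IsSymmetricWeight (jacobiMeasure α k2 b) where
  measure_univ_lt_top := by
    have h := (intervalIntegrable_iff_integrableOn_Ioc_of_le (by norm_num)).1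
      (intervalIntegrable_jacobiWeight hα hk b)
    have : IsFiniteMeasure (jacobiMeasure α k2 b) := isFiniteMeasure_withDensity_ofReal h.2
    exact measure_lt_top (jacobiMeasure α k2 b) Set.univ
  measure_singleton x := by
    refine withDensity_absolutelyContinuous _ _ ?_
    simp
  ae_mem_Icc := by
    refine (withDensity_absolutelyContinuous _ _).ae_le ?_
    filter_upwards [ae_restrict_mem measurableSet_Ioc] with x hx
    exact Set.Ioc_subset_Icc_self hx
  integral_eval_neg p := by
    rw [integral_jacobiMeasure hk, integral_jacobiMeasure hk]
    have h := intervalIntegral.integral_comp_neg (a := (-1 : ℝ)) (b := 1)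
      fun x => p.eval x * jacobiWeight α k2 b x
    rw [neg_neg] at h
    rw [← h]
    refine intervalIntegral.integral_congr fun x _ => ?_
    simp [jacobiWeight]
  integral_sq_pos p hp := by
    have hInt : IntervalIntegrable (fun x => p.eval x ^ 2 * jacobiWeight α k2 b x) volume (-1) 1 :=
      (intervalIntegrable_jacobiWeight hα hk b).continuousOn_mul (by fun_prop)
    have hInt' := (intervalIntegrable_iff_integrableOn_Ioc_of_le (by norm_num)).1 hInt
    rw [integral_jacobiMeasure hk, intervalIntegral.integral_of_le (by norm_num),
      setIntegral_pos_iff_support_of_nonneg_ae _ hInt']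
    · have hsub : Set.Ioo (-1 : ℝ) 1 \ (p.roots.toFinset : Set ℝ) ⊆
          (Function.support fun x => p.eval x ^ 2 * jacobiWeight α k2 b x) ∩ Set.Ioc (-1) 1 := by
        intro x hx
        refine ⟨?_, Set.Ioo_subset_Ioc_self hx.1⟩
        have hroot : p.eval x ≠ 0 := fun h => hx.2 (by simpa [hp] using h)
        exact mul_ne_zero (pow_ne_zero 2 hroot) (jacobiWeight_pos hk hx.1).ne'
      refine lt_of_lt_of_le ?_ (measure_mono hsub)
      rw [measure_sdiff_null (Finset.measure_zero _ _)]
      simp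
    · filter_upwards [ae_restrict_mem measurableSet_Ioc] with x hx
      exact mul_nonneg (sq_nonneg _) (jacobiWeight_nonneg hk (Set.Ioc_subset_Icc_self hx))

/-- Integration by parts against `jacobiWeight` for the vector field `(1 - x²) r`. -/
lemma polyIntegral_derivative_jacobiMeasure {α k2 : ℝ} (hα : -1 < α) (hk : k2 ∈ Set.Ioo (0 : ℝ) 1)
    (b : ℝ) (r : ℝ[X]) [IsSymmetricWeight (jacobiMeasure α k2 b)] :
    polyIntegral (jacobiMeasure α k2 b) (derivative ((1 - X ^ 2) * r)) =
      ∫ x, (2 * α * (x * r.eval x) + b * (2 * k2 * x * (1 - x ^ 2) * r.eval x / (1 - k2 * x ^ 2)))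
        ∂(jacobiMeasure α k2 b) := by
  set g : ℝ → ℝ := fun x => (derivative ((1 - X ^ 2) * r)).eval x -
    (2 * α * (x * r.eval x) + b * (2 * k2 * x * (1 - x ^ 2) * r.eval x / (1 - k2 * x ^ 2))) with hg
  have hcont : ContinuousOn (fun x => 2 * α * (x * r.eval x) +
      b * (2 * k2 * x * (1 - x ^ 2) * r.eval x / (1 - k2 * x ^ 2))) (Set.Icc (-1) 1) := by
    refine ContinuousOn.add (by fun_prop) (continuousOn_const.mul (ContinuousOn.div (by fun_prop)
      (by fun_prop) fun x hx => (one_sub_mul_sq_pos hk hx).ne'))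
  have hgc : ContinuousOn g (Set.Icc (-1) 1) := ContinuousOn.sub (by fun_prop) hcont
  have hderiv : ∀ x ∈ Set.Ioo (-1 : ℝ) 1, HasDerivAt (fun x : ℝ => (1 - x ^ 2) ^ (α + 1) *
      (1 - k2 * x ^ 2) ^ b * r.eval x) (g x * jacobiWeight α k2 b x) x := by
    intro x hx
    have hp1 := one_sub_sq_pos hx
    have hp2 := one_sub_mul_sq_pos hk (Set.Ioo_subset_Icc_self hx)
    have h1 : HasDerivAt (fun x : ℝ => 1 - x ^ 2) (-(2 * x)) x := by
      simpa using (hasDerivAt_pow 2 x).const_sub 1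
    have h2 : HasDerivAt (fun x : ℝ => 1 - k2 * x ^ 2) (-(k2 * (2 * x))) x := by
      simpa using ((hasDerivAt_pow 2 x).const_mul k2).const_sub 1
    have h := ((h1.rpow_const (p := α + 1) (Or.inl hp1.ne')).mul
      (h2.rpow_const (p := b) (Or.inl hp2.ne'))).mul (r.hasDerivAt x)
    refine h.congr_deriv ?_
    simp only [Pi.mul_apply, hg, jacobiWeight, derivative_mul, eval_add, eval_mul,
      derivative_sub, derivative_one,
      derivative_X_pow, eval_sub, eval_pow, eval_X, eval_one, eval_zero, eval_C]
    rw [Real.rpow_add_one hp1.ne', Real.rpow_sub_one hp2.ne', add_sub_cancel_right]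
    field_simp
    push_cast
    ring
  have hInt : IntervalIntegrable (fun x => g x * jacobiWeight α k2 b x) volume (-1) 1 := by
    refine (intervalIntegrable_jacobiWeight hα hk b).continuousOn_mul ?_
    rwa [Set.uIcc_of_le (by norm_num)]
  have hFc : ContinuousOn (fun x : ℝ => (1 - x ^ 2) ^ (α + 1) *
      (1 - k2 * x ^ 2) ^ b * r.eval x) (Set.Icc (-1) 1) := by
    refine ((ContinuousOn.rpow_const (by fun_prop) fun x _ => Or.inr (by linarith)).mul
      (ContinuousOn.rpow_const (by fun_prop) fun x hx =>
        Or.inl (one_sub_mul_sq_pos hk hx).ne')).mul r.continuous.continuousOn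
  have hzero := intervalIntegral.integral_eq_sub_of_hasDerivAt_of_le (by norm_num) hFc hderiv hInt
  have h0 : (0 : ℝ) ^ (α + 1) = 0 := Real.zero_rpow (by linarith)
  rw [← integral_jacobiMeasure hk] at hzero
  norm_num [h0] at hzero
  rw [polyIntegral_apply, ← sub_eq_zero, ← integral_sub (integrable_eval _ _)
    (integrable_of_continuousOn _ hcont)]
  exact hzero

lemma X_mul_U_eval (N : ℕ) (x : ℝ) : x * (Chebyshev.U ℝ (2 * N + 1)).eval x =
    (Chebyshev.T ℝ 0).eval x + 2 * ∑ j ∈ Finset.range N, (Chebyshev.T ℝ (2 * (j + 1))).eval x +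
      (Chebyshev.T ℝ (2 * (N + 1))).eval x := by
  induction N with
  | zero => simp [Chebyshev.T_two]; ring
  | succ N ih =>
    have h1 := congrArg (eval x) (Chebyshev.U_eq_two_mul_T_add_U ℝ (2 * N + 1))
    have h2 := eval_T_add_one (2 * N + 3) x
    simp only [eval_add, eval_mul, eval_ofNat] at h1
    rw [show (2 * N + 1 + 2 : ℤ) = 2 * N + 3 by ring] at h1
    rw [show (2 * N + 3 - 1 : ℤ) = 2 * (N + 1) by ring] at h2
    rw [Finset.sum_range_succ]
    push_cast
    rw [show (2 * (N + 1) + 1 : ℤ) = 2 * N + 3 by ring,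
      show (2 * (N + 1 + 1) : ℤ) = 2 * N + 3 + 1 by ring, h1, h2]
    linear_combination ih

lemma eval_T_add_two_add_sub_two (a : ℤ) (x : ℝ) :
    (Chebyshev.T ℝ (a + 2)).eval x + (Chebyshev.T ℝ (a - 2)).eval x =
      2 * (2 * x ^ 2 - 1) * (Chebyshev.T ℝ a).eval x := by
  have h1 := eval_T_add_one (a + 1) x
  have h2 := eval_T_add_one a x
  have h3 := eval_T_add_one (a - 1) x
  rw [show a + 1 + 1 = a + 2 by ring, show a + 1 - 1 = a by ring] at h1
  rw [show a - 1 + 1 = a by ring, show a - 1 - 1 = a - 2 by ring] at h3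
  linear_combination h1 + 2 * x * h2 + h3

lemma abs_eval_T_le_one (a : ℤ) {x : ℝ} (hx : x ∈ Set.Icc (-1 : ℝ) 1) :
    |(Chebyshev.T ℝ a).eval x| ≤ 1 :=
  Chebyshev.abs_eval_T_real_le_one a (abs_le.2 hx)

lemma hasSum_pow_mul_of_recurrence {u c : ℝ} (hu : u ∈ Set.Ioo (0 : ℝ) 1) {t : ℕ → ℝ}
    (h0 : t 0 = 0) (hrec : ∀ p, t (p + 2) = 2 * c * t (p + 1) - t p) {B : ℝ} (hb : ∀ p, |t p| ≤ B)
    (hne : 1 - 2 * u * c + u ^ 2 ≠ 0) :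
    HasSum (fun p => u ^ (p + 1) * t (p + 1)) (u * t 1 / (1 - 2 * u * c + u ^ 2)) := by
  have hsum : Summable fun p => u ^ p * t p := by
    refine Summable.of_norm_bounded ((summable_geometric_of_lt_one hu.1.le hu.2).mul_right B)
      fun p => ?_
    rw [norm_mul, norm_pow, Real.norm_of_nonneg hu.1.le]
    exact mul_le_mul_of_nonneg_left (hb p) (pow_nonneg hu.1.le p)
  have hs1 := (summable_nat_add_iff 1).2 hsum
  have hs2 := (summable_nat_add_iff 2).2 hsum
  rw [hs1.hasSum_iff]
  set S := ∑' p, u ^ (p + 1) * t (p + 1) with hS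
  have e1 : S = u * t 1 + ∑' p, u ^ (p + 2) * t (p + 2) := by
    rw [hS, hs1.tsum_eq_zero_add]
    simp
  have e2 : ∑' p, u ^ p * t p = S := by
    rw [hsum.tsum_eq_zero_add, h0]
    simp [hS]
  have e3 : ∑' p, u ^ (p + 2) * t (p + 2) = 2 * c * u * S - u ^ 2 * S := by
    have h := (hs1.hasSum.mul_left (2 * c * u)).sub (hsum.hasSum.mul_left (u ^ 2))
    rw [e2] at h
    rw [← h.tsum_eq]
    refine tsum_congr fun p => ?_
    rw [hrec]; ring
  rw [eq_div_iff hne]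
  linear_combination e1 + e3

lemma hasSum_vectorField {u x : ℝ} (hu : u ∈ Set.Ioo (0 : ℝ) 1) (hx : x ∈ Set.Icc (-1 : ℝ) 1)
    (N : ℕ) : HasSum (fun p : ℕ => u ^ (p + 1) *
        (Chebyshev.T ℝ (2 * (N - p)) - Chebyshev.T ℝ (2 * (N + p + 2))).eval x)
      (4 * u / (1 + u) ^ 2 * x * (1 - x ^ 2) * (Chebyshev.U ℝ (2 * N + 1)).eval x /
        (1 - 4 * u / (1 + u) ^ 2 * x ^ 2)) := by
  have hpos : 0 < 1 - 2 * u * (2 * x ^ 2 - 1) + u ^ 2 := by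
    have h1 : x ^ 2 ≤ 1 := by nlinarith [hx.1, hx.2]
    nlinarith [hu.1, hu.2, mul_nonneg hu.1.le (sub_nonneg.2 h1)]
  have h := hasSum_pow_mul_of_recurrence hu (c := 2 * x ^ 2 - 1) (B := 2)
    (t := fun p : ℕ => (Chebyshev.T ℝ (2 * (N + 1 - p))).eval x -
      (Chebyshev.T ℝ (2 * (N + 1 + p))).eval x) (by simp) (fun p => ?_) (fun p => ?_) hpos.ne'
  · convert h using 1
    · ext p
      rw [eval_sub]
      push_cast
      ring_nf
    · have h1 := congrArg (eval x) (Chebyshev.one_sub_X_sq_mul_U_eq_pol_in_T ℝ (2 * N + 1))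
      have h2 := eval_T_add_one (2 * N + 1) x
      have h3 := eval_T_add_one (2 * N + 2) x
      have h4 := eval_T_add_one (2 * N + 3) x
      simp only [eval_mul, eval_sub, eval_pow, eval_one, eval_X] at h1
      have ht : (Chebyshev.T ℝ (2 * (N + 1 - (1 : ℕ)))).eval x -
          (Chebyshev.T ℝ (2 * (N + 1 + (1 : ℕ)))).eval x =
          4 * x * (1 - x ^ 2) * (Chebyshev.U ℝ (2 * N + 1)).eval x := by
        have i1 : (2 * (N + 1 - (1 : ℕ)) : ℤ) = 2 * N := by push_cast; ring
        have i2 : (2 * (N + 1 + (1 : ℕ)) : ℤ) = 2 * N + 4 := by push_cast; ring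
        rw [i1, i2]
        rw [show (2 * N + 1 + 1 : ℤ) = 2 * N + 2 by ring, show (2 * N + 1 - 1 : ℤ) = 2 * N by ring]
          at h2
        rw [show (2 * N + 2 + 1 : ℤ) = 2 * N + 3 by ring,
          show (2 * N + 2 - 1 : ℤ) = 2 * N + 1 by ring] at h3
        rw [show (2 * N + 3 + 1 : ℤ) = 2 * N + 4 by ring,
          show (2 * N + 3 - 1 : ℤ) = 2 * N + 2 by ring] at h4
        rw [show (2 * N + 1 + 2 : ℤ) = 2 * N + 3 by ring,
          show (2 * N + 1 + 1 : ℤ) = 2 * N + 2 by ring] at h1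
        linear_combination h2 - h4 + 2 * x * h3 - 4 * x * h1
      simp only [ht]
      have h5 : (0 : ℝ) < 1 + u := by linarith [hu.1]
      have h6 : (1 - 4 * u / (1 + u) ^ 2 * x ^ 2) =
          (1 - 2 * u * (2 * x ^ 2 - 1) + u ^ 2) / (1 + u) ^ 2 := by
        field_simp; ring
      rw [h6]
      field_simp
  · have h1 := eval_T_add_two_add_sub_two (2 * (N + 1 - (p + 1))) x
    have h2 := eval_T_add_two_add_sub_two (2 * (N + 1 + (p + 1))) x
    push_cast
    rw [show (2 * (N + 1 - (p + 1)) + 2 : ℤ) = 2 * (N + 1 - p) by ring,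
      show (2 * (N + 1 - (p + 1)) - 2 : ℤ) = 2 * (N + 1 - (p + 2)) by ring] at h1
    rw [show (2 * (N + 1 + (p + 1)) + 2 : ℤ) = 2 * (N + 1 + (p + 2)) by ring,
      show (2 * (N + 1 + (p + 1)) - 2 : ℤ) = 2 * (N + 1 + p) by ring] at h2
    linear_combination h1 - h2
  · refine (abs_sub _ _).trans ?_
    linarith [abs_eval_T_le_one (2 * (N + 1 - p)) hx, abs_eval_T_le_one (2 * (N + 1 + p)) hx]

/-- Termwise integration of a uniformly convergent series of polynomials. -/
lemma hasSum_polyIntegral_mul (μ : Measure ℝ) [IsSymmetricWeight μ] {c : ℕ → ℝ}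
    (hc : Summable fun p => |c p|) {f : ℕ → ℝ[X]} {B : ℝ}
    (hf : ∀ p, ∀ x ∈ Set.Icc (-1 : ℝ) 1, |(f p).eval x| ≤ B) (q : ℝ[X]) {g : ℝ → ℝ}
    (hg : ∀ x ∈ Set.Icc (-1 : ℝ) 1, HasSum (fun p => c p * (f p).eval x) (g x)) :
    HasSum (fun p => c p * polyIntegral μ (f p * q)) (∫ x, g x * q.eval x ∂μ) := by
  have hae : ∀ᵐ x ∂μ, x ∈ Set.Icc (-1 : ℝ) 1 := IsSymmetricWeight.ae_mem_Icc
  have h := hasSum_integral_of_dominated_convergence (μ := μ)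
    (F := fun p x => c p * (f p).eval x * q.eval x) (f := fun x => g x * q.eval x)
    (fun p x => |c p| * (B * |q.eval x|)) (fun p => ?_) (fun p => ?_) ?_ ?_ ?_
  · simp_rw [mul_assoc, integral_const_mul] at h
    simpa only [polyIntegral_apply, eval_mul] using h
  · exact Continuous.aestronglyMeasurable (by fun_prop)
  · filter_upwards [hae] with x hx
    rw [Real.norm_eq_abs, abs_mul, abs_mul, mul_assoc]
    gcongr
    exact hf p x hx
  · exact Eventually.of_forall fun x => hc.mul_right _
  · simp_rw [tsum_mul_right]
    exact integrable_of_continuousOn μ (Continuous.continuousOn (by fun_prop))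
  · filter_upwards [hae] with x hx
    exact (hg x hx).mul_right _

lemma sum_range_two_mul_add_one {f : ℕ → ℝ} (hf : ∀ j, f (2 * j) = 0) (N : ℕ) :
    ∑ l ∈ Finset.range (2 * N + 1), f l = ∑ j ∈ Finset.range N, f (2 * j + 1) := by
  induction N with
  | zero => simpa using hf 0
  | succ N ih =>
    rw [show 2 * (N + 1) + 1 = 2 * N + 1 + 1 + 1 by ring, Finset.sum_range_succ,
      Finset.sum_range_succ, ih, Finset.sum_range_succ, show 2 * N + 1 + 1 = 2 * (N + 1) by ring,
      hf,
      add_zero]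

/-- The sum of covariances occurring in the loop equation. -/
noncomputable def covSum (μ : Measure ℝ) [IsSymmetricWeight μ] (n N : ℕ) : ℝ :=
  ∑ l ∈ Finset.range (2 * N + 1), chebCov μ n (2 * N + 1 - l) (l + 1)

/-- The loop equation for the even Chebyshev means. -/
lemma loop_equation {α u k2 b : ℝ} (hα : -1 < α) (hu : u ∈ Set.Ioo (0 : ℝ) 1)
    (hk : k2 ∈ Set.Ioo (0 : ℝ) 1) (hk2 : k2 = 4 * u / (1 + u) ^ 2) {μ : Measure ℝ}
    [IsSymmetricWeight μ] (hμ : μ = jacobiMeasure α k2 b) (n N : ℕ) :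
    HasSum (fun p : ℕ => b * (u ^ (p + 1) *
        (chebMean μ n (2 * (N - p)) - chebMean μ n (2 * (N + p + 2)))))
      (-(n * chebMean μ n (2 * (N + 1)) + ∑ j ∈ Finset.range N,
          chebMean μ n (2 * (N - j)) * chebMean μ n (2 * (j + 1)) + covSum μ n N +
        α * (n + 2 * ∑ j ∈ Finset.range N, chebMean μ n (2 * (j + 1)) +
          chebMean μ n (2 * (N + 1))))) := by
  have h1 := polyIntegral_derivative_mul_cdDiag μ n (2 * N + 1)
  push_cast at h1
  have hconv := sum_range_two_mul_add_one (N := N) (f := fun l : ℕ =>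
    chebMean μ n (2 * N + 1 - l) * chebMean μ n (l + 1)) fun j => by
      rw [chebMean_odd μ n (a := ((2 * j : ℕ) : ℤ) + 1) ⟨j, by push_cast; ring⟩, mul_zero]
  rw [Finset.sum_add_distrib, hconv, ← covSum, mul_assoc (1 - X ^ 2)] at h1
  have hsum := hasSum_polyIntegral_mul μ (c := fun p : ℕ => u ^ (p + 1))
    (f := fun p : ℕ => Chebyshev.T ℝ (2 * (N - p)) - Chebyshev.T ℝ (2 * (N + p + 2))) (B := 2)
    (by
      simp_rw [abs_of_pos (pow_pos hu.1 _), pow_succ]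
      exact (summable_geometric_of_lt_one hu.1.le hu.2).mul_right _)
    (fun p x hx => by
      rw [eval_sub]
      refine (abs_sub _ _).trans ?_
      linarith [abs_eval_T_le_one (2 * (N - p)) hx, abs_eval_T_le_one (2 * (N + p + 2)) hx])
    (cdDiag μ n) fun x hx => hasSum_vectorField hu hx N
  simp only [sub_mul, map_sub, polyIntegral_T_mul_cdDiag] at hsum
  have hxU : ∫ x, x * (Chebyshev.U ℝ (2 * N + 1)).eval x * (cdDiag μ n).eval x ∂μ =
      n + 2 * ∑ j ∈ Finset.range N, chebMean μ n (2 * (j + 1)) + chebMean μ n (2 * (N + 1)) := by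
    have : ∀ x, x * (Chebyshev.U ℝ (2 * N + 1)).eval x * (cdDiag μ n).eval x =
        (Chebyshev.T ℝ 0 * cdDiag μ n + C 2 * ∑ j ∈ Finset.range N,
          Chebyshev.T ℝ (2 * (j + 1)) * cdDiag μ n + Chebyshev.T ℝ (2 * (N + 1)) *
            cdDiag μ n).eval x := by
      intro x
      rw [X_mul_U_eval]
      simp only [eval_add, eval_mul, eval_C, eval_finsetSum, ← Finset.sum_mul]
      ring
    simp_rw [this]
    rw [← polyIntegral_apply, map_add, map_add, polyIntegral_C_mul, map_sum]
    simp only [polyIntegral_T_mul_cdDiag, chebMean_zero]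
  have hibp : polyIntegral μ (derivative ((1 - X ^ 2) * (Chebyshev.U ℝ (2 * N + 1) * cdDiag μ n))) =
      ∫ x, (2 * α * (x * (Chebyshev.U ℝ (2 * N + 1) * cdDiag μ n).eval x) +
        b * (2 * k2 * x * (1 - x ^ 2) * (Chebyshev.U ℝ (2 * N + 1) * cdDiag μ n).eval x /
          (1 - k2 * x ^ 2))) ∂μ := by
    subst hμ
    exact polyIntegral_derivative_jacobiMeasure hα hk b _
  rw [hibp] at h1
  simp only [← hk2] at hsum
  have hi1 : Integrable (fun x => 2 * α * (x * (Chebyshev.U ℝ (2 * N + 1)).eval x *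
      (cdDiag μ n).eval x)) μ :=
    integrable_of_continuousOn μ (Continuous.continuousOn (by fun_prop))
  have hi2 : Integrable (fun x => 2 * b * (k2 * x * (1 - x ^ 2) *
      (Chebyshev.U ℝ (2 * N + 1)).eval x / (1 - k2 * x ^ 2) * (cdDiag μ n).eval x)) μ :=
    integrable_of_continuousOn μ (continuousOn_const.mul ((ContinuousOn.div (by fun_prop)
      (by fun_prop) fun x hx => (one_sub_mul_sq_pos hk hx).ne').mul (by fun_prop)))
  have hsplit : ∀ x, 2 * α * (x * (Chebyshev.U ℝ (2 * N + 1) * cdDiag μ n).eval x) +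
      b * (2 * k2 * x * (1 - x ^ 2) * (Chebyshev.U ℝ (2 * N + 1) * cdDiag μ n).eval x /
        (1 - k2 * x ^ 2)) =
      2 * α * (x * (Chebyshev.U ℝ (2 * N + 1)).eval x * (cdDiag μ n).eval x) +
      2 * b * (k2 * x * (1 - x ^ 2) * (Chebyshev.U ℝ (2 * N + 1)).eval x / (1 - k2 * x ^ 2) *
        (cdDiag μ n).eval x) := fun x => by
    rw [eval_mul]; ring
  simp_rw [hsplit] at h1
  rw [integral_add hi1 hi2, integral_const_mul, integral_const_mul, hxU] at h1
  have hres := hsum.mul_left b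
  rw [hres.summable.hasSum_iff, hres.tsum_eq]
  have e1 : ∀ j : ℕ, (2 * N + 1 - (2 * j + 1 : ℕ) : ℤ) = 2 * (N - j) := fun j => by
    push_cast; ring
  have e2 : ∀ j : ℕ, ((2 * j + 1 : ℕ) + 1 : ℤ) = 2 * (j + 1) := fun j => by
    push_cast; ring
  simp only [e1, e2, show (2 * N + 1 + 1 : ℤ) = 2 * (N + 1) by ring] at h1
  linarith

/-- Solutions `y` of the loop equations at level `n`, with covariance term `c`. -/
structure IsLoopSolution (α b u : ℝ) (n : ℕ) (c : ℕ → ℝ) (y : ℤ → ℝ) : Prop where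
  map_neg : ∀ m, y (-m) = y m
  map_zero : y 0 = n
  abs_apply_le : ∀ m, |y m| ≤ n
  abs_cov_le : ∀ N : ℕ, |c N| ≤ 8 * ((N : ℝ) + 1) ^ 3
  hasSum : ∀ N : ℕ, HasSum (fun p : ℕ => b * (u ^ (p + 1) * (y (N - p) - y (N + p + 2))))
    (-(n * y (N + 1) + ∑ j ∈ Finset.range N, y (N - j) * y (j + 1) + c N +
      α * (n + 2 * ∑ j ∈ Finset.range N, y (j + 1) + y (N + 1))))

lemma abs_covSum_le (μ : Measure ℝ) [IsSymmetricWeight μ] (n N : ℕ) :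
    |covSum μ n N| ≤ 8 * ((N : ℝ) + 1) ^ 3 := by
  have h1 : |covSum μ n N| ≤ ∑ l ∈ Finset.range (2 * N + 1), ((2 * N + 1 : ℕ) : ℝ) ^ 2 := by
    refine (Finset.abs_sum_le_sum_abs _ _).trans (Finset.sum_le_sum fun l hl => ?_)
    have hl' : l < 2 * N + 1 := Finset.mem_range.1 hl
    have hc : (2 * N + 1 - l : ℤ) = ((2 * N + 1 - l : ℕ) : ℤ) := by omega
    rw [hc]
    refine (abs_chebCov_le μ n _ _).trans ?_
    gcongr
    omega
  refine h1.trans ?_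
  rw [Finset.sum_const, Finset.card_range, nsmul_eq_mul, ← pow_succ']
  push_cast
  have : (2 * (N : ℝ) + 1) ^ 3 ≤ (2 * (N + 1)) ^ 3 := by gcongr; linarith
  linarith [mul_pow (2 : ℝ) (N + 1) 3]

lemma isLoopSolution_chebMean {α u k2 b : ℝ} (hα : -1 < α) (hu : u ∈ Set.Ioo (0 : ℝ) 1)
    (hk : k2 ∈ Set.Ioo (0 : ℝ) 1) (hk2 : k2 = 4 * u / (1 + u) ^ 2) {μ : Measure ℝ}
    [IsSymmetricWeight μ] (hμ : μ = jacobiMeasure α k2 b) (n : ℕ) :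
    IsLoopSolution α b u n (covSum μ n) fun m => chebMean μ n (2 * m) where
  map_neg m := by rw [mul_neg, chebMean_neg]
  map_zero := by rw [mul_zero, chebMean_zero]
  abs_apply_le m := abs_chebMean_le μ n _
  abs_cov_le := abs_covSum_le μ n
  hasSum N := loop_equation hα hu hk hk2 hμ n N

/-- A quadratic recursive inequality with small coupling preserves exponential growth. -/
lemma exists_forall_le_mul_pow (K : ℝ) {ρ : ℝ} (hρ : 1 < ρ) :
    ∃ A : ℝ, 0 < A ∧ ∀ n : ℕ, 0 < n → ∀ x : ℕ → ℝ, (∀ m, 0 ≤ x m) → (∀ m, x m ≤ n) →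
      (∀ N : ℕ, n * x (N + 1) ≤ n * (K * ((N : ℝ) + 1) ^ 3) +
        ∑ j ∈ Finset.range N, x (N - j) * x (j + 1)) →
      ∀ N, x (N + 1) ≤ A * ρ ^ (N + 1) := by
  have hρ0 : 0 < ρ := by linarith
  obtain ⟨M, hM⟩ : ∃ M : ℝ, ∀ m : ℕ, (m : ℝ) ^ 3 / ρ ^ m ≤ M := by
    obtain ⟨M, hM⟩ := (tendsto_pow_const_div_const_pow_of_one_lt 3 hρ).bddAbove_range
    exact ⟨M, fun m => hM ⟨m, rfl⟩⟩
  have hM0 : 0 ≤ M := le_trans (by positivity) (hM 0)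
  have hM' : ∀ m : ℕ, (m : ℝ) ^ 3 ≤ M * ρ ^ m := fun m =>
    (div_le_iff₀ (pow_pos hρ0 m)).1 (hM m)
  set A : ℝ := 2 * |K| * M + 1 with hA
  have hA1 : 1 ≤ A := by
    have : 0 ≤ 2 * |K| * M := by positivity
    linarith
  refine ⟨A * (2 * M + 1), by positivity, fun n hn x hx0 hxn hrec N => ?_⟩
  have hn' : (0 : ℝ) < n := by exact_mod_cast hn
  have key : ∀ N : ℕ, 2 * A * ((N : ℝ) + 1) ≤ n → x (N + 1) ≤ A * ρ ^ (N + 1) := by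
    intro N
    induction N using Nat.strong_induction_on with
    | _ N ih =>
      intro hN
      have hconv : ∑ j ∈ Finset.range N, x (N - j) * x (j + 1) ≤
          ∑ j ∈ Finset.range N, A ^ 2 * ρ ^ (N + 1) := by
        refine Finset.sum_le_sum fun j hj => ?_
        have hj' : j < N := Finset.mem_range.1 hj
        have e : N - j = (N - j - 1) + 1 := by omega
        have c1 : ((N - j - 1 : ℕ) : ℝ) ≤ N := by exact_mod_cast (by omega : N - j - 1 ≤ N)
        have c2 : (j : ℝ) ≤ N := by exact_mod_cast hj'.le
        have h1 := ih (N - j - 1) (by omega) (le_trans (by gcongr) hN)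
        have h2 := ih j hj' (le_trans (by gcongr) hN)
        rw [← e] at h1
        calc x (N - j) * x (j + 1) ≤ (A * ρ ^ (N - j)) * (A * ρ ^ (j + 1)) :=
              mul_le_mul h1 h2 (hx0 _) (by positivity)
          _ = A ^ 2 * ρ ^ (N + 1) := by
              rw [show N + 1 = (N - j) + (j + 1) by omega, pow_add]
              ring
      rw [Finset.sum_const, Finset.card_range, nsmul_eq_mul] at hconv
      have hK : K * ((N : ℝ) + 1) ^ 3 ≤ A / 2 * ρ ^ (N + 1) := by
        have h3 := hM' (N + 1)
        push_cast at h3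
        calc K * ((N : ℝ) + 1) ^ 3 ≤ |K| * (M * ρ ^ (N + 1)) :=
              mul_le_mul (le_abs_self K) h3 (by positivity) (abs_nonneg K)
          _ ≤ A / 2 * ρ ^ (N + 1) := by
              rw [← mul_assoc]
              gcongr
              rw [hA]; linarith
      have hP : 0 < A * ρ ^ (N + 1) := by positivity
      have : (N : ℝ) * (A ^ 2 * ρ ^ (N + 1)) ≤ n * (A * ρ ^ (N + 1) / 2) := by
        have := mul_le_mul_of_nonneg_right hN hP.le
        nlinarith [mul_pos (by linarith : 0 < A) hP]
      have h4 := hrec N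
      have h5 := mul_le_mul_of_nonneg_left hK hn'.le
      refine le_of_mul_le_mul_left ?_ hn'
      nlinarith
  by_cases hN : 2 * A * ((N : ℝ) + 1) ≤ n
  · refine (key N hN).trans ?_
    gcongr
    nlinarith
  · refine (hxn _).trans ((not_le.1 hN).le.trans ?_)
    have h3 := hM' (N + 1)
    push_cast at h3
    have h6 : (N : ℝ) + 1 ≤ ((N : ℝ) + 1) ^ 3 :=
      le_self_pow₀ (by linarith [N.cast_nonneg (α := ℝ)]) (by norm_num)
    have hP : 0 < ρ ^ (N + 1) := by positivity
    calc 2 * A * ((N : ℝ) + 1) ≤ 2 * A * (M * ρ ^ (N + 1)) := by gcongr; linarith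
      _ ≤ A * (2 * M + 1) * ρ ^ (N + 1) := by nlinarith

lemma hasSum_pow_succ {u : ℝ} (hu : u ∈ Set.Ioo (0 : ℝ) 1) :
    HasSum (fun p : ℕ => u ^ (p + 1)) (u / (1 - u)) := by
  simp_rw [pow_succ', div_eq_mul_inv]
  exact (hasSum_geometric_of_lt_one hu.1.le hu.2).mul_left u

namespace IsLoopSolution

variable {α b u B : ℝ} {n : ℕ} {c : ℕ → ℝ} {y : ℤ → ℝ}

lemma mul_abs_le (h : IsLoopSolution α b u n c y) (hn : 0 < n) (hu : u ∈ Set.Ioo (0 : ℝ) 1)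
    (hb : |b| ≤ B) (N : ℕ) :
    n * |y (N + 1)| ≤ n * ((8 + 2 * |α| + 2 * B * (u / (1 - u))) * ((N : ℝ) + 1) ^ 3) +
      ∑ j ∈ Finset.range N, |y (N - j)| * |y (j + 1)| := by
  have hn1 : (1 : ℝ) ≤ n := by exact_mod_cast hn
  have hB : 0 ≤ B := (abs_nonneg b).trans hb
  have hs := h.hasSum N
  have hu1 : 0 < 1 - u := by linarith [hu.2]
  have hts : |-(n * y (N + 1) + ∑ j ∈ Finset.range N, y (N - j) * y (j + 1) + c N +
      α * (n + 2 * ∑ j ∈ Finset.range N, y (j + 1) + y (N + 1)))| ≤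
        2 * B * n * (u / (1 - u)) := by
    rw [← hs.tsum_eq]
    refine tsum_of_norm_bounded (f := fun p : ℕ =>
      b * (u ^ (p + 1) * (y (N - p) - y (N + p + 2))))
      ((hasSum_pow_succ hu).mul_left (2 * B * n)) fun p => ?_
    rw [Real.norm_eq_abs, abs_mul, abs_mul, abs_of_pos (pow_pos hu.1 _)]
    have h1 : |y (N - p) - y (N + p + 2)| ≤ 2 * n :=
      (abs_sub _ _).trans (by linarith [h.abs_apply_le (N - p), h.abs_apply_le (N + p + 2)])
    calc |b| * (u ^ (p + 1) * |y (N - p) - y (N + p + 2)|) ≤ B * (u ^ (p + 1) * (2 * n)) := by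
          have := hu.1.le
          gcongr
      _ = 2 * B * n * u ^ (p + 1) := by ring
  have h2 : |∑ j ∈ Finset.range N, y (N - j) * y (j + 1)| ≤
      ∑ j ∈ Finset.range N, |y (N - j)| * |y (j + 1)| := by
    simp_rw [← abs_mul]
    exact Finset.abs_sum_le_sum_abs _ _
  have h3 : |∑ j ∈ Finset.range N, y (j + 1)| ≤ N * n := by
    refine (Finset.abs_sum_le_sum_abs _ _).trans ?_
    refine (Finset.sum_le_sum fun (j : ℕ) _ => h.abs_apply_le (j + 1)).trans ?_
    simp
  have h4 : |α * (n + 2 * ∑ j ∈ Finset.range N, y (j + 1) + y (N + 1))| ≤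
      n * (2 * |α| * ((N : ℝ) + 1)) := by
    rw [abs_mul]
    have : |(n : ℝ) + 2 * ∑ j ∈ Finset.range N, y (j + 1) + y (N + 1)| ≤ 2 * n * (N + 1) := by
      have h5 := abs_le.1 h3
      have h6 := abs_le.1 (h.abs_apply_le (N + 1))
      rw [abs_le]
      constructor <;> nlinarith
    calc |α| * _ ≤ |α| * (2 * n * (N + 1)) := by gcongr
      _ = _ := by ring
  have hP : (N : ℝ) + 1 ≤ ((N : ℝ) + 1) ^ 3 :=
    le_self_pow₀ (by linarith [N.cast_nonneg (α := ℝ)]) (by norm_num)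
  have hP1 : 1 ≤ ((N : ℝ) + 1) ^ 3 := by linarith [N.cast_nonneg (α := ℝ)]
  have h7 : n * (2 * |α| * ((N : ℝ) + 1)) ≤ n * (2 * |α| * ((N : ℝ) + 1) ^ 3) := by gcongr
  have h8 : |c N| ≤ n * (8 * ((N : ℝ) + 1) ^ 3) :=
    (h.abs_cov_le N).trans (le_mul_of_one_le_left (by positivity) hn1)
  have h9 : 2 * B * n * (u / (1 - u)) ≤ n * (2 * B * (u / (1 - u)) * ((N : ℝ) + 1) ^ 3) := by
    have : 0 ≤ n * (2 * B * (u / (1 - u))) := by have := hu.1.le; positivity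
    nlinarith
  have e : n * |y (N + 1)| = |n * y (N + 1)| := by rw [abs_mul, Nat.abs_cast]
  rw [e]
  have t := abs_le.1 hts
  have t2 := abs_le.1 h2
  have t4 := abs_le.1 h4
  have t8 := abs_le.1 h8
  rw [abs_le]
  constructor <;> linarith

end IsLoopSolution

/-- Exponential bounds for loop solutions, uniform in `n` and in bounded `b`. -/
lemma exists_abs_le_mul_pow (α B : ℝ) {u ρ : ℝ} (hu : u ∈ Set.Ioo (0 : ℝ) 1) (hρ : 1 < ρ) :
    ∃ A : ℝ, 0 < A ∧ ∀ (b : ℝ) (n : ℕ) (c : ℕ → ℝ) (y : ℤ → ℝ), |b| ≤ B → 0 < n →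
      IsLoopSolution α b u n c y → ∀ m : ℤ, m ≠ 0 → |y m| ≤ A * ρ ^ m.natAbs := by
  obtain ⟨A, hA, h⟩ := exists_forall_le_mul_pow (8 + 2 * |α| + 2 * B * (u / (1 - u))) hρ
  refine ⟨A, hA, fun b n c y hb hn hy m hm => ?_⟩
  have key := h n hn (fun m => |y m|) (fun _ => abs_nonneg _)
    (fun m => hy.abs_apply_le m) fun N => by
    have := hy.mul_abs_le hn hu hb N
    push_cast
    refine this.trans_eq ?_
    congr 1
    refine Finset.sum_congr rfl fun j hj => ?_
    rw [Nat.cast_sub (Finset.mem_range.1 hj).le]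
  obtain ⟨N, hN⟩ : ∃ N : ℕ, m.natAbs = N + 1 := ⟨m.natAbs - 1, by omega⟩
  have := key N
  have e : y m = y ((N + 1 : ℕ) : ℤ) := by
    rw [← hN]
    rcases Int.natAbs_eq m with h1 | h1
    · rw [← h1]
    · rw [← neg_eq_iff_eq_neg.2 h1, hy.map_neg]
  rw [e, hN]
  exact this

/-- The function `y` with its value at `0` replaced by `0`. -/
def puncture (y : ℤ → ℝ) (m : ℤ) : ℝ := if m = 0 then 0 else y m

lemma puncture_of_ne {y : ℤ → ℝ} {m : ℤ} (hm : m ≠ 0) : puncture y m = y m := if_neg hm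

lemma IsLoopSolution.hasSum_puncture {α b u : ℝ} {n : ℕ} {c : ℕ → ℝ} {y : ℤ → ℝ}
    (h : IsLoopSolution α b u n c y) (N : ℕ) :
    HasSum (fun p : ℕ => b * (u ^ (p + 1) * (puncture y (N - p) - puncture y (N + p + 2))))
      (-(n * (y (N + 1) + α + b * u ^ (N + 1)) + ∑ j ∈ Finset.range N, y (N - j) * y (j + 1) +
        c N + α * (2 * ∑ j ∈ Finset.range N, y (j + 1) + y (N + 1)))) := by
  have h1 := (h.hasSum N).sub (hasSum_ite_eq N (b * u ^ (N + 1) * (n : ℝ)))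
  have e : (fun p : ℕ => b * (u ^ (p + 1) * (puncture y (N - p) - puncture y (N + p + 2)))) =
      fun p : ℕ => b * (u ^ (p + 1) * (y (N - p) - y (N + p + 2))) -
        if p = N then b * u ^ (N + 1) * (n : ℝ) else 0 := by
    funext p
    rw [puncture_of_ne (m := N + p + 2) (by omega)]
    by_cases hp : p = N
    · subst hp
      rw [puncture, if_pos (sub_self _), if_pos rfl, sub_self, h.map_zero]
      ring
    · rw [puncture_of_ne (by omega), if_neg hp, sub_zero]
  rw [e, h1.summable.hasSum_iff, h1.tsum_eq]
  ring

lemma abs_puncture_le {y : ℤ → ℝ} {A ρ : ℝ} (hA : 0 < A) (hρ : 1 < ρ)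
    (hy : ∀ m : ℤ, m ≠ 0 → |y m| ≤ A * ρ ^ m.natAbs) {m : ℤ} {k : ℕ} (hk : m.natAbs ≤ k) :
    |puncture y m| ≤ A * ρ ^ k := by
  by_cases hm : m = 0
  · rw [puncture, if_pos hm, abs_zero]
    positivity
  · rw [puncture_of_ne hm]
    refine (hy m hm).trans ?_
    gcongr
    exact hρ.le

lemma abs_term_puncture_le {y : ℤ → ℝ} {A B b u ρ : ℝ} (hA : 0 < A) (hρ : 1 < ρ)
    (hu : u ∈ Set.Ioo (0 : ℝ) 1) (hb : |b| ≤ B)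
    (hy : ∀ m : ℤ, m ≠ 0 → |y m| ≤ A * ρ ^ m.natAbs) (N p : ℕ) :
    |b * (u ^ (p + 1) * (puncture y (N - p) - puncture y (N + p + 2)))| ≤
      2 * A * B * ρ ^ (N + 1) * (u * ρ) ^ (p + 1) := by
  have h1 := abs_puncture_le hA hρ hy (m := N - p) (k := N + p + 2) (by omega)
  have h2 := abs_puncture_le hA hρ hy (m := N + p + 2) (k := N + p + 2) (by omega)
  rw [abs_mul, abs_mul, abs_of_pos (pow_pos hu.1 _)]
  have h3 : |puncture y (N - p) - puncture y (N + p + 2)| ≤ 2 * (A * ρ ^ (N + p + 2)) :=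
    (abs_sub _ _).trans (by linarith)
  have hu0 := hu.1.le
  have hB : 0 ≤ B := (abs_nonneg b).trans hb
  calc _ ≤ B * (u ^ (p + 1) * (2 * (A * ρ ^ (N + p + 2)))) := by gcongr
    _ = _ := by rw [mul_pow, show N + p + 2 = (N + 1) + (p + 1) by ring, pow_add]; ring

/-- First order asymptotics of loop solutions, with uniform error control. -/
lemma exists_abs_excess_le (α B : ℝ) {u ρ : ℝ} (hu : u ∈ Set.Ioo (0 : ℝ) 1) (hρ : 1 < ρ)
    (huρ : u * ρ < 1) :
    ∃ A : ℝ, 0 < A ∧ ∀ (b : ℝ) (n : ℕ) (c : ℕ → ℝ) (y : ℤ → ℝ), |b| ≤ B → 0 < n →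
      IsLoopSolution α b u n c y → ∀ N : ℕ,
        |n * (y (N + 1) + α + b * u ^ (N + 1))| ≤ A * (((N : ℝ) + 1) ^ 3 * ρ ^ (N + 1)) := by
  obtain ⟨A, hA, h⟩ := exists_abs_le_mul_pow α B hu hρ
  have hq : u * ρ ∈ Set.Ioo (0 : ℝ) 1 := ⟨mul_pos hu.1 (by linarith), huρ⟩
  have hq1 : 0 ≤ u * ρ / (1 - u * ρ) := div_nonneg hq.1.le (by linarith)
  refine ⟨A ^ 2 + 8 + 3 * |α| * A + 2 * A * |B| * (u * ρ / (1 - u * ρ)), by positivity,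
    fun b n c y hb hn hy N => ?_⟩
  have hB : 0 ≤ B := (abs_nonneg b).trans hb
  have hy' := h b n c y hb hn hy
  have hsucc : ∀ j : ℕ, |y (j + 1)| ≤ A * ρ ^ (j + 1) := fun j => hy' (j + 1) (by omega)
  have hs := hy.hasSum_puncture N
  have hts := tsum_of_norm_bounded (f := fun p : ℕ => b * (u ^ (p + 1) *
    (puncture y (N - p) - puncture y (N + p + 2))))
    ((hasSum_pow_succ hq).mul_left (2 * A * B * ρ ^ (N + 1)))
    fun p => abs_term_puncture_le hA hρ hu hb hy' N p
  rw [hs.tsum_eq, Real.norm_eq_abs] at hts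
  set P : ℝ := ((N : ℝ) + 1) ^ 3 with hPdef
  set R : ℝ := ρ ^ (N + 1) with hR
  have hN0 : (0 : ℝ) ≤ N := N.cast_nonneg
  have hP : (N : ℝ) + 1 ≤ P := le_self_pow₀ (by linarith) (by norm_num)
  have hR1 : 1 ≤ R := one_le_pow₀ hρ.le
  have h2 : |∑ j ∈ Finset.range N, y (N - j) * y (j + 1)| ≤ N * (A ^ 2 * R) := by
    refine (Finset.abs_sum_le_sum_abs _ _).trans ?_
    refine (Finset.sum_le_sum (g := fun _ => A ^ 2 * R) fun (j : ℕ) hj => ?_).trans_eq (by simp)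
    have hj' : j < N := Finset.mem_range.1 hj
    have h1 := hy' (N - j) (by omega)
    rw [show (N - j : ℤ).natAbs = N - j by omega] at h1
    rw [abs_mul]
    calc _ ≤ (A * ρ ^ (N - j)) * (A * ρ ^ (j + 1)) := by
          have := hsucc j
          gcongr
      _ = _ := by
          rw [hR, show N + 1 = (N - j) + (j + 1) by omega, pow_add]
          ring
  have h3 : |∑ j ∈ Finset.range N, y (j + 1)| ≤ N * (A * R) := by
    refine (Finset.abs_sum_le_sum_abs _ _).trans ?_
    refine (Finset.sum_le_sum (g := fun _ => A * R) fun (j : ℕ) hj => ?_).trans_eq (by simp)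
    have hj' : j < N := Finset.mem_range.1 hj
    refine (hsucc j).trans ?_
    rw [hR]
    gcongr
    exact hρ.le
  have h4 : |α * (2 * ∑ j ∈ Finset.range N, y (j + 1) + y (N + 1))| ≤ 3 * |α| * A * (P * R) := by
    have : |2 * ∑ j ∈ Finset.range N, y (j + 1) + y (N + 1)| ≤ 3 * A * (P * R) := by
      have h5 := abs_le.1 h3
      have h6 := abs_le.1 (hsucc N)
      have h7 : ((N : ℝ) + 1) * (A * R) ≤ P * (A * R) := by gcongr
      have h8 : 0 ≤ N * (A * R) := by positivity
      have h9 : 0 < A * R := by positivity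
      rw [abs_le]
      constructor <;> nlinarith
    rw [abs_mul]
    calc _ ≤ |α| * (3 * A * (P * R)) := by gcongr
      _ = _ := by ring
  have h5 : N * (A ^ 2 * R) ≤ A ^ 2 * (P * R) := by
    have : N * (A ^ 2 * R) ≤ P * (A ^ 2 * R) := by gcongr; linarith
    linarith
  have h6 : |c N| ≤ 8 * (P * R) := (hy.abs_cov_le N).trans (by
    have : P * 1 ≤ P * R := by gcongr
    linarith)
  have h7 : 2 * A * B * R * (u * ρ / (1 - u * ρ)) ≤
      2 * A * |B| * (u * ρ / (1 - u * ρ)) * (P * R) := by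
    rw [abs_of_nonneg hB]
    have h8 : 1 * R ≤ P * R := by gcongr; linarith
    have h9 : 0 ≤ 2 * A * B * (u * ρ / (1 - u * ρ)) := by positivity
    nlinarith
  have t := abs_le.1 hts
  have t2 := abs_le.1 (h2.trans h5)
  have t4 := abs_le.1 h4
  have t6 := abs_le.1 h6
  rw [abs_le]
  constructor <;> linarith

/-- The limit of the loop solutions as `n → ∞`. -/
def loopLimit (α b u : ℝ) (m : ℤ) : ℝ := -α - b * u ^ m.natAbs

lemma hasSum_loopLimit {u : ℝ} (α b : ℝ) (hu : u ∈ Set.Ioo (0 : ℝ) 1) (N : ℕ) :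
    HasSum (fun p : ℕ => b * (u ^ (p + 1) *
      (puncture (loopLimit α b u) (N - p) - puncture (loopLimit α b u) (N + p + 2))))
      (b * (u ^ (N + 1) * (α - N * b))) := by
  refine HasSum.mul_left b ?_
  have hu2 : u ^ 2 ∈ Set.Ioo (0 : ℝ) 1 := ⟨pow_pos hu.1 2, pow_lt_one₀ hu.1.le hu.2 two_ne_zero⟩
  have hgeom := hasSum_pow_succ hu2
  set S := u ^ 2 / (1 - u ^ 2) with hS
  have h1 : HasSum (fun p : ℕ => u ^ (p + 1) * (α + puncture (loopLimit α b u) (N - p)))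
      (u ^ (N + 1) * (α - N * b) - b * u ^ (N + 1) * S) := by
    rw [← hasSum_nat_add_iff' (N + 1)]
    have hlt : ∀ p ∈ Finset.range N, u ^ (p + 1) * (α + puncture (loopLimit α b u) (N - p)) =
        -b * u ^ (N + 1) := by
      intro p hp
      have hp' := Finset.mem_range.1 hp
      rw [puncture_of_ne (by omega), loopLimit, show (N - p : ℤ).natAbs = N - p by omega,
        show N + 1 = (p + 1) + (N - p) by omega, pow_add]
      ring
    rw [Finset.sum_range_succ, Finset.sum_congr rfl hlt, Finset.sum_const, Finset.card_range,
      nsmul_eq_mul, sub_self, puncture, if_pos rfl]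
    have h2 := hgeom.mul_left (-b * u ^ (N + 1))
    have e : (fun p : ℕ => u ^ (p + (N + 1) + 1) *
        (α + puncture (loopLimit α b u) (N - (p + (N + 1) : ℕ)))) =
        fun p : ℕ => -b * u ^ (N + 1) * (u ^ 2) ^ (p + 1) := by
      funext p
      rw [puncture_of_ne (by omega), loopLimit,
        show (N - (p + (N + 1) : ℕ) : ℤ).natAbs = p + 1 by omega, ← pow_mul]
      ring
    rw [e, h2.summable.hasSum_iff, h2.tsum_eq]
    ring
  have h2 := h1.add (hgeom.mul_left (b * u ^ (N + 1)))
  have e : (fun p : ℕ => u ^ (p + 1) *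
      (puncture (loopLimit α b u) (N - p) - puncture (loopLimit α b u) (N + p + 2))) =
      fun p : ℕ => u ^ (p + 1) * (α + puncture (loopLimit α b u) (N - p)) +
        b * u ^ (N + 1) * (u ^ 2) ^ (p + 1) := by
    funext p
    rw [puncture_of_ne (m := N + p + 2) (by omega), loopLimit,
      show (N + p + 2 : ℤ).natAbs = N + p + 2 by omega, ← pow_mul]
    ring
  rw [e, h2.summable.hasSum_iff, h2.tsum_eq]
  ring

lemma exists_one_lt_mul_lt_one {u : ℝ} (hu : u ∈ Set.Ioo (0 : ℝ) 1) :
    ∃ ρ : ℝ, 1 < ρ ∧ u * ρ < 1 := by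
  obtain ⟨ρ, h1, h2⟩ := exists_between (one_lt_one_div hu.1 hu.2)
  exact ⟨ρ, h1, by rwa [lt_div_iff₀' hu.1] at h2⟩

section Limits

variable {α b u : ℝ} {c : ℕ → ℕ → ℝ} {y : ℕ → ℤ → ℝ}

lemma tendsto_loopSolution (hu : u ∈ Set.Ioo (0 : ℝ) 1)
    (h : ∀ n, IsLoopSolution α b u n (c n) (y n)) {m : ℤ} (hm : m ≠ 0) :
    Tendsto (fun n => y n m) atTop (𝓝 (loopLimit α b u m)) := by
  obtain ⟨ρ, hρ, huρ⟩ := exists_one_lt_mul_lt_one hu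
  obtain ⟨A, hA, hex⟩ := exists_abs_excess_le α |b| hu hρ huρ
  obtain ⟨N, hN⟩ : ∃ N : ℕ, m.natAbs = N + 1 := ⟨m.natAbs - 1, by omega⟩
  have e : ∀ n, y n m = y n (N + 1) := fun n => by
    rcases Int.natAbs_eq m with h1 | h1
    · rw [h1, hN]; norm_cast
    · rw [h1, hN, (h n).map_neg]; norm_cast
  rw [tendsto_iff_norm_sub_tendsto_zero]
  have hlim : Tendsto (fun n : ℕ => A * (((N : ℝ) + 1) ^ 3 * ρ ^ (N + 1)) / (n : ℝ)) atTop (𝓝 0) :=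
    tendsto_const_div_atTop_nhds_zero_nat _
  refine squeeze_zero' (Eventually.of_forall fun n => norm_nonneg _) ?_ hlim
  filter_upwards [eventually_gt_atTop 0] with n hn
  have hn' : (0 : ℝ) < n := by exact_mod_cast hn
  have := hex b n _ _ le_rfl hn (h n) N
  rw [abs_mul, Nat.abs_cast] at this
  rw [le_div_iff₀' hn', e, loopLimit, hN, Real.norm_eq_abs]
  rwa [show y n (N + 1) - (-α - b * u ^ (N + 1)) = y n (N + 1) + α + b * u ^ (N + 1) by ring]

lemma tendsto_excess (hu : u ∈ Set.Ioo (0 : ℝ) 1)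
    (h : ∀ n, IsLoopSolution α b u n (c n) (y n))
    (hc : ∀ N : ℕ, Tendsto (fun n => c n N) atTop (𝓝 (((N : ℝ) + 1) / 4))) (N : ℕ) :
    Tendsto (fun n : ℕ => n * (y n (N + 1) + α + b * u ^ (N + 1))) atTop
      (𝓝 (((N : ℝ) + 1) * (4 * α ^ 2 - 1) / 4)) := by
  obtain ⟨ρ, hρ, huρ⟩ := exists_one_lt_mul_lt_one hu
  obtain ⟨A, hA, hexp⟩ := exists_abs_le_mul_pow α |b| hu hρ
  have hq : u * ρ ∈ Set.Ioo (0 : ℝ) 1 := ⟨mul_pos hu.1 (by linarith), huρ⟩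
  have hy : ∀ {m : ℤ}, m ≠ 0 → Tendsto (fun n => y n m) atTop (𝓝 (loopLimit α b u m)) :=
    fun hm => tendsto_loopSolution hu h hm
  have hz : ∀ m : ℤ, Tendsto (fun n => puncture (y n) m) atTop
      (𝓝 (puncture (loopLimit α b u) m)) := by
    intro m
    by_cases hm : m = 0
    · simp [puncture, hm]
    · simpa only [puncture_of_ne hm] using hy hm
  have hts : Tendsto (fun n => ∑' p : ℕ, b * (u ^ (p + 1) *
      (puncture (y n) (N - p) - puncture (y n) (N + p + 2)))) atTop
      (𝓝 (b * (u ^ (N + 1) * (α - N * b)))) := by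
    rw [← (hasSum_loopLimit α b hu N).tsum_eq]
    refine tendsto_tsum_of_dominated_convergence
      (bound := fun p : ℕ => 2 * A * |b| * ρ ^ (N + 1) * (u * ρ) ^ (p + 1))
      ((hasSum_pow_succ hq).summable.mul_left _) (fun p => ?_) ?_
    · exact (((hz _).sub (hz _)).const_mul _).const_mul _
    · filter_upwards [eventually_gt_atTop 0] with n hn p
      exact abs_term_puncture_le hA hρ hu le_rfl (hexp b n _ _ le_rfl hn (h n)) N p
  have h1 : Tendsto (fun n => ∑ j ∈ Finset.range N, y n (N - j) * y n (j + 1)) atTop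
      (𝓝 (∑ j ∈ Finset.range N, loopLimit α b u (N - j) * loopLimit α b u (j + 1))) :=
    tendsto_finsetSum _ fun j hj => (hy (by have := Finset.mem_range.1 hj; omega)).mul
      (hy (by omega))
  have h2 : Tendsto (fun n => ∑ j ∈ Finset.range N, y n (j + 1)) atTop
      (𝓝 (∑ j ∈ Finset.range N, loopLimit α b u (j + 1))) :=
    tendsto_finsetSum _ fun j hj => hy (by omega)
  have h3 := (((hts.add h1).add (hc N)).add (((h2.const_mul 2).add
    (hy (m := N + 1) (by omega))).const_mul α)).neg
  have e1 : ∑ j ∈ Finset.range N, loopLimit α b u (N - j) * loopLimit α b u (j + 1) =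
      N * (α ^ 2 + b ^ 2 * u ^ (N + 1)) + 2 * α * b * ∑ j ∈ Finset.range N, u ^ (j + 1) := by
    have hrefl : ∑ j ∈ Finset.range N, u ^ (N - j) = ∑ j ∈ Finset.range N, u ^ (j + 1) := by
      rw [← Finset.sum_range_reflect]
      refine Finset.sum_congr rfl fun j hj => ?_
      have := Finset.mem_range.1 hj
      congr 1
      omega
    have : ∀ j ∈ Finset.range N, loopLimit α b u (N - j) * loopLimit α b u (j + 1) =
        (α ^ 2 + b ^ 2 * u ^ (N + 1)) + α * b * (u ^ (N - j) + u ^ (j + 1)) := by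
      intro j hj
      have hj' := Finset.mem_range.1 hj
      rw [loopLimit, loopLimit, show (N - j : ℤ).natAbs = N - j by omega,
        show (j + 1 : ℤ).natAbs = j + 1 by omega, show N + 1 = (N - j) + (j + 1) by omega, pow_add]
      ring
    rw [Finset.sum_congr rfl this, Finset.sum_add_distrib, ← Finset.mul_sum, Finset.sum_const,
      Finset.sum_add_distrib, hrefl, Finset.card_range, nsmul_eq_mul]
    ring
  have e2 : ∑ j ∈ Finset.range N, loopLimit α b u (j + 1) =
      -(N * α) - b * ∑ j ∈ Finset.range N, u ^ (j + 1) := by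
    have : ∀ j ∈ Finset.range N, loopLimit α b u (j + 1) = -α - b * u ^ (j + 1) := fun j _ => by
      rw [loopLimit, show (j + 1 : ℤ).natAbs = j + 1 by omega]
    rw [Finset.sum_congr rfl this, Finset.sum_sub_distrib, ← Finset.mul_sum, Finset.sum_const,
      Finset.card_range, nsmul_eq_mul]
    ring
  rw [e1, e2, loopLimit, show (N + 1 : ℤ).natAbs = N + 1 by omega] at h3
  convert h3 using 2
  · rename_i n
    rw [((h n).hasSum_puncture N).tsum_eq]
    ring
  · ring

end Limits

lemma tendsto_covSum (μ : Measure ℝ) [IsSymmetricWeight μ]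
    (hJ : Tendsto (jacobiCoeff μ) atTop (𝓝 (1 / 2))) (N : ℕ) :
    Tendsto (fun n => covSum μ n N) atTop (𝓝 (((N : ℝ) + 1) / 4)) := by
  have h1 : ∀ l ∈ Finset.range (2 * N + 1),
      Tendsto (fun n => chebCov μ n (2 * N + 1 - l) (l + 1)) atTop
        (𝓝 (if l = N then ((N : ℝ) + 1) / 4 else 0)) := by
    intro l hl
    have hl' := Finset.mem_range.1 hl
    have h := tendsto_chebCov hJ (2 * N + 1 - l) (Nat.succ_pos l)
    rw [show ((2 * N + 1 - l : ℕ) : ℤ) = 2 * N + 1 - l by omega, Nat.cast_succ] at h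
    by_cases hlN : l = N
    · subst hlN
      rw [if_pos (by omega), show 2 * l + 1 - l = l + 1 by omega] at h
      simpa using h
    · rw [if_neg (by omega)] at h
      rwa [if_neg hlN]
  have h2 := tendsto_finsetSum _ h1
  rwa [Finset.sum_ite_eq' _ N, if_pos (Finset.mem_range.2 (by omega))] at h2

/-- The Fourier expansion of `log (1 - k² x²)` in Chebyshev polynomials. -/
lemma hasSum_log_one_sub {u k2 x : ℝ} (hu : u ∈ Set.Ioo (0 : ℝ) 1) (hk : k2 ∈ Set.Ioo (0 : ℝ) 1)
    (hk2 : k2 = 4 * u / (1 + u) ^ 2) (hx : x ∈ Set.Icc (-1 : ℝ) 1) :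
    HasSum (fun p : ℕ => u ^ (p + 1) / (p + 1) * (Chebyshev.T ℝ (2 * (p + 1))).eval x)
      (-(Real.log (1 - k2 * x ^ 2) + 2 * Real.log (1 + u)) / 2) := by
  obtain ⟨θ, rfl⟩ : ∃ θ, Real.cos θ = x := ⟨Real.arccos x, Real.cos_arccos hx.1 hx.2⟩
  set z : ℂ := u * Complex.exp (2 * θ * Complex.I) with hz
  have hexp : Complex.exp (2 * θ * Complex.I) =
      Real.cos (2 * θ) + Real.sin (2 * θ) * Complex.I := by
    rw [Complex.exp_mul_I]
    push_cast
    ring_nf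
  have hnorm : ‖z‖ = u := by
    rw [hz, norm_mul, Complex.norm_real, Real.norm_of_nonneg hu.1.le,
      show (2 * θ * Complex.I : ℂ) = ((2 * θ : ℝ) : ℂ) * Complex.I by push_cast; ring,
      Complex.norm_exp_ofReal_mul_I, mul_one]
  have h1 := Complex.hasSum_taylorSeries_neg_log (z := z) (by rw [hnorm]; exact hu.2)
  have h2 := Complex.reCLM.hasSum h1
  rw [← hasSum_nat_add_iff' 1] at h2
  simp only [Finset.range_one, Finset.sum_singleton, pow_zero, Nat.cast_zero, div_zero,
    Complex.reCLM_apply, Complex.zero_re, sub_zero, Complex.neg_re, Complex.log_re] at h2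
  have hpos := one_sub_mul_sq_pos hk hx
  have hu1 : 0 < 1 + u := by linarith [hu.1]
  have hsq : ‖1 - z‖ ^ 2 = (1 - k2 * Real.cos θ ^ 2) * (1 + u) ^ 2 := by
    rw [Complex.sq_norm, Complex.normSq_apply, hz, hexp, hk2]
    have hre : (1 - (u : ℂ) * (Real.cos (2 * θ) + Real.sin (2 * θ) * Complex.I)).re =
        1 - u * Real.cos (2 * θ) := by
      simp [-Complex.ofReal_cos, -Complex.ofReal_sin]
    have him : (1 - (u : ℂ) * (Real.cos (2 * θ) + Real.sin (2 * θ) * Complex.I)).im =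
        -(u * Real.sin (2 * θ)) := by
      simp [-Complex.ofReal_cos, -Complex.ofReal_sin]
    rw [hre, him]
    have h3 := Real.sin_sq_add_cos_sq (2 * θ)
    have h4 := Real.cos_two_mul θ
    field_simp
    linear_combination (u ^ 2) * h3 - 2 * u * h4
  have hlog : 2 * Real.log ‖1 - z‖ = Real.log (1 - k2 * Real.cos θ ^ 2) + 2 * Real.log (1 + u) := by
    have := congrArg Real.log hsq
    rwa [Real.log_pow, Real.log_mul hpos.ne' (by positivity), Real.log_pow, Nat.cast_ofNat] at this
  have hterm : (fun p : ℕ => (z ^ (p + 1) / ((p + 1 : ℕ) : ℂ)).re) = fun p : ℕ =>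
      u ^ (p + 1) / (p + 1) * (Chebyshev.T ℝ (2 * (p + 1))).eval (Real.cos θ) := by
    funext p
    rw [Chebyshev.T_real_cos, hz, mul_pow, ← Complex.exp_nat_mul,
      show ((p + 1 : ℕ) : ℂ) * (2 * θ * Complex.I) =
        (((2 * (p + 1) : ℤ) * θ : ℝ) : ℂ) * Complex.I by push_cast; ring,
      show (u : ℂ) ^ (p + 1) * Complex.exp ((((2 * (p + 1) : ℤ) * θ : ℝ) : ℂ) * Complex.I) /
        ((p + 1 : ℕ) : ℂ) = ((u ^ (p + 1) / (p + 1) : ℝ) : ℂ) *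
          Complex.exp ((((2 * (p + 1) : ℤ) * θ : ℝ) : ℂ) * Complex.I) by push_cast; ring,
      Complex.re_ofReal_mul, Complex.exp_ofReal_mul_I_re]
  rw [hterm] at h2
  rw [← hlog, show -(2 * Real.log ‖1 - z‖) / 2 = -Real.log ‖1 - z‖ by ring]
  exact h2

/-- The expected value of `∑ log (1 - k² x_j²)` in the orthogonal polynomial ensemble of `μ`. -/
noncomputable def logMean (μ : Measure ℝ) [IsSymmetricWeight μ] (k2 : ℝ) (n : ℕ) : ℝ :=
  ∫ x, Real.log (1 - k2 * x ^ 2) * (cdDiag μ n).eval x ∂μ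

/-- The leading order of `logMean`. -/
noncomputable def logMeanLeading (α u b : ℝ) (n : ℕ) : ℝ :=
  -2 * n * Real.log (1 + u) - 2 * α * Real.log (1 - u) - 2 * b * Real.log (1 - u ^ 2)

lemma hasSum_chebMean_logMean {u k2 : ℝ} (hu : u ∈ Set.Ioo (0 : ℝ) 1)
    (hk : k2 ∈ Set.Ioo (0 : ℝ) 1) (hk2 : k2 = 4 * u / (1 + u) ^ 2) (μ : Measure ℝ)
    [IsSymmetricWeight μ] (n : ℕ) :
    HasSum (fun p : ℕ => u ^ (p + 1) / (p + 1) * chebMean μ n (2 * (p + 1)))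
      (-(logMean μ k2 n + 2 * n * Real.log (1 + u)) / 2) := by
  have hle : ∀ p : ℕ, |u ^ (p + 1) / ((p : ℝ) + 1)| ≤ u ^ (p + 1) := fun p => by
    have hp := pow_pos hu.1 (p + 1)
    rw [abs_of_pos (by positivity)]
    exact div_le_self hp.le (by linarith [p.cast_nonneg (α := ℝ)])
  have h := hasSum_polyIntegral_mul μ (c := fun p : ℕ => u ^ (p + 1) / ((p : ℝ) + 1))
    (f := fun p : ℕ => Chebyshev.T ℝ (2 * (p + 1))) (B := 1)
    (Summable.of_nonneg_of_le (fun _ => abs_nonneg _) hle (hasSum_pow_succ hu).summable)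
    (fun p x hx => abs_eval_T_le_one _ hx) (cdDiag μ n)
    fun x hx => hasSum_log_one_sub hu hk hk2 hx
  simp only [polyIntegral_T_mul_cdDiag] at h
  rw [h.summable.hasSum_iff, h.tsum_eq, logMean]
  have hi1 : Integrable (fun x => Real.log (1 - k2 * x ^ 2) * (cdDiag μ n).eval x) μ :=
    integrable_of_continuousOn μ ((ContinuousOn.log (by fun_prop) fun x hx =>
      (one_sub_mul_sq_pos hk hx).ne').mul (by fun_prop))
  have h0 : ∫ x, (cdDiag μ n).eval x ∂μ = n := by
    have := polyIntegral_T_mul_cdDiag μ n 0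
    rwa [Chebyshev.T_zero, one_mul, chebMean_zero, polyIntegral_apply] at this
  have e : ∀ x, -(Real.log (1 - k2 * x ^ 2) + 2 * Real.log (1 + u)) / 2 * (cdDiag μ n).eval x =
      (-1 / 2) * (Real.log (1 - k2 * x ^ 2) * (cdDiag μ n).eval x) +
        -Real.log (1 + u) * (cdDiag μ n).eval x := fun x => by ring
  simp_rw [e]
  rw [integral_add (hi1.const_mul _) ((integrable_eval μ _).const_mul _), integral_const_mul,
    integral_const_mul, h0]
  ring

/-- The error in the leading order of `logMean` as a weighted sum of excesses. -/
lemma hasSum_logMean_sub {u k2 : ℝ} (α b : ℝ) (hu : u ∈ Set.Ioo (0 : ℝ) 1)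
    (hk : k2 ∈ Set.Ioo (0 : ℝ) 1) (hk2 : k2 = 4 * u / (1 + u) ^ 2) (μ : Measure ℝ)
    [IsSymmetricWeight μ] (n : ℕ) :
    HasSum (fun p : ℕ => -2 * (u ^ (p + 1) / (p + 1)) *
        (n * (chebMean μ n (2 * (p + 1)) + α + b * u ^ (p + 1))))
      (n * (logMean μ k2 n - logMeanLeading α u b n)) := by
  have hu2 : |u ^ 2| < 1 := by
    rw [abs_of_pos (pow_pos hu.1 2)]
    exact pow_lt_one₀ hu.1.le hu.2 two_ne_zero
  have h1 := hasSum_chebMean_logMean hu hk hk2 μ n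
  have h2 := (Real.hasSum_pow_div_log_of_abs_lt_one (x := u) (by
    rw [abs_of_pos hu.1]; exact hu.2)).mul_left α
  have h3 := (Real.hasSum_pow_div_log_of_abs_lt_one hu2).mul_left b
  have h4 := (((h1.add h2).add h3).mul_left (-2 * (n : ℝ)))
  have e : (fun p : ℕ => -2 * (u ^ (p + 1) / ((p : ℝ) + 1)) *
        (n * (chebMean μ n (2 * (p + 1)) + α + b * u ^ (p + 1)))) = fun p : ℕ =>
      -2 * (n : ℝ) * (u ^ (p + 1) / (p + 1) * chebMean μ n (2 * (p + 1)) +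
        α * (u ^ (p + 1) / (p + 1)) + b * ((u ^ 2) ^ (p + 1) / (p + 1))) := by
    funext p
    ring
  rw [e, h4.summable.hasSum_iff, h4.tsum_eq, logMeanLeading]
  ring

lemma summable_cube_mul_pow {q : ℝ} (hq : q ∈ Set.Ioo (0 : ℝ) 1) :
    Summable fun p : ℕ => ((p : ℝ) + 1) ^ 3 * q ^ (p + 1) := by
  have h := (summable_nat_add_iff 1).2 (summable_pow_mul_geometric_of_norm_lt_one 3
    (r := q) (by rw [Real.norm_of_nonneg hq.1.le]; exact hq.2))
  simpa using h

lemma abs_logMean_term_le {u ρ A Y : ℝ} (hu : u ∈ Set.Ioo (0 : ℝ) 1) {p : ℕ}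
    (hY : |Y| ≤ A * (((p : ℝ) + 1) ^ 3 * ρ ^ (p + 1))) :
    |-2 * (u ^ (p + 1) / (p + 1)) * Y| ≤ 2 * A * (((p : ℝ) + 1) ^ 3 * (u * ρ) ^ (p + 1)) := by
  have hp := pow_pos hu.1 (p + 1)
  have h1 : u ^ (p + 1) / ((p : ℝ) + 1) ≤ u ^ (p + 1) :=
    div_le_self hp.le (by linarith [p.cast_nonneg (α := ℝ)])
  rw [abs_mul, abs_mul, abs_neg, abs_two,
    abs_of_pos (by positivity : 0 < u ^ (p + 1) / ((p : ℝ) + 1))]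
  calc _ ≤ 2 * u ^ (p + 1) * (A * (((p : ℝ) + 1) ^ 3 * ρ ^ (p + 1))) := by gcongr
    _ = _ := by rw [mul_pow]; ring

/-- `logMean` agrees with its leading order up to `O(1/n)`, uniformly in bounded `b`. -/
lemma exists_abs_logMean_sub_le {α u k2 : ℝ} (hα : -1 < α) (hu : u ∈ Set.Ioo (0 : ℝ) 1)
    (hk : k2 ∈ Set.Ioo (0 : ℝ) 1) (hk2 : k2 = 4 * u / (1 + u) ^ 2) (B : ℝ) :
    ∃ K : ℝ, ∀ b, |b| ≤ B → ∀ (μ : Measure ℝ) [IsSymmetricWeight μ], μ = jacobiMeasure α k2 b →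
      ∀ n : ℕ, |n * (logMean μ k2 n - logMeanLeading α u b n)| ≤ K := by
  obtain ⟨ρ, hρ, huρ⟩ := exists_one_lt_mul_lt_one hu
  obtain ⟨A, hA, hex⟩ := exists_abs_excess_le α B hu hρ huρ
  have hq : u * ρ ∈ Set.Ioo (0 : ℝ) 1 := ⟨mul_pos hu.1 (by linarith), huρ⟩
  have hsum := (summable_cube_mul_pow hq).mul_left (2 * A)
  refine ⟨∑' p : ℕ, 2 * A * (((p : ℝ) + 1) ^ 3 * (u * ρ) ^ (p + 1)), fun b hb μ _ hμ n => ?_⟩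
  rw [← (hasSum_logMean_sub α b hu hk hk2 μ n).tsum_eq]
  refine tsum_of_norm_bounded (f := fun p : ℕ => -2 * (u ^ (p + 1) / ((p : ℝ) + 1)) *
      (n * (chebMean μ n (2 * (p + 1)) + α + b * u ^ (p + 1)))) hsum.hasSum fun p => ?_
  refine abs_logMean_term_le hu ?_
  rcases Nat.eq_zero_or_pos n with rfl | hn
  · rw [Nat.cast_zero, zero_mul, abs_zero]
    positivity
  · exact hex b n _ _ hb hn (isLoopSolution_chebMean hα hu hk hk2 hμ n) p

lemma tendsto_jacobiCoeff_jacobiMeasure {α u k2 b : ℝ} (hα : -1 < α) (hu : u ∈ Set.Ioo (0 : ℝ) 1)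
    (hk : k2 ∈ Set.Ioo (0 : ℝ) 1) (hk2 : k2 = 4 * u / (1 + u) ^ 2) {μ : Measure ℝ}
    [IsSymmetricWeight μ] (hμ : μ = jacobiMeasure α k2 b) :
    Tendsto (jacobiCoeff μ) atTop (𝓝 (1 / 2)) := by
  have key : ∀ m : ℤ, m ≠ 0 → Tendsto (fun n => chebEntry μ (2 * m) n n) atTop (𝓝 0) := by
    intro m hm
    have h := tendsto_loopSolution hu (fun n => isLoopSolution_chebMean hα hu hk hk2 hμ n) hm
    have h' := ((tendsto_add_atTop_iff_nat 1).2 h).sub h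
    rw [sub_self] at h'
    refine h'.congr fun n => ?_
    simp only [chebMean, Finset.sum_range_succ]
    ring
  have h2 := key 1 one_ne_zero
  have h4 := key 2 two_ne_zero
  rw [mul_one] at h2
  rw [show (2 * 2 : ℤ) = 4 by norm_num] at h4
  exact tendsto_jacobiCoeff h2 h4

lemma tendsto_mul_logMean_sub {α u k2 b : ℝ} (hα : -1 < α) (hu : u ∈ Set.Ioo (0 : ℝ) 1)
    (hk : k2 ∈ Set.Ioo (0 : ℝ) 1) (hk2 : k2 = 4 * u / (1 + u) ^ 2) {μ : Measure ℝ}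
    [IsSymmetricWeight μ] (hμ : μ = jacobiMeasure α k2 b) :
    Tendsto (fun n : ℕ => n * (logMean μ k2 n - logMeanLeading α u b n)) atTop
      (𝓝 (-((4 * α ^ 2 - 1) / 2 * (u / (1 - u))))) := by
  have hloop := fun n => isLoopSolution_chebMean hα hu hk hk2 hμ n
  have hJ := tendsto_jacobiCoeff_jacobiMeasure hα hu hk hk2 hμ
  obtain ⟨ρ, hρ, huρ⟩ := exists_one_lt_mul_lt_one hu
  obtain ⟨A, hA, hex⟩ := exists_abs_excess_le α |b| hu hρ huρ
  have hq : u * ρ ∈ Set.Ioo (0 : ℝ) 1 := ⟨mul_pos hu.1 (by linarith), huρ⟩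
  have hsum := (summable_cube_mul_pow hq).mul_left (2 * A)
  have hlim : HasSum (fun p : ℕ => -2 * (u ^ (p + 1) / ((p : ℝ) + 1)) *
      (((p : ℝ) + 1) * (4 * α ^ 2 - 1) / 4)) (-((4 * α ^ 2 - 1) / 2 * (u / (1 - u)))) := by
    have h := (hasSum_pow_succ hu).mul_left (-((4 * α ^ 2 - 1) / 2))
    rw [← neg_mul]
    have e : (fun p : ℕ => -2 * (u ^ (p + 1) / ((p : ℝ) + 1)) *
      (((p : ℝ) + 1) * (4 * α ^ 2 - 1) / 4)) =
        fun p : ℕ => -((4 * α ^ 2 - 1) / 2) * u ^ (p + 1) := by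
      funext p
      have : (p : ℝ) + 1 ≠ 0 := by positivity
      field_simp
      ring
    rwa [e]
  rw [← hlim.tsum_eq]
  simp_rw [← fun n => (hasSum_logMean_sub α b hu hk hk2 μ n).tsum_eq]
  refine tendsto_tsum_of_dominated_convergence hsum (fun p => ?_) ?_
  · exact (tendsto_excess hu hloop (fun N => tendsto_covSum μ hJ N) p).const_mul _
  · filter_upwards [eventually_gt_atTop 0] with n hn p
    exact abs_logMean_term_le hu (hex b n _ _ le_rfl hn (hloop n) p)

lemma hasDerivAt_det_of_eq_one {ι : Type*} [Fintype ι] [DecidableEq ι] {M : ℝ → Matrix ι ι ℝ}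
    {M' : Matrix ι ι ℝ} {t : ℝ} (h : ∀ i j, HasDerivAt (fun s => M s i j) (M' i j) t)
    (h1 : M t = 1) : HasDerivAt (fun s => (M s).det) M'.trace t := by
  have hdiag : ∀ i, M t i i = 1 := fun i => by rw [h1, Matrix.one_apply_eq]
  have hoff : ∀ {i j}, i ≠ j → M t i j = 0 := fun hij => by rw [h1, Matrix.one_apply_ne hij]
  simp_rw [Matrix.det_apply]
  have hprod : ∀ σ : Equiv.Perm ι, HasDerivAt (fun s => Equiv.Perm.sign σ • ∏ i, M s (σ i) i)
      (if σ = 1 then M'.trace else 0) t := by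
    intro σ
    have h2 := (HasDerivAt.fun_finsetProd (u := Finset.univ) fun i _ => h (σ i) i).const_smul
      (Equiv.Perm.sign σ)
    refine h2.congr_deriv ?_
    split_ifs with hσ
    · subst hσ
      rw [Equiv.Perm.sign_one, one_smul]
      refine Finset.sum_congr rfl fun i _ => ?_
      rw [Finset.prod_eq_one (f := fun j => M t ((1 : Equiv.Perm ι) j) j) fun j _ => hdiag j,
        one_smul]
      rfl
    · obtain ⟨a, ha⟩ : ∃ a, σ a ≠ a := by
        by_contra! hcon
        exact hσ (Equiv.ext hcon)
      rw [Finset.sum_eq_zero, smul_zero]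
      intro i _
      obtain ⟨j, hj, hji⟩ : ∃ j, σ j ≠ j ∧ j ≠ i := by
        by_cases hai : a = i
        · exact ⟨σ a, fun hh => ha (σ.injective hh), fun hh => ha (hh.trans hai.symm)⟩
        · exact ⟨a, ha, hai⟩
      rw [Finset.prod_eq_zero (f := fun j => M t (σ j) j)
        (Finset.mem_erase.2 ⟨hji, Finset.mem_univ j⟩) (hoff hj), zero_smul]
  have h3 := HasDerivAt.fun_sum (u := Finset.univ) fun σ _ => hprod σ
  rwa [Finset.sum_ite_eq' Finset.univ, if_pos (Finset.mem_univ _)] at h3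

lemma continuousOn_log_one_sub {k2 : ℝ} (hk : k2 ∈ Set.Ioo (0 : ℝ) 1) :
    ContinuousOn (fun x : ℝ => Real.log (1 - k2 * x ^ 2)) (Set.Icc (-1) 1) :=
  ContinuousOn.log (by fun_prop) fun _ hx => (one_sub_mul_sq_pos hk hx).ne'

/-- Moments of `jacobiWeight α k2 b` are differentiable in `b`. -/
lemma hasDerivAt_integral_jacobiMeasure {α k2 : ℝ} (hα : -1 < α) (hk : k2 ∈ Set.Ioo (0 : ℝ) 1)
    (b : ℝ) (q : ℝ[X]) :
    HasDerivAt (fun t => ∫ x, q.eval x ∂(jacobiMeasure α k2 t))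
      (∫ x, Real.log (1 - k2 * x ^ 2) * q.eval x ∂(jacobiMeasure α k2 b)) b := by
  simp_rw [integral_jacobiMeasure hk]
  have hIoc : Set.uIoc (-1 : ℝ) 1 = Set.Ioc (-1) 1 := Set.uIoc_of_le (by norm_num)
  have hIcc : Set.uIcc (-1 : ℝ) 1 = Set.Icc (-1) 1 := Set.uIcc_of_le (by norm_num)
  have hmeas : ∀ t, Measurable (jacobiWeight α k2 t) := measurable_jacobiWeight α k2
  have hcont : ContinuousOn (fun x : ℝ => Real.log (1 - k2 * x ^ 2) * q.eval x)
      (Set.uIcc (-1) 1) := by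
    rw [hIcc]
    exact (continuousOn_log_one_sub hk).mul (by fun_prop)
  refine (intervalIntegral.hasDerivAt_integral_of_dominated_loc_of_deriv_le
    (F := fun t x => q.eval x * jacobiWeight α k2 t x)
    (F' := fun t x => Real.log (1 - k2 * x ^ 2) * q.eval x * jacobiWeight α k2 t x)
    (bound := fun x => ‖Real.log (1 - k2 * x ^ 2) * q.eval x * jacobiWeight α k2 (b - 1) x‖)
    (Metric.ball_mem_nhds b one_pos) ?_ ?_ ?_ ?_ ?_ ?_).2
  · exact Eventually.of_forall fun t =>
      ((q.continuous.measurable.mul (hmeas t)).aestronglyMeasurable)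
  · exact (intervalIntegrable_jacobiWeight hα hk b).continuousOn_mul q.continuous.continuousOn
  · have : Measurable fun x : ℝ => Real.log (1 - k2 * x ^ 2) := by fun_prop
    exact ((this.mul q.continuous.measurable).mul (hmeas b)).aestronglyMeasurable
  · refine Eventually.of_forall fun x hx t ht => ?_
    rw [hIoc] at hx
    have hx' : x ∈ Set.Icc (-1 : ℝ) 1 := ⟨hx.1.le, hx.2⟩
    rw [Metric.mem_ball, Real.dist_eq, abs_lt] at ht
    rw [norm_mul, norm_mul _ (jacobiWeight α k2 (b - 1) x)]
    refine mul_le_mul_of_nonneg_left ?_ (norm_nonneg _)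
    rw [Real.norm_of_nonneg (jacobiWeight_nonneg hk hx'),
      Real.norm_of_nonneg (jacobiWeight_nonneg hk hx')]
    unfold jacobiWeight
    have h1 : 0 ≤ 1 - x ^ 2 := by nlinarith [hx'.1, hx'.2]
    refine mul_le_mul_of_nonneg_left ?_ (Real.rpow_nonneg h1 _)
    refine Real.rpow_le_rpow_of_exponent_ge (one_sub_mul_sq_pos hk hx') ?_ (by linarith)
    nlinarith [hk.1, sq_nonneg x]
  · exact ((intervalIntegrable_jacobiWeight hα hk (b - 1)).continuousOn_mul hcont).norm
  · refine Eventually.of_forall fun x hx t _ => ?_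
    rw [hIoc] at hx
    have h1 := (Real.hasStrictDerivAt_const_rpow (one_sub_mul_sq_pos hk ⟨hx.1.le, hx.2⟩)
      t).hasDerivAt.const_mul (q.eval x * (1 - x ^ 2) ^ α)
    unfold jacobiWeight
    refine (h1.congr_deriv (by ring)).congr_of_eventuallyEq (Eventually.of_forall fun s => ?_)
    simp only
    ring

lemma polyIntegral_log_cdDiag {μ : Measure ℝ} [IsSymmetricWeight μ] {k2 : ℝ}
    (hk : k2 ∈ Set.Ioo (0 : ℝ) 1) (n : ℕ) :
    logMean μ k2 n = ∑ i : Fin n, ∫ x, Real.log (1 - k2 * x ^ 2) *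
      (onp μ i * onp μ i).eval x ∂μ := by
  rw [logMean, Fin.sum_univ_eq_sum_range (fun i => ∫ x, Real.log (1 - k2 * x ^ 2) *
      (onp μ i * onp μ i).eval x ∂μ), ← integral_finsetSum]
  · simp_rw [cdDiag, eval_finsetSum, Finset.mul_sum]
  · intro i _
    exact integrable_of_continuousOn μ ((continuousOn_log_one_sub hk).mul (by fun_prop))

/-- The Gram matrix of a finite family of polynomials in terms of the Hankel matrix. -/
lemma det_gram_eq (α : ℝ) {k2 : ℝ} (hk : k2 ∈ Set.Ioo (0 : ℝ) 1) (t : ℝ)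
    [IsSymmetricWeight (jacobiMeasure α k2 t)] {n : ℕ} {P : ℕ → ℝ[X]}
    (hP : ∀ i < n, (P i).natDegree < n) :
    (Matrix.of fun i j : Fin n => ∫ x, (P i * P j).eval x ∂(jacobiMeasure α k2 t)).det =
      (Matrix.of fun i j : Fin n => (P i).coeff j).det ^ 2 *
        hankelDet (jacobiWeight α k2 t) n := by
  have hmat : (Matrix.of fun i j : Fin n => ∫ x, (P i * P j).eval x ∂(jacobiMeasure α k2 t)) =
      (Matrix.of fun i j : Fin n => (P i).coeff j) *
        (Matrix.of fun i j : Fin n => ∫ x in (-1 : ℝ)..1,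
          x ^ ((i : ℕ) + (j : ℕ)) * jacobiWeight α k2 t x) *
        (Matrix.of fun i j : Fin n => (P i).coeff j).transpose := by
    ext i j
    have hsum : P i * P j = ∑ b : Fin n, ∑ a : Fin n,
        C ((P i).coeff a * (P j).coeff b) * X ^ ((a : ℕ) + (b : ℕ)) := by
      conv_lhs => rw [(P i).as_sum_range' n (hP i i.2), (P j).as_sum_range' n (hP j j.2)]
      rw [← Fin.sum_univ_eq_sum_range fun k => monomial k ((P i).coeff k),
        ← Fin.sum_univ_eq_sum_range fun k => monomial k ((P j).coeff k), Finset.sum_mul_sum,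
        Finset.sum_comm]
      simp_rw [monomial_mul_monomial, C_mul_X_pow_eq_monomial]
    simp only [Matrix.of_apply, Matrix.mul_apply, Matrix.transpose_apply]
    rw [← polyIntegral_apply, hsum, map_sum]
    simp_rw [map_sum, polyIntegral_C_mul, polyIntegral_apply, eval_pow, eval_X,
      integral_jacobiMeasure hk, Finset.sum_mul]
    refine Finset.sum_congr rfl fun b _ => Finset.sum_congr rfl fun a _ => ?_
    ring
  rw [hmat, Matrix.det_mul, Matrix.det_mul, Matrix.det_transpose, hankelDet]
  ring

lemma gram_onp_eq_one (μ : Measure ℝ) [IsSymmetricWeight μ] (n : ℕ) :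
    (Matrix.of fun i j : Fin n => ∫ x, (onp μ i * onp μ j).eval x ∂μ) = 1 := by
  ext i j
  rw [Matrix.of_apply, ← polyIntegral_apply, polyIntegral_onp_mul_onp, Matrix.one_apply]
  simp only [Fin.ext_iff]

lemma hankelDet_jacobiWeight_pos {α k2 : ℝ} (hα : -1 < α) (hk : k2 ∈ Set.Ioo (0 : ℝ) 1) (b : ℝ)
    (n : ℕ) : 0 < hankelDet (jacobiWeight α k2 b) n := by
  have := isSymmetricWeight_jacobiMeasure hα hk b
  have h := det_gram_eq α hk b (n := n) (P := onp (jacobiMeasure α k2 b)) fun i hi => by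
    rwa [natDegree_onp]
  rw [gram_onp_eq_one, Matrix.det_one] at h
  by_contra! hcon
  nlinarith [sq_nonneg (Matrix.of fun i j : Fin n =>
    (onp (jacobiMeasure α k2 b) i).coeff j).det]

/-- The logarithmic derivative of the Hankel determinant in the exponent `b`. -/
lemma hasDerivAt_log_hankelDet {α k2 : ℝ} (hα : -1 < α) (hk : k2 ∈ Set.Ioo (0 : ℝ) 1) (b : ℝ)
    [IsSymmetricWeight (jacobiMeasure α k2 b)] (n : ℕ) :
    HasDerivAt (fun t => Real.log (hankelDet (jacobiWeight α k2 t) n))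
      (logMean (jacobiMeasure α k2 b) k2 n) b := by
  set P : ℕ → ℝ[X] := onp (jacobiMeasure α k2 b) with hPdef
  have hP : ∀ i < n, (P i).natDegree < n := fun i hi => by rwa [hPdef, natDegree_onp]
  set d := (Matrix.of fun i j : Fin n => (P i).coeff j).det with hd
  have hdet : ∀ t, (Matrix.of fun i j : Fin n => ∫ x, (P i * P j).eval x
      ∂(jacobiMeasure α k2 t)).det = d ^ 2 * hankelDet (jacobiWeight α k2 t) n := fun t => by
    have := isSymmetricWeight_jacobiMeasure hα hk t
    exact det_gram_eq α hk t hP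
  have hone := gram_onp_eq_one (jacobiMeasure α k2 b) n
  have hval := hdet b
  rw [hone, Matrix.det_one] at hval
  have hd0 : d ^ 2 ≠ 0 := fun h0 => by rw [h0, zero_mul] at hval; exact one_ne_zero hval
  have h1 := hasDerivAt_det_of_eq_one (M := fun t => Matrix.of fun i j : Fin n =>
      ∫ x, (P i * P j).eval x ∂(jacobiMeasure α k2 t))
    (M' := Matrix.of fun i j : Fin n => ∫ x, Real.log (1 - k2 * x ^ 2) * (P i * P j).eval x
      ∂(jacobiMeasure α k2 b)) (t := b)
    (fun i j => hasDerivAt_integral_jacobiMeasure hα hk b (P i * P j)) hone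
  have htr : (Matrix.of fun i j : Fin n => ∫ x, Real.log (1 - k2 * x ^ 2) * (P i * P j).eval x
      ∂(jacobiMeasure α k2 b)).trace = logMean (jacobiMeasure α k2 b) k2 n := by
    rw [polyIntegral_log_cdDiag hk]
    rfl
  rw [htr] at h1
  simp_rw [hdet] at h1
  have h2 := h1.log (by rw [← hval]; exact one_ne_zero)
  rw [← hval, div_one] at h2
  have h3 := h2.sub_const (Real.log (d ^ 2))
  refine h3.congr_of_eventuallyEq (Eventually.of_forall fun t => ?_)
  simp only
  rw [Real.log_mul hd0 (hankelDet_jacobiWeight_pos hα hk t n).ne']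
  ring

/-- The leading asymptotics of `log (D_n(b) / D_n(0))`. -/
noncomputable def logRatioLeading (α u : ℝ) (n : ℕ) (b : ℝ) : ℝ :=
  -2 * n * Real.log (1 + u) * b - 2 * α * Real.log (1 - u) * b - Real.log (1 - u ^ 2) * b ^ 2

lemma tendsto_mul_log_hankelDet_sub {α u k2 : ℝ} (hα : -1 < α) (hu : u ∈ Set.Ioo (0 : ℝ) 1)
    (hk : k2 ∈ Set.Ioo (0 : ℝ) 1) (hk2 : k2 = 4 * u / (1 + u) ^ 2) (β : ℝ) :
    Tendsto (fun n : ℕ => n * (Real.log (hankelDet (jacobiWeight α k2 β) n) -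
      Real.log (hankelDet (jacobiWeight α k2 0) n) - logRatioLeading α u n β)) atTop
      (𝓝 (-((4 * α ^ 2 - 1) / 2 * (u / (1 - u))) * β)) := by
  have inst : ∀ b, IsSymmetricWeight (jacobiMeasure α k2 b) :=
    isSymmetricWeight_jacobiMeasure hα hk
  set E : ℕ → ℝ → ℝ := fun n b =>
    n * (Real.log (hankelDet (jacobiWeight α k2 b) n) - logRatioLeading α u n b) with hE
  have hlead : ∀ (n : ℕ) b, HasDerivAt (logRatioLeading α u n) (logMeanLeading α u b n) b := by
    intro n b
    have h1 := (((hasDerivAt_id b).const_mul (-2 * n * Real.log (1 + u))).sub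
      ((hasDerivAt_id b).const_mul (2 * α * Real.log (1 - u)))).sub
      ((hasDerivAt_pow 2 b).const_mul (Real.log (1 - u ^ 2)))
    refine h1.congr_deriv ?_
    rw [logMeanLeading]
    push_cast
    ring
  have hderiv : ∀ (n : ℕ) b, HasDerivAt (E n)
      (n * (logMean (jacobiMeasure α k2 b) k2 n - logMeanLeading α u b n)) b := fun n b =>
    ((hasDerivAt_log_hankelDet hα hk b n).sub (hlead n b)).const_mul _
  obtain ⟨K, hK⟩ := exists_abs_logMean_sub_le hα hu hk hk2 |β|
  have hbound : ∀ n, ∀ b ∈ Set.uIoc 0 β, ‖deriv (E n) b‖ ≤ K := by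
    intro n b hb
    rw [(hderiv n b).deriv]
    refine hK b ?_ _ rfl n
    have := Set.abs_sub_left_of_mem_uIcc (Set.uIoc_subset_uIcc hb)
    simpa using this
  have hInt : ∀ n, IntervalIntegrable (deriv (E n)) volume 0 β := fun n =>
    (intervalIntegrable_const (c := K)).mono_fun (measurable_deriv _).aestronglyMeasurable
      ((ae_restrict_mem measurableSet_uIoc).mono fun b hb =>
        (hbound n b hb).trans (le_abs_self K))
  have hlim : Tendsto (fun n => ∫ b in (0 : ℝ)..β, deriv (E n) b) atTop
      (𝓝 (∫ _ in (0 : ℝ)..β, -((4 * α ^ 2 - 1) / 2 * (u / (1 - u))))) := by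
    refine intervalIntegral.tendsto_integral_filter_of_dominated_convergence (fun _ => K)
      (Eventually.of_forall fun n => (measurable_deriv _).aestronglyMeasurable)
      (Eventually.of_forall fun n => Eventually.of_forall (hbound n))
      intervalIntegrable_const (Eventually.of_forall fun b _ => ?_)
    simp_rw [(hderiv _ b).deriv]
    exact tendsto_mul_logMean_sub hα hu hk hk2 rfl
  rw [intervalIntegral.integral_const, sub_zero, smul_eq_mul, mul_comm] at hlim
  refine hlim.congr fun n => ?_
  rw [intervalIntegral.integral_deriv_eq_sub
    (fun b _ => (hderiv n b).differentiableAt) (hInt n), hE]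
  simp only [logRatioLeading]
  ring

/-- Asymptotics of the ratio of the Hankel determinant for
`w(x,k²) = (1-x²)^α (1-k²x²)^β` to the one for the symmetric Jacobi weight
`(1-x²)^α`: the normalized ratio `Λ_n` tends to `1` and
`n log Λ_n → ((4α²−1)β/4)(1 − 1/√(1−k²))`. -/
theorem stmt_5 (α β k2 : ℝ) (hα : -1 < α) (hk2 : k2 ∈ Set.Ioo (0:ℝ) 1) :
    let D : ℕ → ℝ := fun n =>
      hankelDet (fun x => (1 - x ^ 2) ^ α * (1 - k2 * x ^ 2) ^ β) n
    let D0 : ℕ → ℝ := fun n => hankelDet (fun x => (1 - x ^ 2) ^ α) n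
    let Λ : ℕ → ℝ := fun n =>
      D n / D0 n * (2 / (1 + Real.sqrt (1 - k2))) ^ (2 * β * (n:ℝ))
        * (2:ℝ) ^ (2 * β * (α + β)) * (1 - k2) ^ (β * (α + β / 2))
        * (1 + Real.sqrt (1 - k2)) ^ (-(2 * β * (α + β)))
    Filter.Tendsto Λ Filter.atTop (nhds 1) ∧
      Filter.Tendsto (fun n : ℕ => (n:ℝ) * Real.log (Λ n)) Filter.atTop
        (nhds ((4 * α ^ 2 - 1) * β / 4 * (1 - 1 / Real.sqrt (1 - k2)))) := by
  intro D D0 Λ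
  have hk1 : 0 < 1 - k2 := by linarith [hk2.2]
  set s := Real.sqrt (1 - k2) with hs
  have hs0 : 0 < s := Real.sqrt_pos.2 hk1
  have hsq : s ^ 2 = 1 - k2 := Real.sq_sqrt hk1.le
  have hs1 : s < 1 := by nlinarith [hk2.1]
  set u := (1 - s) / (1 + s) with hudef
  have hu : u ∈ Set.Ioo (0 : ℝ) 1 :=
    ⟨div_pos (by linarith) (by linarith), by rw [hudef, div_lt_one (by linarith)]; linarith⟩
  have hu1 : 1 + u = 2 / (1 + s) := by rw [hudef]; field_simp; ring
  have hu2 : 1 - u = 2 * s / (1 + s) := by rw [hudef]; field_simp; ring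
  have hk2u : k2 = 4 * u / (1 + u) ^ 2 := by
    rw [hu1, hudef]
    field_simp
    linear_combination 4 * hsq
  have hDpos : ∀ n, 0 < D n := hankelDet_jacobiWeight_pos hα hk2 β
  have hD0 : ∀ n, D0 n = hankelDet (jacobiWeight α k2 0) n := fun n => by
    have : jacobiWeight α k2 0 = fun x => (1 - x ^ 2) ^ α := by
      funext x
      rw [jacobiWeight, Real.rpow_zero, mul_one]
    rw [this]
  have hD0pos : ∀ n, 0 < D0 n := fun n => by
    rw [hD0]
    exact hankelDet_jacobiWeight_pos hα hk2 0 n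
  have hΛpos : ∀ n, 0 < Λ n := fun n => by
    have h1 := hDpos n
    have h2 := hD0pos n
    positivity
  have hlog : ∀ n, Real.log (Λ n) = Real.log (D n) -
      Real.log (hankelDet (jacobiWeight α k2 0) n) - logRatioLeading α u n β := by
    intro n
    have h1 := (hDpos n).ne'
    have h2 := (hD0pos n).ne'
    have hp1 : (0 : ℝ) < 2 / (1 + s) := by positivity
    have hp2 : (0 : ℝ) < 1 + s := by positivity
    have e1 : Real.log (1 + u) = Real.log 2 - Real.log (1 + s) := by
      rw [hu1, Real.log_div two_ne_zero hp2.ne']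
    have e2 : Real.log (1 - u) = Real.log 2 + Real.log s - Real.log (1 + s) := by
      rw [hu2, Real.log_div (by positivity) hp2.ne', Real.log_mul two_ne_zero hs0.ne']
    have e3 : Real.log (1 - u ^ 2) = Real.log (1 - u) + Real.log (1 + u) := by
      rw [← Real.log_mul (by linarith [hu.2]) (by linarith [hu.1])]
      congr 1
      ring
    have e4 : Real.log (1 - k2) = 2 * Real.log s := by
      rw [← hsq, Real.log_pow]
      norm_num
    simp only [Λ]
    rw [Real.log_mul (by positivity) (by positivity), Real.log_mul (by positivity) (by positivity),
      Real.log_mul (by positivity) (by positivity), Real.log_mul (by positivity) (by positivity),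
      Real.log_div h1 h2, Real.log_rpow hp1, Real.log_rpow two_pos, Real.log_rpow hk1,
      Real.log_rpow hp2, ← hu1, logRatioLeading, e3, e2, e1, e4, ← hD0]
    ring
  have hmain : Tendsto (fun n : ℕ => (n : ℝ) * Real.log (Λ n)) atTop
      (𝓝 ((4 * α ^ 2 - 1) * β / 4 * (1 - 1 / s))) := by
    have h := tendsto_mul_log_hankelDet_sub hα hu hk2 hk2u β
    have hl : -((4 * α ^ 2 - 1) / 2 * (u / (1 - u))) * β =
        (4 * α ^ 2 - 1) * β / 4 * (1 - 1 / s) := by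
      rw [hu2, hudef]
      field_simp
      ring
    rw [hl] at h
    refine h.congr fun n => ?_
    rw [hlog]
    rfl
  refine ⟨?_, hmain⟩
  have h0 : Tendsto (fun n => Real.log (Λ n)) atTop (𝓝 0) := by
    have h := hmain.mul (tendsto_inv_atTop_nhds_zero_nat (𝕜 := ℝ))
    rw [mul_zero] at h
    refine h.congr' ?_
    filter_upwards [eventually_gt_atTop 0] with n hn
    have hn' : (n : ℝ) ≠ 0 := by exact_mod_cast hn.ne'
    field_simp
  have h1 := (Real.continuous_exp.tendsto 0).comp h0
  rw [Real.exp_zero] at h1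
  exact h1.congr fun n => Real.exp_log (hΛpos n)
end

section
/- For every integer n ≥ 1, the recurrence coefficient β_n is determined by r_n and R_n through the identity k²·β_n·(α+β+n−1/2)·(α+β+n+1/2 − R_n)·R_n = [R_n + k²·(α+β+n+1/2 − R_n)]·r_n² + [(n+β)·R_n − α·k²·(α+β+n+1/2 − R_n)]·r_n + (n/2)·(n/2+β)·R_n. -/
open MeasureTheory

namespace OrthogonalPolynomial

open Polynomial

/-- `P` is the sequence of monic orthogonal polynomials for the weight `w` on `[-1, 1]`, with
squared norms `h`. -/
structure IsMonicOrthogonal (w : ℝ → ℝ) (P : ℕ → ℝ[X]) (h : ℕ → ℝ) : Prop where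
  monic : ∀ n, (P n).Monic
  natDegree_eq : ∀ n, (P n).natDegree = n
  norm_pos : ∀ n, 0 < h n
  integral_mul : ∀ m n : ℕ,
    (∫ x in (-1 : ℝ)..1, (P m).eval x * (P n).eval x * w x) = if m = n then h n else 0

/-- The Stieltjes-type integral of `Q` against the weight `w / (c + y)`. -/
noncomputable def stieltjes (w : ℝ → ℝ) (c : ℝ) (Q : ℝ[X]) : ℝ :=
  ∫ y in (-1 : ℝ)..1, w y * Q.eval y / (c + y)

variable {w : ℝ → ℝ} {P : ℕ → ℝ[X]} {h : ℕ → ℝ}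

lemma intervalIntegrable_eval_mul {f : ℝ → ℝ} {a b : ℝ} (hf : IntervalIntegrable f volume a b)
    (Q : ℝ[X]) : IntervalIntegrable (fun x => Q.eval x * f x) volume a b :=
  hf.continuousOn_mul Q.continuous.continuousOn

lemma intervalIntegrable_mul_eval_div {c : ℝ}
    (hc : IntervalIntegrable (fun y => w y / (c + y)) volume (-1) 1) (Q : ℝ[X]) :
    IntervalIntegrable (fun y => w y * Q.eval y / (c + y)) volume (-1) 1 := by
  refine (intervalIntegrable_eval_mul hc Q).congr fun y _ => ?_
  ring

namespace IsMonicOrthogonal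

lemma zero_eq_one (hP : IsMonicOrthogonal w P h) : P 0 = 1 :=
  (hP.monic 0).natDegree_eq_zero.mp (hP.natDegree_eq 0)

lemma coeff_self (hP : IsMonicOrthogonal w P h) (n : ℕ) : (P n).coeff n = 1 := by
  simpa [Monic, leadingCoeff, hP.natDegree_eq n] using hP.monic n

lemma intervalIntegrable (hP : IsMonicOrthogonal w P h) :
    IntervalIntegrable w volume (-1) 1 := by
  by_contra hw
  have h0 := hP.integral_mul 0 0
  simp only [hP.zero_eq_one, eval_one, one_mul, if_true] at h0
  rw [intervalIntegral.integral_undef hw] at h0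
  exact (hP.norm_pos 0).ne h0

/-- Pairing `P n` with a polynomial of degree at most `n` extracts its `n`-th coefficient. -/
lemma integral_mul_eq_coeff (hP : IsMonicOrthogonal w P h) {n : ℕ} {Q : ℝ[X]}
    (hQ : Q.natDegree ≤ n) :
    (∫ x in (-1 : ℝ)..1, (P n * Q).eval x * w x) = Q.coeff n * h n := by
  have reduce : ∀ (m : ℕ) (Q : ℝ[X]), (∫ x in (-1 : ℝ)..1, (P n * Q).eval x * w x)
      = (∫ x in (-1 : ℝ)..1, (P n * (Q - C (Q.coeff m) * P m)).eval x * w x)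
        + Q.coeff m * (if n = m then h m else 0) := by
    intro m Q
    rw [← hP.integral_mul n m, ← intervalIntegral.integral_const_mul,
      ← intervalIntegral.integral_add]
    · congr 1
      ext x
      simp only [eval_mul, eval_sub, eval_C]
      ring
    · exact intervalIntegrable_eval_mul hP.intervalIntegrable _
    · simpa only [eval_mul] using
        (intervalIntegrable_eval_mul hP.intervalIntegrable (P n * P m)).const_mul (Q.coeff m)
  have drop : ∀ (m : ℕ) (Q : ℝ[X]), Q.degree < (m + 1 : ℕ) →
      (Q - C (Q.coeff m) * P m).degree < m := by
    intro m Q hQ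
    rw [degree_lt_iff_coeff_zero] at hQ ⊢
    intro j hj
    rcases hj.eq_or_lt with rfl | hj
    · simp [hP.coeff_self]
    · have : (P m).coeff j = 0 := coeff_eq_zero_of_natDegree_lt (by rw [hP.natDegree_eq]; exact hj)
      simp [this, hQ j hj]
  have vanish : ∀ m : ℕ, m ≤ n → ∀ Q : ℝ[X], Q.degree < m →
      (∫ x in (-1 : ℝ)..1, (P n * Q).eval x * w x) = 0 := by
    intro m
    induction m with
    | zero =>
      intro _ Q hQ
      have : Q = 0 := by
        rw [← degree_eq_bot]
        exact Nat.WithBot.lt_zero_iff.mp hQ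
      simp [this]
    | succ m ih =>
      intro hm Q hQ
      rw [reduce m Q, ih (by omega) _ (drop m Q hQ), if_neg (by omega)]
      simp
  rw [reduce n Q, vanish n le_rfl _ (drop n Q ?_), if_pos rfl, zero_add]
  exact (degree_le_of_natDegree_le hQ).trans_lt (by exact_mod_cast Nat.lt_succ_self n)

/-- Splitting off the value at the pole from a Stieltjes integral. -/
lemma stieltjes_mul (hP : IsMonicOrthogonal w P h) {c : ℝ} (hc : 1 ≤ c)
    (hwc : IntervalIntegrable (fun y => w y / (c + y)) volume (-1) 1) {n : ℕ} {Q : ℝ[X]}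
    (hQ : Q.natDegree ≤ n + 1) :
    stieltjes w c (P n * Q)
      = Q.eval (-c) * stieltjes w c (P n) + Q.coeff (n + 1) * h n := by
  obtain ⟨D, hD, hQD⟩ : ∃ D : ℝ[X], D.natDegree ≤ n ∧ Q = (X - C (-c)) * D + C (Q.eval (-c)) := by
    refine ⟨Q /ₘ (X - C (-c)), ?_, ?_⟩
    · rw [natDegree_divByMonic _ (monic_X_sub_C _), natDegree_X_sub_C]
      omega
    · conv_lhs => rw [← modByMonic_add_div Q (X - C (-c)), modByMonic_X_sub_C_eq_C_eval]
      ring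
  have hcoeff : Q.coeff (n + 1) = D.coeff n := by
    have : D.coeff (n + 1) = 0 := coeff_eq_zero_of_natDegree_lt (by omega)
    rw [hQD]
    simp [add_mul, this]
  rw [hcoeff, ← hP.integral_mul_eq_coeff hD, stieltjes, stieltjes,
    ← intervalIntegral.integral_const_mul, ← intervalIntegral.integral_add
      ((intervalIntegrable_mul_eval_div hwc _).const_mul _)
      (intervalIntegrable_eval_mul hP.intervalIntegrable _)]
  refine intervalIntegral.integral_congr_uIoo fun y hy => ?_
  rw [Set.uIoo_of_le (by norm_num)] at hy
  have hy0 : c + y ≠ 0 := by linarith [hy.1]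
  have hQy : Q.eval y = (y + c) * D.eval y + Q.eval (-c) := by
    conv_lhs => rw [hQD]
    simp
  simp only [eval_mul, hQy]
  field_simp
  ring

/-- The quadratic relation between consecutive Stieltjes integrals. -/
lemma stieltjes_quadratic (hP : IsMonicOrthogonal w P h) {c : ℝ} (hc : 1 ≤ c)
    (hwc : IntervalIntegrable (fun y => w y / (c + y)) volume (-1) 1) (n : ℕ) :
    stieltjes w c (P (n + 1) * P n) * (stieltjes w c (P (n + 1) * P n) - h n)
      = stieltjes w c (P (n + 1) * P (n + 1)) * stieltjes w c (P n * P n) := by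
  have zero_coeff : ∀ {m j : ℕ}, m < j → (P m).coeff j = 0 := fun hj =>
    coeff_eq_zero_of_natDegree_lt (by rwa [hP.natDegree_eq])
  have e₁ := hP.stieltjes_mul hc hwc (n := n + 1) (Q := P n) (by rw [hP.natDegree_eq]; omega)
  have e₂ := hP.stieltjes_mul hc hwc (n := n) (Q := P (n + 1)) (hP.natDegree_eq _).le
  have e₃ := hP.stieltjes_mul hc hwc (n := n + 1) (Q := P (n + 1)) (by rw [hP.natDegree_eq]; omega)
  have e₄ := hP.stieltjes_mul hc hwc (n := n) (Q := P n) (by rw [hP.natDegree_eq]; omega)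
  rw [zero_coeff (by omega)] at e₁ e₃ e₄
  rw [hP.coeff_self, mul_comm (P n)] at e₂
  rw [e₃, e₄]
  nth_rewrite 1 [e₁]
  rw [e₂]
  ring

/-- The recurrence coefficient is the ratio of consecutive squared norms. -/
lemma recurrence_coeff_mul (hP : IsMonicOrthogonal w P h) {n : ℕ} {b : ℝ}
    (hrec : X * P (n + 1) = P (n + 2) + C b * P n) : b * h n = h (n + 1) := by
  have e : (∫ x in (-1 : ℝ)..1, (P (n + 1) * (X * P n)).eval x * w x)
      = ∫ x in (-1 : ℝ)..1, (P n * (P (n + 2) + C b * P n)).eval x * w x := by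
    rw [← hrec]
    congr 1
    ext x
    simp only [eval_mul]
    ring
  rw [hP.integral_mul_eq_coeff (natDegree_mul_le.trans (by simp [hP.natDegree_eq]; omega))] at e
  have hsplit : (∫ x in (-1 : ℝ)..1, (P n * (P (n + 2) + C b * P n)).eval x * w x)
      = (∫ x in (-1 : ℝ)..1, (P (n + 2) * P n).eval x * w x)
        + ∫ x in (-1 : ℝ)..1, (P n * (C b * P n)).eval x * w x := by
    rw [← intervalIntegral.integral_add (intervalIntegrable_eval_mul hP.intervalIntegrable _)
      (intervalIntegrable_eval_mul hP.intervalIntegrable _)]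
    congr 1
    ext x
    simp only [eval_mul, eval_add]
    ring
  have hzero : (P n).coeff (n + 2) = 0 :=
    coeff_eq_zero_of_natDegree_lt (by rw [hP.natDegree_eq]; omega)
  rw [hsplit, hP.integral_mul_eq_coeff (by rw [hP.natDegree_eq]; omega),
    hP.integral_mul_eq_coeff ((natDegree_C_mul_le _ _).trans (hP.natDegree_eq n).le), hzero] at e
  simp [hP.coeff_self] at e
  exact e.symm

/-- For an even weight, the orthogonal polynomials have the parity of their degree. -/
lemma eval_neg (hP : IsMonicOrthogonal w P h) (hw : ∀ x, w (-x) = w x) {b : ℕ → ℝ}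
    (hrec : ∀ n, X * P (n + 1) = P (n + 2) + C (b (n + 1)) * P n) (n : ℕ) (x : ℝ) :
    (P n).eval (-x) = (-1) ^ n * (P n).eval x := by
  have hone : P 1 = X + C ((P 1).coeff 0) := by
    have := (hP.monic 1).as_sum
    rw [hP.natDegree_eq 1] at this
    simpa using this
  have hodd : (∫ y in (-1 : ℝ)..1, (X : ℝ[X]).eval y * w y) = 0 := by
    have := intervalIntegral.integral_comp_neg (a := -1) (b := 1)
      (fun y => (X : ℝ[X]).eval y * w y)
    simp only [eval_X, hw, neg_mul, intervalIntegral.integral_neg, neg_neg] at this ⊢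
    linarith
  have hconst : (P 1).coeff 0 = 0 := by
    have e := hP.integral_mul 1 0
    rw [if_neg one_ne_zero, hone, hP.zero_eq_one] at e
    simp only [eval_one, mul_one, eval_add, add_mul] at e
    rw [intervalIntegral.integral_add (intervalIntegrable_eval_mul hP.intervalIntegrable _)
      (intervalIntegrable_eval_mul hP.intervalIntegrable _), hodd, zero_add] at e
    simp only [eval_C, intervalIntegral.integral_const_mul] at e
    have e0 := hP.integral_mul 0 0
    simp only [hP.zero_eq_one, eval_one, one_mul, if_true] at e0
    rw [e0] at e
    exact (mul_eq_zero.mp e).resolve_right (hP.norm_pos 0).ne'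
  induction n using Nat.strong_induction_on with
  | _ n ih =>
    match n, ih with
    | 0, _ => simp [hP.zero_eq_one]
    | 1, _ =>
      rw [hone, hconst]
      simp
    | n + 2, ih =>
      have hev : ∀ y, (P (n + 2)).eval y
          = y * (P (n + 1)).eval y - b (n + 1) * (P n).eval y := by
        intro y
        have := congrArg (eval y) (hrec n)
        simp only [eval_mul, eval_X, eval_add, eval_C] at this
        linarith
      rw [hev, hev, ih (n + 1) (by omega), ih n (by omega)]
      ring

/-- The orthogonal polynomials do not vanish at the left endpoint. -/
lemma eval_neg_one_ne_zero (hP : IsMonicOrthogonal w P h)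
    (hw : ∀ x ∈ Set.Ioo (-1 : ℝ) 1, 0 < w x) (n : ℕ) : (P n).eval (-1) ≠ 0 := by
  intro hroot
  obtain ⟨Q, hQ⟩ := dvd_iff_isRoot.mpr hroot
  have hdeg : Q.natDegree < n := by
    have hQ0 : Q ≠ 0 := by
      rintro rfl
      exact (hP.monic n).ne_zero (by rw [hQ, mul_zero])
    have := congrArg natDegree hQ
    rw [natDegree_mul (X_sub_C_ne_zero _) hQ0, natDegree_X_sub_C, hP.natDegree_eq] at this
    omega
  have hzero := hP.integral_mul_eq_coeff hdeg.le
  rw [coeff_eq_zero_of_natDegree_lt hdeg, zero_mul] at hzero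
  have hev : ∀ x, (P n).eval x = (x + 1) * Q.eval x := fun x => by
    conv_lhs => rw [hQ]
    simp
  have hIoo : ∀ᵐ x ∂(volume.restrict (Set.Ioc (-1 : ℝ) 1)), x ∈ Set.Ioo (-1 : ℝ) 1 := by
    rw [← restrict_Ioo_eq_restrict_Ioc]
    exact ae_restrict_mem measurableSet_Ioo
  rw [intervalIntegral.integral_eq_zero_iff_of_le_of_nonneg_ae (by norm_num) ?_
    (intervalIntegrable_eval_mul hP.intervalIntegrable _)] at hzero
  · have hnorm := hP.integral_mul n n
    rw [if_pos rfl, intervalIntegral.integral_of_le (by norm_num),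
      integral_eq_zero_of_ae ?_] at hnorm
    · exact (hP.norm_pos n).ne hnorm
    · filter_upwards [hzero, hIoo] with x hx hxI
      simp only [eval_mul, hev, Pi.zero_apply, mul_eq_zero, (hw x hxI).ne', or_false] at hx ⊢
      tauto
  · filter_upwards [hIoo] with x hx
    have h1 : 0 ≤ x + 1 := by linarith [hx.1]
    have h2 := (hw x hx).le
    simp only [eval_mul, hev, Pi.zero_apply]
    have : 0 ≤ (x + 1) * (Q.eval x) ^ 2 * w x := by positivity
    linarith

end IsMonicOrthogonal

/-- The weight `(1 - x²)^α (1 - k² x²)^β`. -/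
noncomputable def ellipticWeight (α β k2 x : ℝ) : ℝ :=
  (1 - x ^ 2) ^ α * (1 - k2 * x ^ 2) ^ β

section ellipticWeight

variable {α β k2 : ℝ}

lemma ellipticWeight_neg (x : ℝ) : ellipticWeight α β k2 (-x) = ellipticWeight α β k2 x := by
  simp [ellipticWeight]

lemma one_sub_mul_sq_pos (hk2 : k2 ∈ Set.Ioo (0 : ℝ) 1) {x : ℝ} (hx : x ∈ Set.Icc (-1 : ℝ) 1) :
    0 < 1 - k2 * x ^ 2 := by
  have : x ^ 2 ≤ 1 := by nlinarith [hx.1, hx.2]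
  nlinarith [hk2.1, hk2.2]

lemma one_sub_sq_pos {x : ℝ} (hx : x ∈ Set.Ioo (-1 : ℝ) 1) : 0 < 1 - x ^ 2 := by
  nlinarith [hx.1, hx.2]

lemma ellipticWeight_pos (hk2 : k2 ∈ Set.Ioo (0 : ℝ) 1) {x : ℝ} (hx : x ∈ Set.Ioo (-1 : ℝ) 1) :
    0 < ellipticWeight α β k2 x :=
  mul_pos (Real.rpow_pos_of_pos (one_sub_sq_pos hx) _)
    (Real.rpow_pos_of_pos (one_sub_mul_sq_pos hk2 (Set.Ioo_subset_Icc_self hx)) _)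

lemma continuousOn_one_sub_mul_sq_rpow (hk2 : k2 ∈ Set.Ioo (0 : ℝ) 1) :
    ContinuousOn (fun x : ℝ => (1 - k2 * x ^ 2) ^ β) (Set.Icc (-1) 1) :=
  ContinuousOn.rpow_const (by fun_prop) fun _ hx => Or.inl (one_sub_mul_sq_pos hk2 hx).ne'

lemma continuousOn_ellipticWeight (hα : 0 < α) (hk2 : k2 ∈ Set.Ioo (0 : ℝ) 1) :
    ContinuousOn (ellipticWeight α β k2) (Set.Icc (-1) 1) := by
  refine ContinuousOn.mul ?_ (continuousOn_one_sub_mul_sq_rpow hk2)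
  exact ContinuousOn.rpow_const (by fun_prop) fun _ _ => Or.inr hα.le

lemma ellipticWeight_div_one_add {y : ℝ} (hy : y ∈ Set.Ioc (-1 : ℝ) 1) :
    ellipticWeight α β k2 y / (1 + y)
      = (y + 1) ^ (α - 1) * ((1 - y) ^ α * (1 - k2 * y ^ 2) ^ β) := by
  have hy1 : 0 < y + 1 := by linarith [hy.1]
  have hfac : 1 - y ^ 2 = (y + 1) * (1 - y) := by ring
  rw [ellipticWeight, hfac, Real.mul_rpow hy1.le (by linarith [hy.2]), Real.rpow_sub_one hy1.ne',
    add_comm 1 y]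
  ring

lemma intervalIntegrable_ellipticWeight_div_one_add (hα : 0 < α)
    (hk2 : k2 ∈ Set.Ioo (0 : ℝ) 1) :
    IntervalIntegrable (fun y => ellipticWeight α β k2 y / (1 + y)) volume (-1) 1 := by
  have hint : IntervalIntegrable (fun y : ℝ => (y + 1) ^ (α - 1)) volume (-1) 1 := by
    have := (intervalIntegral.intervalIntegrable_rpow' (a := 0) (b := 2)
      (show -1 < α - 1 by linarith)).comp_add_right 1
    norm_num at this
    exact this
  have hcont : ContinuousOn (fun y : ℝ => (1 - y) ^ α * (1 - k2 * y ^ 2) ^ β)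
      (Set.uIcc (-1) 1) := by
    rw [Set.uIcc_of_le (by norm_num)]
    refine ContinuousOn.mul ?_ (continuousOn_one_sub_mul_sq_rpow hk2)
    exact ContinuousOn.rpow_const (by fun_prop) fun _ _ => Or.inr hα.le
  refine (hint.mul_continuousOn hcont).congr fun y hy => ?_
  rw [Set.uIoc_of_le (by norm_num)] at hy
  exact (ellipticWeight_div_one_add hy).symm

lemma intervalIntegrable_ellipticWeight_div_add (hα : 0 < α) (hk2 : k2 ∈ Set.Ioo (0 : ℝ) 1)
    {c : ℝ} (hc : 1 < c) :
    IntervalIntegrable (fun y => ellipticWeight α β k2 y / (c + y)) volume (-1) 1 := by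
  refine ContinuousOn.intervalIntegrable ?_
  rw [Set.uIcc_of_le (by norm_num)]
  exact (continuousOn_ellipticWeight hα hk2).div (by fun_prop) fun y hy => by linarith [hy.1]

/-- With a negative exponent, dividing the weight by `1 + y` destroys integrability. -/
lemma not_intervalIntegrable_ellipticWeight_mul_div (hα : α < 0) (hk2 : k2 ∈ Set.Ioo (0 : ℝ) 1)
    {Q : ℝ[X]} (hQ : Q.eval (-1) ≠ 0) :
    ¬ IntervalIntegrable (fun y => ellipticWeight α β k2 y * Q.eval y / (1 + y))
      volume (-1) 1 := by
  intro hint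
  obtain ⟨δ, hδ, hδ1, hQδ⟩ : ∃ δ : ℝ, 0 < δ ∧ δ ≤ 1 ∧
      ∀ y ∈ Set.Icc (-1 : ℝ) (-1 + δ), Q.eval y ≠ 0 := by
    obtain ⟨ε, hε, hball⟩ := Metric.eventually_nhds_iff.mp
      (Q.continuous.continuousAt.eventually_ne hQ)
    refine ⟨min (ε / 2) 1, by positivity, min_le_right _ _, fun y hy => hball ?_⟩
    rw [Real.dist_eq, abs_lt]
    have := min_le_left (ε / 2) 1
    constructor <;> linarith [hy.1, hy.2]
  have hsub : Set.Icc (-1 : ℝ) (-1 + δ) ⊆ Set.Icc (-1) 1 :=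
    Set.Icc_subset_Icc_right (by linarith)
  have hcont : ContinuousOn (fun y : ℝ => ((1 - y) ^ α * (1 - k2 * y ^ 2) ^ β * Q.eval y)⁻¹)
      (Set.uIcc (-1) (-1 + δ)) := by
    rw [Set.uIcc_of_le (by linarith)]
    refine ContinuousOn.inv₀ ?_ ?_
    · refine ((ContinuousOn.rpow_const (by fun_prop) ?_).mul
        ((continuousOn_one_sub_mul_sq_rpow hk2).mono hsub)).mul Q.continuous.continuousOn
      exact fun y hy => Or.inl (by linarith [hy.2])
    · intro y hy
      have h1 : 0 < 1 - y := by linarith [hy.2]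
      exact mul_ne_zero (mul_pos (Real.rpow_pos_of_pos h1 _)
        (Real.rpow_pos_of_pos (one_sub_mul_sq_pos hk2 (hsub hy)) _)).ne' (hQδ y hy)
  have hle : IntervalIntegrable (fun y => ellipticWeight α β k2 y * Q.eval y / (1 + y))
      volume (-1) (-1 + δ) := by
    refine hint.mono_set ?_
    rwa [Set.uIcc_of_le (by linarith), Set.uIcc_of_le (by norm_num)]
  have hpow : IntervalIntegrable (fun y : ℝ => (y + 1) ^ (α - 1)) volume (-1) (-1 + δ) := by
    refine (hle.mul_continuousOn hcont).congr fun y hy => ?_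
    rw [Set.uIoc_of_le (by linarith)] at hy
    have hyI : y ∈ Set.Icc (-1 : ℝ) (-1 + δ) := Set.Ioc_subset_Icc_self hy
    have h1 : 0 < 1 - y := by linarith [hy.2]
    have h2 := (Real.rpow_pos_of_pos h1 α).ne'
    have h3 := (Real.rpow_pos_of_pos (one_sub_mul_sq_pos hk2 (hsub hyI)) β).ne'
    have h4 := hQδ y hyI
    rw [mul_div_right_comm, ellipticWeight_div_one_add ⟨hy.1, (hsub hyI).2⟩]
    generalize (1 - k2 * y ^ 2) ^ β = B at h3 ⊢
    field_simp
  have hzero := hpow.comp_sub_right 1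
  simp only [sub_add_cancel, neg_add_cancel, neg_add_cancel_comm] at hzero
  rw [intervalIntegrable_iff_integrableOn_Ioo_of_le hδ.le,
    intervalIntegral.integrableOn_Ioo_rpow_iff hδ] at hzero
  linarith

lemma hasDerivAt_ellipticWeight {k : ℝ} (hk : k ∈ Set.Ioo (0 : ℝ) 1) {y : ℝ}
    (hy : y ∈ Set.Ioo (-1 : ℝ) 1) :
    HasDerivAt (ellipticWeight α β (k ^ 2)) (ellipticWeight α β (k ^ 2) y *
      (α / (1 + y) - α / (1 - y) + β / (1 / k + y) - β / (1 / k - y))) y := by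
  have hk2 : k ^ 2 ∈ Set.Ioo (0 : ℝ) 1 := ⟨by nlinarith [hk.1], by nlinarith [hk.1, hk.2]⟩
  have hp := one_sub_sq_pos hy
  have hq := one_sub_mul_sq_pos hk2 (Set.Ioo_subset_Icc_self hy)
  have d₁ : HasDerivAt (fun y : ℝ => 1 - y ^ 2) (-(2 * y)) y := by
    simpa using ((hasDerivAt_id y).pow 2).const_sub 1
  have d₂ : HasDerivAt (fun y : ℝ => 1 - k ^ 2 * y ^ 2) (-(k ^ 2 * (2 * y))) y := by
    simpa using (((hasDerivAt_id y).pow 2).const_mul (k ^ 2)).const_sub 1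
  have d := (d₁.rpow_const (p := α) (Or.inl hp.ne')).mul
    (d₂.rpow_const (p := β) (Or.inl hq.ne'))
  refine d.congr_deriv ?_
  have hk0 := hk.1
  have a₁ : 1 + y ≠ 0 := by linarith [hy.1]
  have a₂ : 1 - y ≠ 0 := by linarith [hy.2]
  have a₃ : 1 + k * y ≠ 0 := by nlinarith [hy.1, hk.1, hk.2]
  have a₄ : 1 - k * y ≠ 0 := by nlinarith [hy.2, hk.1, hk.2]
  have e₁ : 1 / k + y = (1 + k * y) / k := by field_simp
  have e₂ : 1 / k - y = (1 - k * y) / k := by field_simp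
  rw [Real.rpow_sub_one hp.ne', Real.rpow_sub_one hq.ne', e₁, e₂, ellipticWeight]
  generalize (1 - y ^ 2) ^ α = A
  generalize (1 - k ^ 2 * y ^ 2) ^ β = B
  have f₁ : 1 - y ^ 2 = (1 + y) * (1 - y) := by ring
  have f₂ : 1 - k ^ 2 * y ^ 2 = (1 + k * y) * (1 - k * y) := by ring
  have s₁ : α / (1 + y) - α / (1 - y) = -(2 * y) * α / ((1 + y) * (1 - y)) := by
    rw [div_sub_div _ _ a₁ a₂]
    ring
  have s₂ : β / ((1 + k * y) / k) - β / ((1 - k * y) / k)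
      = -(k ^ 2 * (2 * y)) * β / ((1 + k * y) * (1 - k * y)) := by
    rw [div_div_eq_mul_div, div_div_eq_mul_div, div_sub_div _ _ a₃ a₄]
    ring
  rw [f₁, f₂, add_sub_assoc, s₁, s₂]
  ring

/-- Integration by parts against the weight, for odd polynomials. -/
lemma integral_derivative_add_stieltjes (hα : 0 < α) {k : ℝ} (hk : k ∈ Set.Ioo (0 : ℝ) 1)
    {Q : ℝ[X]} (hQ : ∀ x, Q.eval (-x) = -Q.eval x) :
    (∫ y in (-1 : ℝ)..1, Q.derivative.eval y * ellipticWeight α β (k ^ 2) y)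
      + 2 * (α * stieltjes (ellipticWeight α β (k ^ 2)) 1 Q
        + β * stieltjes (ellipticWeight α β (k ^ 2)) (1 / k) Q) = 0 := by
  have hk2 : k ^ 2 ∈ Set.Ioo (0 : ℝ) 1 := ⟨by nlinarith [hk.1], by nlinarith [hk.1, hk.2]⟩
  set w := ellipticWeight α β (k ^ 2) with hw
  have hcont : ContinuousOn w (Set.Icc (-1) 1) := continuousOn_ellipticWeight hα hk2
  have i₀ : IntervalIntegrable (fun y => Q.derivative.eval y * w y) volume (-1) 1 :=
    intervalIntegrable_eval_mul (hcont.intervalIntegrable_of_Icc (by norm_num)) _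
  have reflect : ∀ {c : ℝ}, IntervalIntegrable (fun y => w y / (c + y)) volume (-1) 1 →
      IntervalIntegrable (fun y => -(w y * Q.eval y / (c - y))) volume (-1) 1 ∧
      (∫ y in (-1 : ℝ)..1, -(w y * Q.eval y / (c - y))) = stieltjes w c Q := by
    intro c hc
    have hfun : (fun y => -(w y * Q.eval y / (c - y)))
        = fun y => (fun z => w z * Q.eval z / (c + z)) (-y) := by
      ext y
      simp only [hQ, hw, ellipticWeight_neg]
      ring
    constructor
    · rw [hfun]
      have := (IntervalIntegrable.iff_comp_neg (by simp)).mp (intervalIntegrable_mul_eval_div hc Q)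
      simpa using this.symm
    · rw [hfun, intervalIntegral.integral_comp_neg (fun z => w z * Q.eval z / (c + z)), neg_neg]
      rfl
  have j₁ := intervalIntegrable_ellipticWeight_div_one_add (β := β) hα hk2
  have j₂ := intervalIntegrable_ellipticWeight_div_add (β := β) hα hk2 (c := 1 / k)
    ((one_lt_div hk.1).mpr hk.2)
  obtain ⟨i₁', e₁⟩ := reflect j₁
  obtain ⟨i₂', e₂⟩ := reflect j₂
  have i₁ := intervalIntegrable_mul_eval_div j₁ Q
  have i₂ := intervalIntegrable_mul_eval_div j₂ Q
  have hends : w 1 = 0 ∧ w (-1) = 0 := by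
    constructor <;> simp [hw, ellipticWeight, Real.zero_rpow hα.ne']
  have hadd := (i₁.add i₁').const_mul α
  have hadd' := (i₂.add i₂').const_mul β
  have hFTC := intervalIntegral.integral_eq_sub_of_hasDerivAt_of_le (a := -1) (b := 1)
    (f := fun y => Q.eval y * w y) (by norm_num) (Q.continuous.continuousOn.mul hcont)
    (fun y hy => ((Q.hasDerivAt y).mul (hasDerivAt_ellipticWeight (α := α) (β := β) hk hy)
      ).congr_deriv ?_) (i₀.add (hadd.add hadd'))
  · simp only [hends.1, hends.2, mul_zero, sub_zero] at hFTC
    rw [intervalIntegral.integral_add i₀ (hadd.add hadd'),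
      intervalIntegral.integral_add hadd hadd', intervalIntegral.integral_const_mul,
      intervalIntegral.integral_const_mul, intervalIntegral.integral_add i₁ i₁',
      intervalIntegral.integral_add i₂ i₂', e₁, e₂] at hFTC
    simp only [stieltjes] at hFTC ⊢
    linarith
  · simp only [← hw]
    ring

end ellipticWeight

namespace IsMonicOrthogonal

lemma coeff_derivative_succ (hP : IsMonicOrthogonal w P h) (n : ℕ) :
    (P (n + 1)).derivative.coeff n = n + 1 := by
  rw [coeff_derivative, hP.coeff_self, one_mul]

lemma integral_derivative_mul_succ (hP : IsMonicOrthogonal w P h) (n : ℕ) :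
    (∫ y in (-1 : ℝ)..1, (P (n + 1) * P n).derivative.eval y * w y) = (n + 1) * h n := by
  have hsplit : (∫ y in (-1 : ℝ)..1, (P (n + 1) * P n).derivative.eval y * w y)
      = (∫ y in (-1 : ℝ)..1, (P n * (P (n + 1)).derivative).eval y * w y)
        + ∫ y in (-1 : ℝ)..1, (P (n + 1) * (P n).derivative).eval y * w y := by
    rw [← intervalIntegral.integral_add (intervalIntegrable_eval_mul hP.intervalIntegrable _)
      (intervalIntegrable_eval_mul hP.intervalIntegrable _)]
    congr 1
    ext y
    simp only [derivative_mul, eval_add, eval_mul]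
    ring
  have hd₁ : (P (n + 1)).derivative.natDegree ≤ n :=
    (natDegree_derivative_le _).trans (by rw [hP.natDegree_eq]; omega)
  have hd₀ : (P n).derivative.natDegree < n + 1 :=
    (natDegree_derivative_le _).trans_lt (by rw [hP.natDegree_eq]; omega)
  rw [hsplit, hP.integral_mul_eq_coeff hd₁, hP.integral_mul_eq_coeff hd₀.le,
    coeff_eq_zero_of_natDegree_lt hd₀, hP.coeff_derivative_succ]
  ring

lemma integral_derivative_X_mul_sq (hP : IsMonicOrthogonal w P h) (n : ℕ) :
    (∫ y in (-1 : ℝ)..1, (X * (P n * P n)).derivative.eval y * w y) = (2 * n + 1) * h n := by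
  have hrw : (∫ y in (-1 : ℝ)..1, (X * (P n * P n)).derivative.eval y * w y)
      = ∫ y in (-1 : ℝ)..1, (P n * (P n + C 2 * (X * (P n).derivative))).eval y * w y := by
    congr 1
    ext y
    simp only [derivative_mul, derivative_X, eval_add, eval_mul, eval_one, eval_X, eval_C]
    ring
  have hd : (X * (P n).derivative).natDegree ≤ n := by
    rcases n with _ | n
    · simp [hP.zero_eq_one]
    · refine natDegree_mul_le.trans ?_
      have := natDegree_derivative_le (P (n + 1))
      rw [hP.natDegree_eq] at this
      rw [natDegree_X]
      omega
  have hcoeff : (X * (P n).derivative).coeff n = (n : ℝ) := by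
    rcases n with _ | n
    · simp
    · rw [coeff_X_mul, hP.coeff_derivative_succ]
      push_cast
      ring
  rw [hrw, hP.integral_mul_eq_coeff (natDegree_add_le_of_degree_le (hP.natDegree_eq n).le
    ((natDegree_C_mul_le _ _).trans hd)), coeff_add, coeff_C_mul, hcoeff, hP.coeff_self]
  ring

lemma stieltjes_X_mul_sq (hP : IsMonicOrthogonal w P h) {c : ℝ} (hc : 1 ≤ c)
    (hwc : IntervalIntegrable (fun y => w y / (c + y)) volume (-1) 1) (n : ℕ) :
    stieltjes w c (X * (P n * P n)) = h n - c * stieltjes w c (P n * P n) := by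
  have hXP : (X * P n).natDegree ≤ n + 1 :=
    natDegree_mul_le.trans (by rw [natDegree_X, hP.natDegree_eq]; omega)
  have e₁ := hP.stieltjes_mul hc hwc hXP
  have e₂ := hP.stieltjes_mul hc hwc (n := n) (Q := P n) (by rw [hP.natDegree_eq]; omega)
  rw [coeff_X_mul, hP.coeff_self] at e₁
  rw [coeff_eq_zero_of_natDegree_lt (by rw [hP.natDegree_eq]; omega)] at e₂
  rw [mul_left_comm, e₁, e₂, eval_mul, eval_X]
  ring

variable {α β k : ℝ}

/-- The sum rule `r_n + r_n* = -n / 2`. -/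
lemma stieltjes_mul_succ_sum (hP : IsMonicOrthogonal (ellipticWeight α β (k ^ 2)) P h)
    (hα : 0 < α) (hk : k ∈ Set.Ioo (0 : ℝ) 1)
    (hpar : ∀ n x, (P n).eval (-x) = (-1) ^ n * (P n).eval x) (n : ℕ) :
    α * stieltjes (ellipticWeight α β (k ^ 2)) 1 (P (n + 1) * P n)
      + β * stieltjes (ellipticWeight α β (k ^ 2)) (1 / k) (P (n + 1) * P n)
      = -((n + 1) / 2 * h n) := by
  have hsq : ((-1 : ℝ) ^ n) ^ 2 = 1 := by rw [← pow_mul, mul_comm, pow_mul]; simp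
  have e := integral_derivative_add_stieltjes (β := β) hα hk (Q := P (n + 1) * P n) fun x => by
    simp only [eval_mul, hpar, pow_succ]
    linear_combination (-(P (n + 1)).eval x * (P n).eval x) * hsq
  rw [hP.integral_derivative_mul_succ] at e
  linarith

/-- The sum rule `R_n + R_n* / k = α + β + n + 1 / 2`. -/
lemma stieltjes_sq_sum (hP : IsMonicOrthogonal (ellipticWeight α β (k ^ 2)) P h)
    (hα : 0 < α) (hk : k ∈ Set.Ioo (0 : ℝ) 1)
    (hpar : ∀ n x, (P n).eval (-x) = (-1) ^ n * (P n).eval x) (n : ℕ) :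
    α * stieltjes (ellipticWeight α β (k ^ 2)) 1 (P n * P n)
      + β * (1 / k * stieltjes (ellipticWeight α β (k ^ 2)) (1 / k) (P n * P n))
      = (α + β + n + 1 / 2) * h n := by
  have hk2 : k ^ 2 ∈ Set.Ioo (0 : ℝ) 1 := ⟨by nlinarith [hk.1], by nlinarith [hk.1, hk.2]⟩
  have hκ : 1 < 1 / k := (one_lt_div hk.1).mpr hk.2
  have hsq : ((-1 : ℝ) ^ n) ^ 2 = 1 := by rw [← pow_mul, mul_comm, pow_mul]; simp
  have e := integral_derivative_add_stieltjes (β := β) hα hk (Q := X * (P n * P n)) fun x => by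
    simp only [eval_mul, eval_X, hpar]
    linear_combination (-x * (P n).eval x ^ 2) * hsq
  rw [hP.integral_derivative_X_mul_sq,
    hP.stieltjes_X_mul_sq le_rfl (intervalIntegrable_ellipticWeight_div_one_add hα hk2),
    hP.stieltjes_X_mul_sq hκ.le (intervalIntegrable_ellipticWeight_div_add hα hk2 hκ)] at e
  linarith

end IsMonicOrthogonal

/-- Eliminating the squared norms and the auxiliary variables of index `n - 1` and of the pole
`-1/k` from the quadratic relations and the sum rules. Here `F`, `G` are the integrals at the pole
`-1`, and `F'`, `G'` those at the pole `-1/k`. -/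
lemma recurrence_coeff_identity {α β k b n h₀ h₁ F₀ F₁ F₀' F₁' G G' : ℝ} (hk : k ≠ 0)
    (hh₀ : h₀ ≠ 0) (hh₁ : h₁ ≠ 0) (hb : b * h₀ = h₁)
    (hquad : G * (G - h₀) = F₁ * F₀) (hquad' : G' * (G' - h₀) = F₁' * F₀')
    (hsum : α * G + β * G' = -(n / 2 * h₀))
    (hF₀ : α * F₀ + β * (1 / k * F₀') = (α + β + n - 1 / 2) * h₀)
    (hF₁ : α * F₁ + β * (1 / k * F₁') = (α + β + n + 1 / 2) * h₁) :
    k ^ 2 * b * (α + β + n - 1 / 2) * (α + β + n + 1 / 2 - α / h₁ * F₁) * (α / h₁ * F₁)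
      = (α / h₁ * F₁ + k ^ 2 * (α + β + n + 1 / 2 - α / h₁ * F₁)) * (α / h₀ * G) ^ 2
        + ((n + β) * (α / h₁ * F₁)
          - α * k ^ 2 * (α + β + n + 1 / 2 - α / h₁ * F₁)) * (α / h₀ * G)
        + n / 2 * (n / 2 + β) * (α / h₁ * F₁) := by
  have hRs : α + β + n + 1 / 2 - α / h₁ * F₁ = β / h₁ * F₁' / k := by
    field_simp at hF₁ ⊢
    linarith
  have hσ : α + β + n - 1 / 2 = α / h₀ * F₀ + β / h₀ * F₀' / k := by
    field_simp at hF₀ ⊢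
    linarith
  have hrs : β / h₀ * G' = -(n / 2) - α / h₀ * G := by
    field_simp at hsum ⊢
    linarith
  have hq : (α / h₀ * G) ^ 2 - α * (α / h₀ * G) = b * (α / h₁ * F₁) * (α / h₀ * F₀) := by
    rw [← hb] at hh₁ ⊢
    have := left_ne_zero_of_mul hh₁
    field_simp
    linear_combination α ^ 2 * hquad
  have hq' : (β / h₀ * G') ^ 2 - β * (β / h₀ * G') = b * (β / h₁ * F₁') * (β / h₀ * F₀') := by
    rw [← hb] at hh₁ ⊢
    have := left_ne_zero_of_mul hh₁
    field_simp
    linear_combination β ^ 2 * hquad'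
  rw [hrs] at hq'
  rw [hRs, hσ]
  generalize α / h₁ * F₁ = R₁ at *
  generalize α / h₀ * F₀ = R₀ at *
  generalize β / h₁ * F₁' = S₁ at *
  generalize β / h₀ * F₀' = S₀ at *
  generalize α / h₀ * G = r at *
  field_simp
  linear_combination (-4 * k * S₁) * hq - 4 * R₁ * hq'

end OrthogonalPolynomial

open OrthogonalPolynomial in
/-- The recurrence coefficient `β_n` is determined by `r_n`
and `R_n` (denominator-cleared form of the lemma expressing `β_n` in terms of
the auxiliary variables). -/
theorem stmt_11
    (α β k2 : ℝ) (hα : -1 < α) (hk2 : k2 ∈ Set.Ioo (0:ℝ) 1)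
    (w : ℝ → ℝ)
    (hw : ∀ x : ℝ, w x = (1 - x ^ 2) ^ α * (1 - k2 * x ^ 2) ^ β)
    (P : ℕ → Polynomial ℝ)
    (hPmonic : ∀ n, (P n).Monic)
    (hPdeg : ∀ n, (P n).natDegree = n)
    (h : ℕ → ℝ) (hpos : ∀ n, 0 < h n)
    (horth : ∀ m n : ℕ,
      (∫ x in (-1:ℝ)..1, (P m).eval x * (P n).eval x * w x)
        = if m = n then h n else 0)
    (b : ℕ → ℝ) (hb0 : b 0 = 0)
    (hrec : ∀ n : ℕ, 1 ≤ n →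
      Polynomial.X * P n = P (n + 1) + Polynomial.C (b n) * P (n - 1))
    (R Rs r rs : ℕ → ℝ)
    (hR : ∀ n : ℕ, R n = α / h n *
      ∫ y in (-1:ℝ)..1, w y * ((P n).eval y) ^ 2 / (1 + y))
    (hRs : ∀ n : ℕ, Rs n = β / h n *
      ∫ y in (-1:ℝ)..1, w y * ((P n).eval y) ^ 2 / (1 / Real.sqrt k2 + y))
    (hr0 : r 0 = 0) (hrs0 : rs 0 = 0)
    (hr : ∀ n : ℕ, 1 ≤ n → r n = α / h (n - 1) *
      ∫ y in (-1:ℝ)..1, w y * (P n).eval y * (P (n - 1)).eval y / (1 + y))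
    (hrs : ∀ n : ℕ, 1 ≤ n → rs n = β / h (n - 1) *
      ∫ y in (-1:ℝ)..1, w y * (P n).eval y * (P (n - 1)).eval y / (1 / Real.sqrt k2 + y)) :
    ∀ n : ℕ, 1 ≤ n →
      k2 * b n * (α + β + (n:ℝ) - 1/2) * (α + β + (n:ℝ) + 1/2 - R n) * R n
        = (R n + k2 * (α + β + (n:ℝ) + 1/2 - R n)) * r n ^ 2
          + (((n:ℝ) + β) * R n - α * k2 * (α + β + (n:ℝ) + 1/2 - R n)) * r n
          + ((n:ℝ)/2) * ((n:ℝ)/2 + β) * R n := by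
  intro n hn
  obtain ⟨m, rfl⟩ := Nat.exists_eq_add_of_le' hn
  obtain rfl : w = ellipticWeight α β k2 := funext hw
  have hP : IsMonicOrthogonal (ellipticWeight α β k2) P h := ⟨hPmonic, hPdeg, hpos, horth⟩
  have hrec' : ∀ n, Polynomial.X * P (n + 1) = P (n + 2) + Polynomial.C (b (n + 1)) * P n :=
    fun n => hrec (n + 1) (by omega)
  have hRJ : R (m + 1) = α / h (m + 1)
      * stieltjes (ellipticWeight α β k2) 1 (P (m + 1) * P (m + 1)) := by
    simp only [hR, stieltjes, Polynomial.eval_mul, sq]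
  have hrJ : r (m + 1) = α / h m * stieltjes (ellipticWeight α β k2) 1 (P (m + 1) * P m) := by
    simp only [hr (m + 1) hn, stieltjes, Polynomial.eval_mul, Nat.add_sub_cancel, mul_assoc]
  rcases lt_or_ge 0 α with hα0 | hα0
  · obtain ⟨k, hk, rfl⟩ : ∃ k ∈ Set.Ioo (0 : ℝ) 1, k2 = k ^ 2 :=
      ⟨√k2, ⟨Real.sqrt_pos.mpr hk2.1, by rw [Real.sqrt_lt' one_pos]; simpa using hk2.2⟩,
        (Real.sq_sqrt hk2.1.le).symm⟩
    have hκ : 1 < 1 / k := (one_lt_div hk.1).mpr hk.2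
    have hpar := hP.eval_neg ellipticWeight_neg hrec'
    have hF₁ := hP.stieltjes_sq_sum hα0 hk hpar (m + 1)
    rw [hRJ, hrJ]
    refine recurrence_coeff_identity hk.1.ne' (hpos m).ne' (hpos (m + 1)).ne'
      (hP.recurrence_coeff_mul (hrec' m))
      (hP.stieltjes_quadratic le_rfl (intervalIntegrable_ellipticWeight_div_one_add hα0 hk2) m)
      (hP.stieltjes_quadratic hκ.le (intervalIntegrable_ellipticWeight_div_add hα0 hk2 hκ) m)
      ?_ ?_ hF₁
    · rw [hP.stieltjes_mul_succ_sum hα0 hk hpar m]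
      push_cast
      ring
    · rw [hP.stieltjes_sq_sum hα0 hk hpar m]
      push_cast
      ring
  · have hne := hP.eval_neg_one_ne_zero fun x hx => ellipticWeight_pos hk2 hx
    have hvanish : ∀ {Q : Polynomial ℝ} (c : ℝ), Q.eval (-1) ≠ 0 →
        α / c * stieltjes (ellipticWeight α β k2) 1 Q = 0 := by
      intro Q c hQ
      rcases hα0.eq_or_lt with rfl | hα0
      · simp
      · rw [stieltjes, intervalIntegral.integral_undef
          (not_intervalIntegrable_ellipticWeight_mul_div hα0 hk2 hQ), mul_zero]
    rw [hRJ, hrJ, hvanish _ (by simp [hne]), hvanish _ (by simp [hne])]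
    ring
end
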